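/- Let τ⁺(n) denote the number of integers k ≥ 0 such that n has a divisor d with 2^k < d ≤ 2^{k+1}, let T(x) := ∑_{n ≤ x} τ⁺(n), and let δ := 1 − (1 + log log 2)/log 2. Then there exist constants c₁, c₂ > 0 such that for all sufficiently large x: c₁·x·(log x)^{1−δ}/(log log x)^{3/2} ≤ T(x) ≤ c₂·x·(log x)^{1−δ}/(log log x)^{3/2}. -/

import Mathlib

/-!
Let `ℓ = log 2`. The primes are cut into blocks `P k` of reciprocal sum about `ℓ`, so that `log p` has
order `2 ^ k` on `P k` (`BlockSys`, constructed in `exists_blockSys` from Mertens' theorem). A squarefree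
integer built from the first `J` blocks, weighted by its reciprocal, then looks like `J` independent
Poisson variables of mean `ℓ`. It has `2 ^ n` divisors, where `n` is its number of prime factors, spread
over at most about `2 ^ J` dyadic intervals, so the critical case is `n = J`. For the divisors to be well
spread, the walk `j ↦ #{primes in the first j blocks} - j` must not exceed a bounded height (`Barrier`).
The total weight of the sets of `J` primes satisfying this ballot condition is of order
`(ℓ * e) ^ J * J ^ (-3 / 2)`, by an exact count of parking functions (`parkW_zero_eq`, `famSum_le`,
`famSum_ge`). Multiplying by `2 ^ J` with `2 ^ J ≍ log x`, and using `2 * e * ℓ = 2 ^ (2 - δ)` (`base_pow`),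
one obtains `(log x) ^ (2 - δ) / (log log x) ^ (3 / 2)` for the logarithmic sum `∑ τ⁺(a) / a`. The sum up
to `x` is this quantity times `x / log x`, up to constants.

Upper bound. The function `Lf`, the number of intervals `[2 ^ k, 2 ^ (k + 1))` containing a divisor,
satisfies `Lf (a * b) ≤ 2 * τ(b) * Lf a`. This reduces its mean value to its logarithmic mean value
(`exists_sum_Lf_le`), and then to squarefree integers built from the first `J` blocks
(`exists_sum_Lf_div_le`). A set of primes is split at a maximum of its walk (`Lf_split_le`). Below the
maximum, `Lf` is bounded by the logarithm of the integer, above it by the number of divisors. In both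
ranges the ballot condition holds, and the two estimates (`exists_left_le`, `exists_right_le`) recombine
because `j ↦ (j + 1) ^ (-3 / 2)` is stable under convolution (`wt_conv_le`).

Lower bound. Multiplication by large primes reduces the problem to `∑ τ⁺(a) / a` (`exists_sum_tauPlus_ge`).
Restrict to the products `a` of sets of `J` primes satisfying the ballot condition. By the second moment
method (`le_tauPlus_add_closePairs`) it is enough to show that the number of pairs of subsets whose
products differ by a factor less than `2` is `O(2 ^ J)` on average (`exists_sum_closePairs_le`). For a
pair of distinct subsets, a prime in the last block where they differ is confined to a short interval
by the other primes, which costs `O(2 ^ (-k))` if that block is `P k`, while the ballot condition keeps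
the number of choices for the smaller primes at `O(2 ^ k)` on average.
-/

open Filter Topology
open scoped Classical

/-- `τ⁺(n)`: the number of integers `k ≥ 0` such that `n` has a divisor `d`
with `2^k < d ≤ 2^(k+1)`. -/
noncomputable def tauPlus (n : ℕ) : ℕ :=
  ((Finset.range n).filter (fun k => ∃ d, d ∣ n ∧ 2 ^ k < d ∧ d ≤ 2 ^ (k + 1))).card

/-- The Erdős–Ford–Tenenbaum constant `δ = 1 - (1 + log log 2)/log 2`. -/
noncomputable def deltaEFT : ℝ := 1 - (1 + Real.log (Real.log 2)) / Real.log 2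

namespace EFT

/-! ### Ballot-constrained composition sums -/

/-- The sum of `∏ 1 / i_j!` over the compositions `n = i_1 + ⋯ + i_N` into nonnegative parts whose
partial sums satisfy `i_1 + ⋯ + i_j ≤ j + m` for all `j`. -/
noncomputable def parkW (m : ℕ) : ℕ → ℕ → ℝ
  | 0, n => if n = 0 then 1 else 0
  | N + 1, n => if n ≤ N + 1 + m then
      ∑ i ∈ Finset.range (n + 1), parkW m N (n - i) / (i.factorial : ℝ) else 0

lemma parkW_nonneg (m N n : ℕ) : 0 ≤ parkW m N n := by
  induction N generalizing n with
  | zero => simp only [parkW]; split_ifs <;> norm_num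
  | succ N ih =>
    simp only [parkW]
    split_ifs
    · exact Finset.sum_nonneg fun i _ => div_nonneg (ih _) (by positivity)
    · exact le_rfl

/-- The ballot formula: `n! * parkW 0 N n` counts the parking functions of `n` cars on `N` spots,
and equals `(N + 1 - n) * (N + 1) ^ (n - 1)`. -/
lemma parkW_zero_eq (N n : ℕ) (h : n ≤ N + 1) :
    parkW 0 N n = (((N : ℝ) + 1) ^ n - n * ((N : ℝ) + 1) ^ (n - 1)) / n.factorial := by
  induction N generalizing n with
  | zero =>
    simp only [parkW]
    interval_cases n <;> simp
  | succ N ih =>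
    simp only [parkW]
    rcases Nat.lt_or_ge (N + 1 + 0) n with h1 | h1
    · have : n = N + 2 := by omega
      subst this
      rw [if_neg (by omega)]
      symm
      rw [div_eq_zero_iff]; left
      push_cast
      ring
    · rw [if_pos h1]
      have hn : (n.factorial : ℝ) ≠ 0 := by positivity
      rw [eq_div_iff hn, Finset.sum_mul]
      have key : ∀ i ∈ Finset.range (n + 1),
          parkW 0 N (n - i) / (i.factorial : ℝ) * n.factorial =
            ((N : ℝ) + 1) ^ (n - i) * (n.choose i) -
              n * (if i < n then ((N : ℝ) + 1) ^ (n - 1 - i) * ((n - 1).choose i) else 0) := by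
        intro i hi
        have hi' : i ≤ n := by simpa [Nat.lt_succ_iff] using hi
        rw [ih (n - i) (by omega)]
        have hc : (n.choose i : ℝ) * i.factorial * (n - i).factorial = n.factorial := by
          exact_mod_cast Nat.choose_mul_factorial_mul_factorial hi'
        have h2 : ((n - i).factorial : ℝ) ≠ 0 := by positivity
        have h3 : (i.factorial : ℝ) ≠ 0 := by positivity
        rw [← hc]
        split_ifs with hlt
        · have hc2 : (n : ℝ) * ((n - 1).choose i) = (n.choose i) * ((n - i : ℕ) : ℝ) := by
            obtain ⟨k, rfl⟩ : ∃ k, n = k + 1 := ⟨n - 1, by omega⟩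
            have := Nat.add_one_mul_choose_eq k i
            have h4 := Nat.choose_succ_right_eq (k+1) i
            have : (k + 1) * k.choose i = (k+1).choose i * (k + 1 - i) := by
              rw [← h4]; exact this
            simp only [Nat.add_sub_cancel]
            exact_mod_cast this
          rw [show n - i - 1 = n - 1 - i by omega, mul_left_comm (n : ℝ), hc2]
          field_simp
        · have : i = n := by omega
          subst this
          simp [h3]
      rw [Finset.sum_congr rfl key, Finset.sum_sub_distrib, ← Finset.mul_sum]
      have e1 : ∑ i ∈ Finset.range (n + 1), ((N : ℝ) + 1) ^ (n - i) * (n.choose i : ℝ) =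
          ((N : ℝ) + 2) ^ n := by
        rw [show (N : ℝ) + 2 = 1 + (N + 1) by ring, add_pow]
        simp
      have e2 : (n : ℝ) * ∑ i ∈ Finset.range (n + 1),
          (if i < n then ((N : ℝ) + 1) ^ (n - 1 - i) * ((n - 1).choose i : ℝ) else 0) =
          n * ((N : ℝ) + 2) ^ (n - 1) := by
        rcases Nat.eq_zero_or_pos n with h0 | h0
        · subst h0; simp
        · congr 1
          rw [Finset.sum_range_succ, if_neg (lt_irrefl n), add_zero,
            Finset.sum_congr rfl (fun i hi => if_pos (Finset.mem_range.1 hi)),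
            show (N : ℝ) + 2 = 1 + (N + 1) by ring, add_pow, show n - 1 + 1 = n by omega]
          simp
      rw [e1, e2]; push_cast; ring

/-- Putting `N₁` parts of sum `a` with barrier `0` in front of `N` parts with barrier `m` gives an
admissible composition for the barrier `0`, as long as `a + m ≤ N₁`. -/
lemma parkW_mul_le (N₁ a m : ℕ) (ham : a + m ≤ N₁) (N n : ℕ) :
    parkW 0 N₁ a * parkW m N n ≤ parkW 0 (N₁ + N) (a + n) := by
  induction N generalizing n with
  | zero =>
    simp only [parkW, add_zero]
    split_ifs with h
    · subst h; simp
    · simpa using parkW_nonneg _ _ _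
  | succ N ih =>
    rw [← add_assoc]
    simp only [parkW]
    split_ifs with h h'
    · rw [Finset.mul_sum]
      calc ∑ i ∈ Finset.range (n + 1), parkW 0 N₁ a * (parkW m N (n - i) / (i.factorial : ℝ))
          ≤ ∑ i ∈ Finset.range (n + 1), parkW 0 (N₁ + N) (a + n - i) / (i.factorial : ℝ) := by
            refine Finset.sum_le_sum fun i hi => ?_
            have hi' : i ≤ n := by simpa [Nat.lt_succ_iff] using hi
            rw [← mul_div_assoc, show a + n - i = a + (n - i) by omega]
            gcongr
            exact ih _
        _ ≤ _ := by
            apply Finset.sum_le_sum_of_subset_of_nonneg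
            · intro i; simp only [Finset.mem_range]; omega
            · intro i _ _; exact div_nonneg (parkW_nonneg _ _ _) (by positivity)
    · omega
    · simp only [mul_zero]
      exact Finset.sum_nonneg fun i _ => div_nonneg (parkW_nonneg _ _ _) (by positivity)
    · simp

lemma exp_le_stirling_lower (n : ℕ) (hn : 1 ≤ n) :
    (n : ℝ) ^ n / n.factorial ≤ Real.exp n / (2 * √n) := by
  have h := Stirling.le_factorial_stirling n
  have hn' : (0:ℝ) < n := by exact_mod_cast hn
  rw [div_le_div_iff₀ (by positivity) (by positivity)]
  have h2 : 2 * √(n:ℝ) ≤ √(2 * Real.pi * n) := by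
    rw [show (2:ℝ) * √n = √(4 * n) by
      rw [Real.sqrt_mul (by norm_num), show (4:ℝ) = 2 ^ 2 by norm_num, Real.sqrt_sq (by norm_num)]]
    apply Real.sqrt_le_sqrt
    nlinarith [Real.pi_gt_three]
  have h3 : (n / Real.exp 1 : ℝ) ^ n = (n:ℝ) ^ n / Real.exp n := by
    rw [div_pow, ← Real.exp_nat_mul, mul_one]
  rw [h3] at h
  calc (n:ℝ) ^ n * (2 * √n) ≤ (n:ℝ) ^ n * √(2 * Real.pi * n) := by gcongr
    _ = Real.exp n * (√(2 * Real.pi * n) * ((n:ℝ) ^ n / Real.exp n)) := by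
      field_simp
    _ ≤ _ := by gcongr

lemma exp_le_stirling_upper (n : ℕ) (hn : 1 ≤ n) :
    Real.exp n / (Real.exp 1 * √n) ≤ (n : ℝ) ^ n / n.factorial := by
  obtain ⟨k, rfl⟩ : ∃ k, n = k + 1 := ⟨n - 1, by omega⟩
  have h := Stirling.stirlingSeq'_antitone (Nat.zero_le k)
  simp only [Function.comp, Nat.succ_eq_add_one, zero_add] at h
  rw [Stirling.stirlingSeq_one] at h
  unfold Stirling.stirlingSeq at h
  have hn' : (0:ℝ) < (k + 1 : ℕ) := by positivity
  have h3 : ((k + 1 : ℕ) / Real.exp 1 : ℝ) ^ (k + 1) = ((k + 1 : ℕ):ℝ) ^ (k + 1) / Real.exp (k + 1 : ℕ) := by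
    rw [div_pow, ← Real.exp_nat_mul, mul_one]
  rw [h3, Real.sqrt_mul (by norm_num)] at h
  set X := ((k + 1 : ℕ):ℝ) ^ (k + 1)
  have hX : 0 < X := by positivity
  set S := √((k + 1 : ℕ):ℝ)
  have hS : 0 < S := Real.sqrt_pos.2 hn'
  have h2 : (0:ℝ) < √2 := by positivity
  rw [div_le_div_iff₀ (by positivity) (by positivity)] at h ⊢
  have hE := Real.exp_pos ((k + 1 : ℕ) : ℝ)
  push_cast at h
  have : √2 * (((k + 1).factorial : ℝ) * Real.exp ((k + 1 : ℕ) : ℝ)) ≤ √2 * (X * (Real.exp 1 * S)) := by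
    have h' := mul_le_mul_of_nonneg_right h hE.le
    push_cast at *
    calc _ = ((k + 1).factorial : ℝ) * √2 * Real.exp (k + 1) := by ring
      _ ≤ _ := h'
      _ = _ := by field_simp
  have := le_of_mul_le_mul_left this h2
  linarith

lemma pow_div_factorial_le (N n : ℕ) (hN : 1 ≤ N) :
    (N : ℝ) ^ n / n.factorial ≤ (N : ℝ) ^ N / N.factorial := by
  have hN' : (0:ℝ) < N := by exact_mod_cast hN
  rcases le_total n N with h | h
  · obtain ⟨d, hd⟩ := Nat.exists_eq_add_of_le h
    rw [div_le_div_iff₀ (by positivity) (by positivity)]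
    have : (N.factorial : ℝ) ≤ n.factorial * (N : ℝ) ^ d := by
      have := Nat.factorial_mul_pow_sub_le_factorial h
      have h2 : N.factorial ≤ n.factorial * N ^ (N - n) := by
        rw [hd, Nat.add_sub_cancel_left, ← Nat.factorial_mul_ascFactorial]
        gcongr
        exact (Nat.ascFactorial_le_pow_add n d)
      rw [show N - n = d by omega] at h2
      exact_mod_cast h2
    calc (N:ℝ) ^ n * N.factorial ≤ (N:ℝ)^n * (n.factorial * (N:ℝ) ^ d) := by gcongr
      _ = (N:ℝ)^(n+d) * n.factorial := by rw [pow_add]; ring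
      _ = _ := by rw [← hd]
  · obtain ⟨d, hd⟩ := Nat.exists_eq_add_of_le h
    rw [div_le_div_iff₀ (by positivity) (by positivity)]
    have : (N.factorial : ℝ) * (N : ℝ) ^ d ≤ n.factorial := by
      have := Nat.factorial_mul_pow_sub_le_factorial h
      rw [show n - N = d by omega] at this
      exact_mod_cast this
    calc (N:ℝ) ^ n * N.factorial = (N:ℝ)^N * (N.factorial * (N:ℝ) ^ d) := by
          rw [hd, pow_add]; ring
      _ ≤ _ := by gcongr

/-- The weight `(N + 1) ^ (-3 / 2)`, the polynomial decay of ballot probabilities. -/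
noncomputable def wt (N : ℕ) : ℝ := 1 / (((N : ℝ) + 1) * √((N : ℝ) + 1))

lemma wt_pos (N : ℕ) : 0 < wt N := by unfold wt; positivity

lemma parkW_zero_le (N n : ℕ) (h : n ≤ N) :
    parkW 0 N n ≤ 2 * ((N : ℝ) - n + 1) * Real.exp N * wt N := by
  have h1 := pow_div_factorial_le (N + 1) n (by omega)
  have h2 := exp_le_stirling_lower (N + 1) (by omega)
  have h12 := h1.trans h2
  have he : parkW 0 N n = ((N : ℝ) - n + 1) / (N + 1) * (((N + 1 : ℕ) : ℝ) ^ n / n.factorial) := by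
    rw [parkW_zero_eq N n (by omega)]
    rcases Nat.eq_zero_or_pos n with h0 | h0
    · subst h0; simp; field_simp
    · obtain ⟨k, rfl⟩ : ∃ k, n = k + 1 := ⟨n - 1, by omega⟩
      simp only [Nat.add_sub_cancel]
      push_cast
      field_simp
      ring
  have hnN : (n : ℝ) ≤ N := by exact_mod_cast h
  rw [he]
  have h0 : 0 ≤ (N : ℝ) - n + 1 := by linarith
  calc _ ≤ ((N : ℝ) - n + 1) / (N + 1) * (Real.exp (N + 1 : ℕ) / (2 * √(N + 1 : ℕ))) := by gcongr
    _ = ((N : ℝ) - n + 1) * (Real.exp 1 / 2) * Real.exp N * wt N := by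
      push_cast; rw [Real.exp_add, wt]; field_simp
    _ ≤ _ := by
      have := Real.exp_one_lt_d9
      have hw := wt_pos N
      have : ((N : ℝ) - n + 1) * (Real.exp 1 / 2) ≤ 2 * ((N : ℝ) - n + 1) := by nlinarith
      gcongr

lemma parkW_zero_self_ge (N : ℕ) : Real.exp N * wt N ≤ parkW 0 N N := by
  have h2 := exp_le_stirling_upper (N + 1) (by omega)
  have he : parkW 0 N N = (1 / ((N:ℝ) + 1)) * (((N + 1 : ℕ) : ℝ) ^ (N + 1) / (N + 1).factorial) := by
    rw [parkW_zero_eq N N (by omega)]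
    rcases Nat.eq_zero_or_pos N with h0 | h0
    · subst h0; simp
    · obtain ⟨k, rfl⟩ : ∃ k, N = k + 1 := ⟨N - 1, by omega⟩
      simp only [Nat.add_sub_cancel]
      rw [Nat.factorial_succ (k + 1)]
      push_cast
      field_simp
      ring
  rw [he]
  calc _ = 1 / ((N:ℝ) + 1) * (Real.exp (N + 1 : ℕ) / (Real.exp 1 * √(N + 1 : ℕ))) := by
        push_cast; rw [Real.exp_add, wt]; field_simp
    _ ≤ _ := by gcongr

lemma parkW_double_ge (M : ℕ) :
    (2 * Real.exp 1) ^ M / (6 * ((M : ℝ) + 1)) ≤ parkW 0 (2 * M) M := by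
  rcases Nat.eq_zero_or_pos M with h0 | h0
  · subst h0; simp [parkW]; norm_num
  have hM : (0:ℝ) < M := by exact_mod_cast h0
  have h2 := exp_le_stirling_upper M h0
  have he : parkW 0 (2 * M) M = ((M:ℝ) + 1) / (2 * M + 1) * ((2 * (M:ℝ) + 1) ^ M / M.factorial) := by
    rw [parkW_zero_eq _ M (by omega)]
    obtain ⟨k, rfl⟩ : ∃ k, M = k + 1 := ⟨M - 1, by omega⟩
    simp only [Nat.add_sub_cancel]
    push_cast
    field_simp
    ring
  have hs : √(M:ℝ) ≤ M + 1 := by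
    rw [Real.sqrt_le_left (by positivity)]; nlinarith
  have hs0 : 0 < √(M:ℝ) := Real.sqrt_pos.2 hM
  rw [he]
  calc (2 * Real.exp 1) ^ M / (6 * ((M : ℝ) + 1))
      = 1 / 2 * (2 ^ M * (Real.exp M / (3 * (M + 1)))) := by
        rw [mul_pow, ← Real.exp_nat_mul, mul_one]; field_simp; norm_num
    _ ≤ 1 / 2 * (2 ^ M * (Real.exp M / (Real.exp 1 * √M))) := by
        have := Real.exp_one_lt_d9
        gcongr
        linarith
    _ ≤ 1 / 2 * (2 ^ M * ((M:ℝ) ^ M / M.factorial)) := by gcongr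
    _ = 1 / 2 * ((2 * (M:ℝ)) ^ M / M.factorial) := by rw [mul_pow]; ring
    _ ≤ _ := by
        have e1 : (1:ℝ) / 2 ≤ ((M:ℝ) + 1) / (2 * M + 1) := by
          rw [div_le_div_iff₀ (by norm_num) (by positivity)]; linarith
        have e2 : 2 * (M:ℝ) ≤ 2 * M + 1 := by linarith
        exact mul_le_mul e1 (by gcongr) (by positivity) (by positivity)

lemma wt_anti {a b : ℕ} (h : a ≤ b) : wt b ≤ wt a := by
  unfold wt
  have : (a:ℝ) ≤ b := by exact_mod_cast h
  gcongr

/-- Upper bound under a barrier of height `M`.  It follows from the case of barrier `0` by prefixing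
`2 * M` parts of sum `M`, which costs only a factor `(2 * e) ^ M / M`. -/
lemma parkW_up_le (M N n : ℕ) (h1 : n ≤ N + M) (h2 : N + M ≤ n + 1) :
    parkW M N n ≤ 24 * (((M : ℝ) + 1) * (Real.exp 1 / 2) ^ M) * Real.exp N * wt N := by
  have h := parkW_mul_le (2 * M) M M (by omega) N n
  have ha := parkW_double_ge M
  have hb := parkW_zero_le (2 * M + N) (M + n) (by omega)
  have hc : parkW 0 (2 * M + N) (M + n) ≤ 4 * Real.exp (2 * M + N) * wt N := by
    refine hb.trans ?_
    have : ((2 * M + N : ℕ) : ℝ) - (M + n : ℕ) + 1 ≤ 2 := by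
      have : ((N + M : ℕ) : ℝ) ≤ ((n + 1 : ℕ) : ℝ) := by exact_mod_cast h2
      push_cast at *; linarith
    have hw := wt_anti (show N ≤ 2 * M + N by omega)
    have hw0 := wt_pos (2 * M + N)
    calc _ ≤ 2 * 2 * Real.exp (2 * M + N : ℕ) * wt N := by gcongr
      _ = _ := by push_cast; ring
  have hd : (2 * Real.exp 1) ^ M / (6 * ((M : ℝ) + 1)) * parkW M N n ≤ 4 * Real.exp (2 * M + N) * wt N :=
    (mul_le_mul_of_nonneg_right ha (parkW_nonneg _ _ _)).trans (h.trans hc)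
  rw [div_mul_eq_mul_div, div_le_iff₀ (by positivity)] at hd
  have hp : (0:ℝ) < (2 * Real.exp 1) ^ M := by positivity
  refine le_of_mul_le_mul_left (hd.trans (le_of_eq ?_)) hp
  rw [Real.exp_add, show (2 * (M:ℝ)) = M + M by ring, Real.exp_add, ← mul_one (M:ℝ), Real.exp_nat_mul,
    div_pow, mul_pow]
  field_simp
  ring

lemma sum_wt_le (n : ℕ) : ∑ j ∈ Finset.range (n + 1), wt j ≤ 3 - 2 / √((n : ℝ) + 1) := by
  induction n with
  | zero => simp [wt]; norm_num
  | succ n ih =>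
    rw [Finset.sum_range_succ]
    have key : wt (n + 1) ≤ 2 / √((n:ℝ) + 1) - 2 / √((n:ℝ) + 1 + 1) := by
      unfold wt
      push_cast
      set a := √((n:ℝ) + 1) with ha
      set b := √((n:ℝ) + 1 + 1) with hb
      have ha0 : 0 < a := Real.sqrt_pos.2 (by positivity)
      have hb0 : 0 < b := Real.sqrt_pos.2 (by positivity)
      have ha2 : a ^ 2 = n + 1 := Real.sq_sqrt (by positivity)
      have hb2 : b ^ 2 = n + 1 + 1 := Real.sq_sqrt (by positivity)
      have hab : a ≤ b := Real.sqrt_le_sqrt (by linarith)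
      rw [← hb2, div_sub_div _ _ ha0.ne' hb0.ne', div_le_div_iff₀ (by positivity) (by positivity)]
      have h1 : (b - a) * (b + a) = 1 := by nlinarith
      have h2 : a * b * (b + a) ≤ 2 * b * b ^ 2 := by nlinarith [mul_pos ha0 hb0]
      have h3 : 0 ≤ b - a := by linarith
      have : a * b * ((b - a) * (b + a)) ≤ (b-a) * (2 * b * b ^ 2) := by nlinarith
      rw [h1] at this
      nlinarith
    push_cast
    linarith

/-- The weight `wt` is stable under convolution. -/
lemma wt_conv_le (J : ℕ) :
    ∑ j ∈ Finset.range (J + 1), wt j * wt (J - j) ≤ 24 * wt J := by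
  have hs : ∑ j ∈ Finset.range (J + 1), wt j ≤ 3 := by
    have := sum_wt_le J
    have h0 : 0 ≤ 2 / √((J:ℝ) + 1) := by positivity
    linarith
  have hhalf : ∀ k : ℕ, J ≤ 2 * k → wt k ≤ 4 * wt J := by
    intro k hk
    unfold wt
    have hk' : (J : ℝ) ≤ 2 * k := by exact_mod_cast hk
    have h1 : √((J:ℝ) + 1) ≤ 2 * √((k:ℝ) + 1) := by
      rw [show 2 * √((k:ℝ) + 1) = √(4 * (k + 1)) by
        rw [Real.sqrt_mul (by norm_num), show (4:ℝ) = 2 ^ 2 by norm_num, Real.sqrt_sq (by norm_num)]]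
      apply Real.sqrt_le_sqrt; linarith
    rw [mul_one_div, div_le_div_iff₀ (by positivity) (by positivity)]
    have h2 : (J:ℝ) + 1 ≤ 2 * (k + 1) := by linarith
    nlinarith [mul_le_mul h2 h1 (by positivity) (by positivity)]
  calc ∑ j ∈ Finset.range (J + 1), wt j * wt (J - j)
      ≤ ∑ j ∈ Finset.range (J + 1), 4 * wt J * (wt j + wt (J - j)) := by
        refine Finset.sum_le_sum fun j hj => ?_
        have hj' : j ≤ J := by simpa [Nat.lt_succ_iff] using hj
        have p1 := wt_pos j
        have p2 := wt_pos (J - j)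
        have p3 := wt_pos J
        rcases le_total J (2 * j) with h | h
        · have := hhalf j h
          nlinarith [mul_pos p3 p1, mul_le_mul_of_nonneg_right this p2.le]
        · have := hhalf (J - j) (by omega)
          nlinarith [mul_pos p3 p2, mul_le_mul_of_nonneg_left this p1.le]
    _ = 4 * wt J * (∑ j ∈ Finset.range (J + 1), wt j + ∑ j ∈ Finset.range (J + 1), wt (J - j)) := by
        rw [← Finset.mul_sum, Finset.sum_add_distrib]
    _ = 4 * wt J * (∑ j ∈ Finset.range (J + 1), wt j + ∑ j ∈ Finset.range (J + 1), wt j) := by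
        congr 2
        have := Finset.sum_range_reflect wt (J + 1)
        simpa using this
    _ ≤ _ := by
        have p3 := wt_pos J
        nlinarith


lemma exists_sum_sq_geom_le (q : ℝ) (h0 : 0 ≤ q) (h1 : q < 1) :
    ∃ C : ℝ, 0 < C ∧ ∀ K : ℕ, ∑ r ∈ Finset.range K, ((r : ℝ) + 1) ^ 2 * q ^ r ≤ C := by
  have hq : ‖q‖ < 1 := by rwa [Real.norm_of_nonneg h0]
  have s2 := summable_pow_mul_geometric_of_norm_lt_one 2 hq
  have s1 := summable_pow_mul_geometric_of_norm_lt_one 1 hq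
  have s0 := summable_pow_mul_geometric_of_norm_lt_one 0 hq
  have s : Summable (fun r : ℕ => ((r : ℝ) + 1) ^ 2 * q ^ r) := by
    refine ((s2.add (s1.mul_left 2)).add s0).congr fun r => ?_
    ring
  refine ⟨∑' r : ℕ, ((r : ℝ) + 1) ^ 2 * q ^ r + 1, ?_, fun K => ?_⟩
  · have : 0 ≤ ∑' r : ℕ, ((r : ℝ) + 1) ^ 2 * q ^ r := tsum_nonneg fun r => by positivity
    linarith
  · have := s.sum_le_tsum (Finset.range K) (fun r _ => by positivity)
    linarith

/-! ### Elementary symmetric sums and convolutions -/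

/-- The elementary symmetric sum of degree `i` of the values of `f` on `S`. -/
noncomputable def esym (f : ℕ → ℝ) (S : Finset ℕ) (i : ℕ) : ℝ :=
  ∑ B ∈ S.powersetCard i, ∏ p ∈ B, f p

lemma esym_zero (f : ℕ → ℝ) (S : Finset ℕ) : esym f S 0 = 1 := by
  simp [esym]

lemma esym_empty_succ (f : ℕ → ℝ) (i : ℕ) : esym f ∅ (i + 1) = 0 := by
  unfold esym
  rw [Finset.powersetCard_eq_empty.2 (by simp)]
  simp

lemma esym_insert (f : ℕ → ℝ) (S : Finset ℕ) (a : ℕ) (ha : a ∉ S) (i : ℕ) :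
    esym f (insert a S) (i + 1) = esym f S (i + 1) + f a * esym f S i := by
  unfold esym
  rw [Finset.powersetCard_succ_insert ha, Finset.sum_union, Finset.sum_image, Finset.mul_sum]
  · congr 1
    refine Finset.sum_congr rfl fun B hB => ?_
    rw [Finset.prod_insert]
    intro h
    exact ha ((Finset.mem_powersetCard.1 hB).1 h)
  · intro B hB B' hB' h
    have h1 : a ∉ B := fun h => ha ((Finset.mem_powersetCard.1 hB).1 h)
    have h2 : a ∉ B' := fun h => ha ((Finset.mem_powersetCard.1 hB').1 h)
    rw [← Finset.erase_insert h1, ← Finset.erase_insert h2]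
    exact congrArg (fun s => s.erase a) h
  · rw [Finset.disjoint_left]
    intro B hB hB'
    obtain ⟨C, _, rfl⟩ := Finset.mem_image.1 hB'
    exact ha ((Finset.mem_powersetCard.1 hB).1 (Finset.mem_insert_self a C))

lemma esym_nonneg (f : ℕ → ℝ) (S : Finset ℕ) (hf : ∀ p ∈ S, 0 ≤ f p) (i : ℕ) : 0 ≤ esym f S i :=
  Finset.sum_nonneg fun _ hB => Finset.prod_nonneg fun p hp =>
    hf p ((Finset.mem_powersetCard.1 hB).1 hp)

lemma esym_succ_le (f : ℕ → ℝ) (S : Finset ℕ) (hf : ∀ p ∈ S, 0 ≤ f p) (i : ℕ) :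
    ((i : ℝ) + 1) * esym f S (i + 1) ≤ (∑ p ∈ S, f p) * esym f S i := by
  induction S using Finset.induction_on generalizing i with
  | empty => simp [esym_empty_succ]
  | insert a S ha ih =>
    have hS : ∀ p ∈ S, 0 ≤ f p := fun p hp => hf p (Finset.mem_insert_of_mem hp)
    have hfa : 0 ≤ f a := hf a (Finset.mem_insert_self a S)
    have ih := ih hS
    rw [esym_insert f S a ha, Finset.sum_insert ha]
    cases i with
    | zero =>
      have := ih 0
      simp only [esym_zero] at *
      push_cast at *
      linarith
    | succ i =>
      have h1 := ih (i + 1)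
      have h2 := ih i
      rw [esym_insert f S a ha i]
      have h3 := mul_le_mul_of_nonneg_left h2 hfa
      have h4 := esym_nonneg f S hS i
      push_cast at *
      nlinarith [mul_nonneg (mul_nonneg hfa hfa) h4]

lemma esym_succ_ge (f : ℕ → ℝ) (d : ℝ) (S : Finset ℕ) (hf : ∀ p ∈ S, 0 ≤ f p)
    (hd : ∀ p ∈ S, f p ≤ d) (i : ℕ) :
    (∑ p ∈ S, f p - i * d) * esym f S i ≤ ((i : ℝ) + 1) * esym f S (i + 1) := by
  induction S using Finset.induction_on generalizing i with
  | empty =>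
    cases i with
    | zero => simp [esym_empty_succ]
    | succ i => simp [esym_empty_succ]
  | insert a S ha ih =>
    have hS : ∀ p ∈ S, 0 ≤ f p := fun p hp => hf p (Finset.mem_insert_of_mem hp)
    have hfa : 0 ≤ f a := hf a (Finset.mem_insert_self a S)
    have hda : f a ≤ d := hd a (Finset.mem_insert_self a S)
    have ih := ih hS (fun p hp => hd p (Finset.mem_insert_of_mem hp))
    rw [esym_insert f S a ha, Finset.sum_insert ha]
    cases i with
    | zero =>
      have := ih 0
      simp only [esym_zero] at *
      push_cast at *
      linarith
    | succ i =>
      have h1 := ih (i + 1)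
      have h2 := ih i
      rw [esym_insert f S a ha i]
      have h3 := mul_le_mul_of_nonneg_left h2 hfa
      have h4 := esym_nonneg f S hS i
      push_cast at *
      have h5 : f a * ((f a - d) * esym f S i) ≤ 0 :=
        mul_nonpos_of_nonneg_of_nonpos hfa (mul_nonpos_of_nonpos_of_nonneg (by linarith) h4)
      nlinarith

lemma esym_le (f : ℕ → ℝ) (l : ℝ) (S : Finset ℕ) (hf : ∀ p ∈ S, 0 ≤ f p)
    (hl : ∑ p ∈ S, f p ≤ l) (i : ℕ) : esym f S i ≤ l ^ i / i.factorial := by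
  have hl0 : 0 ≤ l := (Finset.sum_nonneg hf).trans hl
  induction i with
  | zero => simp [esym_zero]
  | succ i ih =>
    have h := esym_succ_le f S hf i
    have h2 : (∑ p ∈ S, f p) * esym f S i ≤ l * (l ^ i / i.factorial) :=
      mul_le_mul hl ih (esym_nonneg f S hf i) hl0
    rw [Nat.factorial_succ, le_div_iff₀ (by positivity)]
    have h3 := h.trans h2
    have hfac : (0:ℝ) < i.factorial := by positivity
    rw [← mul_div_assoc, le_div_iff₀ hfac] at h3
    push_cast
    rw [pow_succ]
    linarith

/-- The sequence `g` delayed by one step, that is, `n ↦ g (n - 1)` with the value `0` at `0`. -/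
def shiftSeq (g : ℕ → ℝ) : ℕ → ℝ
  | 0 => 0
  | n + 1 => g n

/-- The Cauchy product of two sequences. -/
noncomputable def conv (g h : ℕ → ℝ) (n : ℕ) : ℝ := ∑ i ∈ Finset.range (n + 1), g (n - i) * h i

lemma conv_shift_left (g h : ℕ → ℝ) (n : ℕ) :
    conv (shiftSeq g) h n = shiftSeq (conv g h) n := by
  cases n with
  | zero => simp [conv, shiftSeq]
  | succ n =>
    unfold conv
    rw [Finset.sum_range_succ]
    simp only [Nat.sub_self, shiftSeq, zero_mul, add_zero]
    refine Finset.sum_congr rfl fun i hi => ?_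
    have : i ≤ n := by simpa [Nat.lt_succ_iff] using hi
    rw [Nat.sub_add_comm this]

lemma conv_shift_right (g h : ℕ → ℝ) (n : ℕ) :
    conv g (shiftSeq h) n = shiftSeq (conv g h) n := by
  cases n with
  | zero => simp [conv, shiftSeq]
  | succ n =>
    unfold conv
    rw [Finset.sum_range_succ']
    simp [shiftSeq]

lemma shiftSeq_nonneg (g : ℕ → ℝ) (hg : ∀ n, 0 ≤ g n) (n : ℕ) : 0 ≤ shiftSeq g n := by
  cases n with
  | zero => exact le_rfl
  | succ n => exact hg n

/-- The sequence `g (n - 1) + g (n - 2)`, which measures the error in replacing elementary symmetric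
sums by `l ^ i / i!`. -/
noncomputable def errSeq (g : ℕ → ℝ) (n : ℕ) : ℝ := shiftSeq g n + shiftSeq (shiftSeq g) n

lemma errSeq_nonneg (g : ℕ → ℝ) (hg : ∀ n, 0 ≤ g n) (n : ℕ) : 0 ≤ errSeq g n :=
  add_nonneg (shiftSeq_nonneg g hg n) (shiftSeq_nonneg _ (shiftSeq_nonneg g hg) n)

lemma conv_errSeq_left (g h : ℕ → ℝ) (n : ℕ) : conv (errSeq g) h n = errSeq (conv g h) n := by
  have : conv (errSeq g) h n = conv (shiftSeq g) h n + conv (shiftSeq (shiftSeq g)) h n := by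
    simp only [conv, errSeq, add_mul, Finset.sum_add_distrib]
  rw [this, conv_shift_left, conv_shift_left, funext (conv_shift_left g h)]
  rfl

lemma conv_errSeq_right (g h : ℕ → ℝ) (n : ℕ) : conv g (errSeq h) n = errSeq (conv g h) n := by
  have : conv g (errSeq h) n = conv g (shiftSeq h) n + conv g (shiftSeq (shiftSeq h)) n := by
    simp only [conv, errSeq, mul_add, Finset.sum_add_distrib]
  rw [this, conv_shift_right, conv_shift_right, funext (conv_shift_right g h)]
  rfl

/-- The sequence `1 / i!`. -/
noncomputable def invFact (i : ℕ) : ℝ := 1 / (i.factorial : ℝ)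

lemma invFact_nonneg (i : ℕ) : 0 ≤ invFact i := by unfold invFact; positivity

lemma invFact_succ (i : ℕ) : ((i:ℝ) + 1) * invFact (i + 1) = invFact i := by
  unfold invFact; rw [Nat.factorial_succ]; push_cast; field_simp

/-- Multiplication by `i ^ 2` is a combination of shifts on `1 / i!`; this lets the quadratic error
in `esym_ge` pass through convolutions. -/
lemma errSeq_invFact (i : ℕ) : errSeq invFact i = (i:ℝ) ^ 2 * invFact i := by
  match i with
  | 0 => simp [errSeq, shiftSeq]
  | 1 => simp [errSeq, shiftSeq, invFact]
  | i + 2 =>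
    have h1 := invFact_succ i
    have h2 := invFact_succ (i + 1)
    simp only [errSeq, shiftSeq]
    push_cast at *
    rw [← h1, ← h2]; ring

/-- A lower bound matching `esym_le`: `esym f S i` is at least `l ^ i / i!` times
`1 - 2 * (d / l) * i ^ 2`. -/
lemma esym_ge (f : ℕ → ℝ) (l d : ℝ) (hl0 : 0 < l) (hd0 : 0 ≤ d) (S : Finset ℕ)
    (hf : ∀ p ∈ S, 0 ≤ f p)
    (hd : ∀ p ∈ S, f p ≤ d) (hl : l - 2 * d ≤ ∑ p ∈ S, f p) (i : ℕ) :
    l ^ i * (invFact i - 2 * (d / l) * errSeq invFact i) ≤ esym f S i := by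
  set t := d / l with ht
  have hdt : d = t * l := by rw [ht]; field_simp
  have ht0 : 0 ≤ t := by positivity
  clear_value t
  rw [errSeq_invFact]
  induction i with
  | zero => simp [esym_zero, invFact]
  | succ i ih =>
    have h := esym_succ_ge f d S hf hd i
    have he := esym_nonneg f S hf i
    have h1 : l * (1 - (i + 2) * t) * esym f S i ≤ ((i : ℝ) + 1) * esym f S (i + 1) := by
      refine le_trans (mul_le_mul_of_nonneg_right ?_ he) h
      have e1 : (i:ℝ) * d = i * (t * l) := by rw [← hdt]
      nlinarith
    have hp : (0:ℝ) < (i:ℝ) + 1 := by positivity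
    refine le_of_mul_le_mul_left ?_ hp
    have hI := invFact_succ i
    have hI0 := invFact_nonneg i
    have hlp : 0 < l ^ i := by positivity
    have e : ((i:ℝ) + 1) * (l ^ (i + 1) * (invFact (i + 1) - 2 * t * (((i + 1 : ℕ) : ℝ) ^ 2 * invFact (i + 1))))
        = l ^ (i + 1) * invFact i * (1 - 2 * t * ((i:ℝ) + 1) ^ 2) := by
      push_cast; rw [← hI]; ring
    rw [e]
    by_cases hs : 0 ≤ 1 - (i + 2) * t
    · refine le_trans ?_ h1
      calc l ^ (i + 1) * invFact i * (1 - 2 * t * ((i:ℝ) + 1) ^ 2)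
          ≤ l ^ (i + 1) * invFact i * ((1 - (i + 2) * t) * (1 - 2 * t * (i:ℝ) ^ 2)) := by
            apply mul_le_mul_of_nonneg_left _ (by positivity)
            have : 0 ≤ 2 * t * (i:ℝ)^2 * ((i + 2) * t) := by positivity
            nlinarith [mul_nonneg ht0 (Nat.cast_nonneg (α := ℝ) i)]
        _ = l * (1 - (i + 2) * t) * (l ^ i * (invFact i - 2 * t * ((i:ℝ) ^ 2 * invFact i))) := by
            rw [pow_succ]; ring
        _ ≤ _ := by
            apply mul_le_mul_of_nonneg_left ih
            positivity
    · push Not at hs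
      have : l ^ (i + 1) * invFact i * (1 - 2 * t * ((i:ℝ) + 1) ^ 2) ≤ 0 := by
        apply mul_nonpos_of_nonneg_of_nonpos (by positivity)
        nlinarith [mul_nonneg ht0 (Nat.cast_nonneg (α := ℝ) i)]
      exact this.trans (mul_nonneg hp.le (esym_nonneg f S hf _))

lemma parkW_succ (m N n : ℕ) :
    parkW m (N + 1) n = if n ≤ N + 1 + m then conv (parkW m N) invFact n else 0 := by
  simp only [parkW, conv, invFact, mul_one_div]

lemma sum_powerset_union {U V : Finset ℕ} (h : Disjoint U V) (F : Finset ℕ → ℝ) :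
    ∑ A ∈ (U ∪ V).powerset, F A = ∑ A ∈ U.powerset, ∑ B ∈ V.powerset, F (A ∪ B) := by
  rw [← Finset.sum_product']
  symm
  refine Finset.sum_bij' (fun x _ => x.1 ∪ x.2) (fun A _ => (A ∩ U, A ∩ V)) ?_ ?_ ?_ ?_ ?_
  · rintro ⟨A, B⟩ hx
    simp only [Finset.mem_product, Finset.mem_powerset] at hx ⊢
    exact Finset.union_subset_union hx.1 hx.2
  · intro A hA
    simp [Finset.mem_product, Finset.mem_powerset, Finset.inter_subset_right]
  · rintro ⟨A, B⟩ hx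
    simp only [Finset.mem_product, Finset.mem_powerset] at hx
    rw [Finset.disjoint_left] at h
    ext1
    · ext p; simp only [Finset.mem_inter, Finset.mem_union]
      constructor
      · rintro ⟨h1 | h1, h2⟩
        · exact h1
        · exact absurd (hx.2 h1) (h h2)
      · intro h1; exact ⟨Or.inl h1, hx.1 h1⟩
    · ext p; simp only [Finset.mem_inter, Finset.mem_union]
      constructor
      · rintro ⟨h1 | h1, h2⟩
        · exact absurd h2 (h (hx.1 h1))
        · exact h1
      · intro h1; exact ⟨Or.inr h1, hx.2 h1⟩
  · intro A hA
    simp only [Finset.mem_powerset] at hA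
    show A ∩ U ∪ A ∩ V = A
    rw [← Finset.inter_union_distrib_left, Finset.inter_eq_left]; exact hA
  · intros; rfl

/-- Double counting of pairs `(A, p)` with `p ∈ A`, removing `p` from `A`. -/
lemma sum_powerset_mem {U : Finset ℕ} (H : ℕ → Finset ℕ → ℝ) :
    ∑ A ∈ U.powerset, ∑ p ∈ A, H p A =
      ∑ p ∈ U, ∑ B ∈ (U.erase p).powerset, H p (insert p B) := by
  rw [Finset.sum_sigma', Finset.sum_sigma']
  refine Finset.sum_bij' (fun x _ => ⟨x.2, x.1.erase x.2⟩) (fun x _ => ⟨insert x.1 x.2, x.1⟩)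
    ?_ ?_ ?_ ?_ ?_
  · rintro ⟨A, p⟩ hx
    simp only [Finset.mem_sigma, Finset.mem_powerset] at hx ⊢
    exact ⟨hx.1 hx.2, Finset.erase_subset_erase _ hx.1⟩
  · rintro ⟨p, B⟩ hx
    simp only [Finset.mem_sigma, Finset.mem_powerset] at hx ⊢
    exact ⟨Finset.insert_subset hx.1 (hx.2.trans (Finset.erase_subset _ _)), Finset.mem_insert_self _ _⟩
  · rintro ⟨A, p⟩ hx
    simp only [Finset.mem_sigma, Finset.mem_powerset] at hx
    simp [Finset.insert_erase hx.2]
  · rintro ⟨p, B⟩ hx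
    simp only [Finset.mem_sigma, Finset.mem_powerset] at hx
    have : p ∉ B := fun h => (Finset.mem_erase.1 (hx.2 h)).1 rfl
    simp [Finset.erase_insert this]
  · rintro ⟨A, p⟩ hx
    simp only [Finset.mem_sigma, Finset.mem_powerset] at hx
    simp [Finset.insert_erase hx.2]

lemma sum_mem_le {U : Finset ℕ} (H : ℕ → Finset ℕ → ℝ) (c : ℕ → ℝ) (F : Finset ℕ → ℝ)
    (hc : ∀ p ∈ U, 0 ≤ c p) (hF : ∀ B ∈ U.powerset, 0 ≤ F B)
    (hH : ∀ p ∈ U, ∀ B ∈ U.powerset, p ∉ B → H p (insert p B) ≤ c p * F B) :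
    ∑ A ∈ U.powerset, ∑ p ∈ A, H p A ≤ (∑ p ∈ U, c p) * ∑ B ∈ U.powerset, F B := by
  rw [sum_powerset_mem, Finset.sum_mul]
  refine Finset.sum_le_sum fun p hp => ?_
  rw [Finset.mul_sum]
  have hsub : (U.erase p).powerset ⊆ U.powerset := Finset.powerset_mono.2 (Finset.erase_subset _ _)
  calc _ ≤ ∑ B ∈ (U.erase p).powerset, c p * F B := by
        refine Finset.sum_le_sum fun B hB => hH p hp B (hsub hB) ?_
        intro h
        exact (Finset.mem_erase.1 (Finset.mem_powerset.1 hB h)).1 rfl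
    _ ≤ _ := Finset.sum_le_sum_of_subset_of_nonneg hsub
        (fun B hB _ => mul_nonneg (hc p hp) (hF B hB))

/-! ### Families of sets of primes under a barrier -/

/-- The primes in the `N` consecutive blocks `P s, …, P (s + N - 1)`. -/
def blockU (P : ℕ → Finset ℕ) (s N : ℕ) : Finset ℕ := (Finset.Ico s (s + N)).biUnion P

/-- The number of elements of `A` lying in blocks of index less than `t`. -/
def cntBelow (κ : ℕ → ℕ) (t : ℕ) (A : Finset ℕ) : ℕ := (A.filter (fun p => κ p < t)).card

/-- The walk `j ↦ cntBelow κ (s + j) A - j`, for `0 ≤ j ≤ N`, stays at height at most `m`. -/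
def Barrier (κ : ℕ → ℕ) (s N m : ℕ) (A : Finset ℕ) : Prop :=
  ∀ j ≤ N, cntBelow κ (s + j) A ≤ j + m

/-- The total weight `∏ p ∈ A, f p` of the sets `A` of `n` primes from the blocks
`P s, …, P (s + N - 1)` which respect the barrier of height `m`. -/
noncomputable def famSum (P : ℕ → Finset ℕ) (κ : ℕ → ℕ) (f : ℕ → ℝ) (s N m n : ℕ) : ℝ :=
  ∑ A ∈ (blockU P s N).powerset,
    if A.card = n ∧ Barrier κ s N m A then ∏ p ∈ A, f p else 0

section
variable {P : ℕ → Finset ℕ} {κ : ℕ → ℕ} {f : ℕ → ℝ}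

lemma kappa_of_mem_blockU (hκ : ∀ k, ∀ p ∈ P k, κ p = k) {s N p : ℕ} (hp : p ∈ blockU P s N) :
    s ≤ κ p ∧ κ p < s + N ∧ p ∈ P (κ p) := by
  simp only [blockU, Finset.mem_biUnion, Finset.mem_Ico] at hp
  obtain ⟨k, hk, hpk⟩ := hp
  have := hκ k p hpk
  rw [this]; exact ⟨hk.1, hk.2, hpk⟩

lemma blockU_succ (s N : ℕ) : blockU P s (N + 1) = blockU P s N ∪ P (s + N) := by
  unfold blockU
  rw [← add_assoc, Finset.union_comm, ← Finset.biUnion_insert]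
  congr 1
  ext k; simp only [Finset.mem_Ico, Finset.mem_insert]; omega

lemma blockU_add (s N M : ℕ) : blockU P s (N + M) = blockU P s N ∪ blockU P (s + N) M := by
  unfold blockU
  ext p
  simp only [Finset.mem_biUnion, Finset.mem_Ico, Finset.mem_union]
  constructor
  · rintro ⟨k, hk, hp⟩
    by_cases h : k < s + N
    · exact Or.inl ⟨k, ⟨hk.1, h⟩, hp⟩
    · exact Or.inr ⟨k, ⟨by omega, by omega⟩, hp⟩
  · rintro (⟨k, hk, hp⟩ | ⟨k, hk, hp⟩)
    · exact ⟨k, ⟨by omega, by omega⟩, hp⟩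
    · exact ⟨k, ⟨by omega, by omega⟩, hp⟩

lemma blockU_disjoint (hκ : ∀ k, ∀ p ∈ P k, κ p = k) (s N M : ℕ) :
    Disjoint (blockU P s N) (blockU P (s + N) M) := by
  rw [Finset.disjoint_left]
  intro p h1 h2
  have := kappa_of_mem_blockU hκ h1
  have := kappa_of_mem_blockU hκ h2
  omega

lemma blockU_disjoint_last (hκ : ∀ k, ∀ p ∈ P k, κ p = k) (s N : ℕ) :
    Disjoint (blockU P s N) (P (s + N)) := by
  rw [Finset.disjoint_left]
  intro p h1 h2
  have := kappa_of_mem_blockU hκ h1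
  have := hκ _ _ h2
  omega

lemma cntBelow_eq_card {t : ℕ} {A : Finset ℕ} (h : ∀ p ∈ A, κ p < t) : cntBelow κ t A = A.card := by
  unfold cntBelow; rw [Finset.filter_true_of_mem h]

lemma cntBelow_eq_zero {t : ℕ} {A : Finset ℕ} (h : ∀ p ∈ A, t ≤ κ p) : cntBelow κ t A = 0 := by
  unfold cntBelow
  rw [Finset.filter_false_of_mem (fun p hp => by have := h p hp; omega), Finset.card_empty]

lemma cntBelow_union {t : ℕ} {A B : Finset ℕ} (h : Disjoint A B) :
    cntBelow κ t (A ∪ B) = cntBelow κ t A + cntBelow κ t B := by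
  unfold cntBelow
  rw [Finset.filter_union, Finset.card_union_of_disjoint (Finset.disjoint_filter_filter h)]

lemma cntBelow_mono {t : ℕ} {A B : Finset ℕ} (h : A ⊆ B) : cntBelow κ t A ≤ cntBelow κ t B :=
  Finset.card_le_card (Finset.filter_subset_filter _ h)

lemma cntBelow_le_card {t : ℕ} {A : Finset ℕ} : cntBelow κ t A ≤ A.card :=
  Finset.card_filter_le _ _

lemma famSum_nonneg (hf : ∀ p, 0 ≤ f p) (s N m n : ℕ) : 0 ≤ famSum P κ f s N m n :=
  Finset.sum_nonneg fun A _ => by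
    split_ifs
    · exact Finset.prod_nonneg fun p _ => hf p
    · exact le_rfl

lemma famSum_zero (s m n : ℕ) : famSum P κ f s 0 m n = parkW m 0 n := by
  unfold famSum
  simp only [blockU, add_zero, Finset.Ico_self, Finset.biUnion_empty, Finset.powerset_empty,
    Finset.sum_singleton, Finset.card_empty, Finset.prod_empty, parkW]
  have : Barrier κ s 0 m ∅ := by intro j _; simp [cntBelow]
  simp only [this, and_true, eq_comm]

lemma barrier_succ_iff (hκ : ∀ k, ∀ p ∈ P k, κ p = k) {s N m : ℕ} {A B : Finset ℕ}
    (hA : A ⊆ blockU P s N) (hB : B ⊆ P (s + N)) :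
    Barrier κ s (N + 1) m (A ∪ B) ↔ Barrier κ s N m A ∧ A.card + B.card ≤ N + 1 + m := by
  have hd : Disjoint A B := Finset.disjoint_of_subset_left hA
    (Finset.disjoint_of_subset_right hB (blockU_disjoint_last hκ s N))
  have hfull : cntBelow κ (s + (N + 1)) (A ∪ B) = A.card + B.card := by
    rw [cntBelow_eq_card, Finset.card_union_of_disjoint hd]
    intro p hp
    rcases Finset.mem_union.1 hp with h | h
    · have := kappa_of_mem_blockU hκ (hA h); omega
    · have := hκ _ _ (hB h); omega
  have hlow : ∀ j ≤ N, cntBelow κ (s + j) (A ∪ B) = cntBelow κ (s + j) A := by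
    intro j hj
    rw [cntBelow_union hd, cntBelow_eq_zero (A := B), add_zero]
    intro p hp
    have := hκ _ _ (hB hp); omega
  constructor
  · intro h
    exact ⟨fun j hj => by rw [← hlow j hj]; exact h j (by omega), by rw [← hfull]; exact h (N + 1) le_rfl⟩
  · rintro ⟨h1, h2⟩ j hj
    rcases Nat.lt_or_ge N j with h | h
    · have : j = N + 1 := by omega
      subst this; rw [hfull]; exact h2
    · rw [hlow j h]; exact h1 j h

lemma esym_eq_ite (S : Finset ℕ) (i : ℕ) :
    esym f S i = ∑ B ∈ S.powerset, if B.card = i then ∏ p ∈ B, f p else 0 := by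
  unfold esym
  rw [← Finset.sum_filter]
  refine Finset.sum_congr ?_ fun _ _ => rfl
  ext B; simp [Finset.mem_powersetCard]

/-- The last block contributes freely, subject only to the constraint on the total number of primes. -/
lemma famSum_succ (hκ : ∀ k, ∀ p ∈ P k, κ p = k) (s N m n : ℕ) :
    famSum P κ f s (N + 1) m n = if n ≤ N + 1 + m then
      conv (famSum P κ f s N m) (esym f (P (s + N))) n else 0 := by
  have hd := blockU_disjoint_last hκ s N
  have e1 : famSum P κ f s (N + 1) m n = ∑ A ∈ (blockU P s N).powerset, ∑ B ∈ (P (s + N)).powerset,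
      if A.card + B.card = n ∧ (Barrier κ s N m A ∧ n ≤ N + 1 + m) then
        (∏ p ∈ A, f p) * ∏ p ∈ B, f p else 0 := by
    unfold famSum
    rw [blockU_succ, sum_powerset_union hd]
    refine Finset.sum_congr rfl fun A hA => Finset.sum_congr rfl fun B hB => ?_
    rw [Finset.mem_powerset] at hA hB
    have hAB : Disjoint A B := Finset.disjoint_of_subset_left hA
      (Finset.disjoint_of_subset_right hB hd)
    have hiff := barrier_succ_iff (m := m) hκ hA hB
    have hc := Finset.card_union_of_disjoint hAB
    by_cases h : A.card + B.card = n ∧ (Barrier κ s N m A ∧ n ≤ N + 1 + m)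
    · rw [if_pos h, if_pos ⟨by omega, hiff.2 ⟨h.2.1, by omega⟩⟩, Finset.prod_union hAB]
    · rw [if_neg h, if_neg]
      rintro ⟨h1, h2⟩
      have h3 := hiff.1 h2
      exact h ⟨by omega, h3.1, by omega⟩
  rw [e1]
  split_ifs with hn
  · unfold conv famSum
    simp_rw [esym_eq_ite, Finset.sum_mul_sum]
    symm
    rw [Finset.sum_comm]
    refine Finset.sum_congr rfl fun A hA => ?_
    rw [Finset.sum_comm]
    refine Finset.sum_congr rfl fun B hB => ?_
    symm
    by_cases h : A.card + B.card = n ∧ Barrier κ s N m A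
    · rw [if_pos ⟨h.1, h.2, hn⟩, Finset.sum_eq_single_of_mem B.card]
      · rw [if_pos ⟨by omega, h.2⟩, if_pos rfl]
      · rw [Finset.mem_range]; omega
      · intro i _ hi
        rw [if_neg (c := B.card = i) (fun h => hi h.symm), mul_zero]
    · rw [if_neg (fun h' => h ⟨h'.1, h'.2.1⟩)]
      symm
      refine Finset.sum_eq_zero fun i hi => ?_
      have hi : i ≤ n := by simpa [Nat.lt_succ_iff] using hi
      by_cases h1 : B.card = i
      · rw [if_neg, zero_mul]
        rintro ⟨h2, h3⟩
        exact h ⟨by omega, h3⟩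
      · rw [if_neg h1, mul_zero]
  · refine Finset.sum_eq_zero fun A _ => Finset.sum_eq_zero fun B _ => ?_
    rw [if_neg (fun h => hn h.2.2)]

lemma conv_mono {g g' h h' : ℕ → ℝ} (hg : ∀ n, g n ≤ g' n) (hh : ∀ n, h n ≤ h' n)
    (hg0 : ∀ n, 0 ≤ g' n) (hh0 : ∀ n, 0 ≤ h n) (n : ℕ) : conv g h n ≤ conv g' h' n :=
  Finset.sum_le_sum fun i _ => mul_le_mul (hg _) (hh _) (hh0 _) (hg0 _)

lemma conv_pow_scale (l : ℝ) (g h : ℕ → ℝ) (n : ℕ) :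
    conv (fun k => l ^ k * g k) (fun k => l ^ k * h k) n = l ^ n * conv g h n := by
  unfold conv
  rw [Finset.mul_sum]
  refine Finset.sum_congr rfl fun i hi => ?_
  have hi : i ≤ n := by simpa [Nat.lt_succ_iff] using hi
  rw [show l ^ n = l ^ (n - i) * l ^ i by rw [← pow_add]; congr 1; omega]
  ring

/-- If every block has total weight at most `l`, the family behaves at most like `N` independent
Poisson variables under the barrier. -/
lemma famSum_le (hκ : ∀ k, ∀ p ∈ P k, κ p = k) (hf : ∀ p, 0 ≤ f p) (l : ℝ)
    (hl : ∀ k, ∑ p ∈ P k, f p ≤ l) (s N m n : ℕ) :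
    famSum P κ f s N m n ≤ l ^ n * parkW m N n := by
  have hl0 : 0 ≤ l := (Finset.sum_nonneg fun p _ => hf p).trans (hl 0)
  induction N generalizing n with
  | zero =>
    rw [famSum_zero]
    simp only [parkW]
    split_ifs with h
    · subst h; simp
    · simp
  | succ N ih =>
    rw [famSum_succ hκ, parkW_succ]
    split_ifs
    · rw [← conv_pow_scale]
      refine conv_mono ih (fun i => ?_) (fun i => mul_nonneg (by positivity) (parkW_nonneg _ _ _))
        (fun i => esym_nonneg f _ (fun p _ => hf p) i) n
      have := esym_le f l (P (s + N)) (fun p _ => hf p) (hl _) i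
      rwa [invFact, mul_one_div]
    · simp

lemma errSeq_mono_at {g h : ℕ → ℝ} {n : ℕ} (H : ∀ k ≤ n, g k ≤ h k) : errSeq g n ≤ errSeq h n := by
  unfold errSeq
  match n with
  | 0 => simp [shiftSeq]
  | 1 => simp only [shiftSeq]; simpa using H 0 (by omega)
  | n + 2 => simp only [shiftSeq]; exact add_le_add (H _ (by omega)) (H _ (by omega))

/-- The lower bound corresponding to `famSum_le`, with an error term which is small as soon as the
blocks consist of large primes. -/
lemma famSum_ge (hκ : ∀ k, ∀ p ∈ P k, κ p = k) (hf : ∀ p, 0 ≤ f p) (l : ℝ) (hl0 : 0 < l)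
    (d : ℕ → ℝ) (hd0 : ∀ k, 0 ≤ d k) (s : ℕ) (hd : ∀ k, s ≤ k → ∀ p ∈ P k, f p ≤ d k)
    (hl : ∀ k, s ≤ k → l - 2 * d k ≤ ∑ p ∈ P k, f p) (N n : ℕ) :
    l ^ n * (parkW 0 N n - (∑ k ∈ Finset.range N, 2 * (d (s + k) / l)) * errSeq (parkW 0 N) n)
      ≤ famSum P κ f s N 0 n := by
  induction N generalizing n with
  | zero =>
    rw [famSum_zero]
    simp only [parkW]
    split_ifs with h
    · subst h; simp
    · simp
  | succ N ih =>
    rw [famSum_succ hκ]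
    by_cases hn : n ≤ N + 1 + 0
    swap
    · rw [if_neg hn, parkW_succ, if_neg hn, Finset.sum_range_succ, zero_sub]
      have h1 : 0 ≤ errSeq (parkW 0 (N + 1)) n := errSeq_nonneg _ (fun k => parkW_nonneg _ _ _) n
      have h2 : 0 ≤ ∑ k ∈ Finset.range N, 2 * (d (s + k) / l) :=
        Finset.sum_nonneg fun k _ => by have := hd0 (s + k); positivity
      have h3 := hd0 (s + N)
      rw [mul_neg, neg_nonpos]
      positivity
    rw [if_pos hn]
    set E := ∑ k ∈ Finset.range N, 2 * (d (s + k) / l) with hE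
    have hE0 : 0 ≤ E := Finset.sum_nonneg fun k _ => by have := hd0 (s + k); positivity
    set t := 2 * (d (s + N) / l) with ht
    have ht0 : 0 ≤ t := by have := hd0 (s + N); positivity
    set W := parkW 0 N with hW
    have hW0 : ∀ k, 0 ≤ W k := fun k => parkW_nonneg _ _ _
    -- multiply the two lower bounds; the cross term of the two errors has a favourable sign
    have key : l ^ n * (conv W invFact n - E * conv (errSeq W) invFact n
        - t * conv W (errSeq invFact) n) ≤ conv (famSum P κ f s N 0) (esym f (P (s + N))) n := by
      unfold conv
      rw [Finset.mul_sum, Finset.mul_sum, ← Finset.sum_sub_distrib, ← Finset.sum_sub_distrib,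
        Finset.mul_sum]
      refine Finset.sum_le_sum fun i hi => ?_
      have hi : i ≤ n := by simpa [Nat.lt_succ_iff] using hi
      have a1 := ih (n - i)
      have a2 := esym_ge f l (d (s + N)) hl0 (hd0 _) (P (s + N)) (fun p _ => hf p)
        (hd _ (by omega)) (hl _ (by omega)) i
      have a3 := famSum_nonneg (P := P) (κ := κ) hf s N 0 (n - i)
      have a4 := esym_nonneg f (P (s + N)) (fun p _ => hf p) i
      rw [← ht] at a2
      have b1 : 0 ≤ errSeq W (n - i) := errSeq_nonneg _ hW0 _
      have b2 : 0 ≤ errSeq invFact i := errSeq_nonneg _ invFact_nonneg _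
      have b3 := invFact_nonneg i
      have b4 := hW0 (n - i)
      rw [show l ^ n = l ^ (n - i) * l ^ i by rw [← pow_add]; congr 1; omega]
      have c1 : 0 < l ^ (n - i) := by positivity
      have c2 : 0 < l ^ i := by positivity
      generalize l ^ (n - i) = x1 at *
      generalize l ^ i = x2 at *
      generalize W (n - i) = u at *
      generalize invFact i = v at *
      have hu' : 0 ≤ E * errSeq W (n - i) := by positivity
      have hv' : 0 ≤ t * errSeq invFact i := by positivity
      have main : x1 * x2 * (u * v - E * errSeq W (n - i) * v - u * (t * errSeq invFact i)) ≤
          famSum P κ f s N 0 (n - i) * esym f (P (s + N)) i := by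
        generalize E * errSeq W (n - i) = u' at *
        generalize t * errSeq invFact i = v' at *
        have c12 := mul_pos c1 c2
        by_cases hu : u' ≤ u
        · by_cases hv : v' ≤ v
          · calc x1 * x2 * (u * v - u' * v - u * v') ≤ x1 * x2 * ((u - u') * (v - v')) := by
                  apply mul_le_mul_of_nonneg_left _ c12.le
                  nlinarith [mul_nonneg hu' hv']
              _ = (x1 * (u - u')) * (x2 * (v - v')) := by ring
              _ ≤ _ := mul_le_mul a1 a2 (mul_nonneg c2.le (by linarith)) a3
          · push Not at hv
            refine le_trans ?_ (mul_nonneg a3 a4)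
            apply mul_nonpos_of_nonneg_of_nonpos c12.le
            nlinarith [mul_nonneg hu' b3]
        · push Not at hu
          refine le_trans ?_ (mul_nonneg a3 a4)
          apply mul_nonpos_of_nonneg_of_nonpos c12.le
          nlinarith [mul_nonneg b4 hv']
      calc _ = x1 * x2 * (u * v - E * errSeq W (n - i) * v - u * (t * errSeq invFact i)) := by ring
        _ ≤ _ := main
    have hX : errSeq (conv W invFact) n ≤ errSeq (parkW 0 (N + 1)) n := by
      refine errSeq_mono_at fun k hk => ?_
      rw [parkW_succ, if_pos (by omega)]
    rw [conv_errSeq_left, conv_errSeq_right] at key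
    refine le_trans ?_ key
    rw [parkW_succ, if_pos hn, Finset.sum_range_succ, ← hE, ← ht]
    have c2 : 0 < l ^ n := by positivity
    apply mul_le_mul_of_nonneg_left _ c2.le
    nlinarith [mul_le_mul_of_nonneg_left hX hE0, mul_le_mul_of_nonneg_left hX ht0]

end

/-! ### Mertens estimates and the blocks of primes -/

/-- The sum of the reciprocals of the primes up to `n`. -/
noncomputable def hS (n : ℕ) : ℝ := ∑ k ∈ Finset.range (n + 1), if k.Prime then (1 : ℝ) / k else 0

/-- The sum of `log p / p` over the primes `p` up to `n`. -/
noncomputable def aS (n : ℕ) : ℝ :=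
  ∑ k ∈ Finset.range (n + 1), if k.Prime then Real.log k / k else 0

lemma log_factorial_eq (n : ℕ) : Real.log (n.factorial : ℕ) =
    ∑ k ∈ Finset.range (n + 1), if k.Prime then (n.factorial.factorization k : ℝ) * Real.log k else 0 := by
  rw [Real.log_nat_eq_sum_factorization, Finsupp.sum_of_support_subset (s := Nat.primesLE n)]
  · rw [Nat.primesLE_eq_filter_range, Finset.sum_filter]
  · intro p hp
    have hp1 : p.Prime := Nat.prime_of_mem_primeFactors hp
    have hp2 : p ∣ n.factorial := Nat.dvd_of_mem_primeFactors hp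
    exact Nat.mem_primesLE.2 ⟨(hp1.dvd_factorial).1 hp2, hp1⟩
  · intros; simp

lemma theta_nat_eq (n : ℕ) : Chebyshev.theta n =
    ∑ k ∈ Finset.range (n + 1), if k.Prime then Real.log k else 0 := by
  rw [Chebyshev.theta_eq_sum_primesLE_log, Nat.primesLE_eq_filter_range, Finset.sum_filter]

lemma aS_le {n : ℕ} (hn : 1 ≤ n) : aS n ≤ Real.log n + Real.log 4 := by
  have hn0 : (0 : ℝ) < n := by exact_mod_cast hn
  have h1 : n * aS n - Chebyshev.theta n ≤ Real.log (n.factorial : ℕ) := by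
    rw [log_factorial_eq, theta_nat_eq, aS, Finset.mul_sum, ← Finset.sum_sub_distrib]
    refine Finset.sum_le_sum fun k _ => ?_
    split_ifs with hk
    · have hk0 : (0 : ℝ) < k := by exact_mod_cast hk.pos
      have h2 : n / k ≤ n.factorial.factorization k := by
        rw [Nat.factorization_factorial hk (b := Nat.log k n + 2) (by omega)]
        calc n / k = n / k ^ 1 := by simp
          _ ≤ _ := Finset.single_le_sum (f := fun i => n / k ^ i) (fun _ _ => Nat.zero_le _)
            (Finset.mem_Ico.2 ⟨le_rfl, by omega⟩)
      have h3 : (n : ℝ) / k - 1 ≤ n.factorial.factorization k := by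
        have h4 : (n : ℝ) / k < (n / k : ℕ) + 1 := by
          rw [div_lt_iff₀ hk0]
          exact_mod_cast Nat.lt_mul_of_div_lt (Nat.lt_succ_self _) hk.pos
        have h5 : ((n / k : ℕ) : ℝ) ≤ n.factorial.factorization k := by exact_mod_cast h2
        linarith
      have h6 : 0 ≤ Real.log k := Real.log_natCast_nonneg k
      calc n * (Real.log k / k) - Real.log k = ((n : ℝ) / k - 1) * Real.log k := by ring
        _ ≤ _ := mul_le_mul_of_nonneg_right h3 h6
    · simp
  have h2 : Real.log (n.factorial : ℕ) ≤ n * Real.log n := by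
    rw [← Real.log_pow]
    apply Real.log_le_log (by exact_mod_cast n.factorial_pos)
    exact_mod_cast Nat.factorial_le_pow n
  have h3 := Chebyshev.theta_le_log4_mul_x hn0.le
  have h4 : n * aS n ≤ n * (Real.log n + Real.log 4) := by linarith
  exact le_of_mul_le_mul_left h4 hn0

lemma aS_nonneg (n : ℕ) : 0 ≤ aS n := Finset.sum_nonneg fun k _ => by
  split_ifs
  · exact div_nonneg (Real.log_natCast_nonneg k) (Nat.cast_nonneg _)
  · exact le_rfl

/-- The lower bound in Mertens' first theorem. -/
lemma exists_aS_ge : ∃ C : ℝ, 0 ≤ C ∧ ∀ n : ℕ, 1 ≤ n → Real.log n - C ≤ aS n := by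
  have hs : Summable fun k : ℕ => 4 * (1 / (k : ℝ) ^ (3 / 2 : ℝ)) :=
    (Real.summable_one_div_nat_rpow.2 (by norm_num)).mul_left 4
  refine ⟨1 + ∑' k : ℕ, 4 * (1 / (k : ℝ) ^ (3 / 2 : ℝ)), by positivity, fun n hn => ?_⟩
  have hn0 : (0 : ℝ) < n := by exact_mod_cast hn
  have h1 : n * Real.log n - n ≤ Real.log (n.factorial : ℕ) := by
    have := Stirling.le_log_factorial_stirling (n := n) (by omega)
    have h2 : 0 ≤ Real.log n := Real.log_natCast_nonneg n
    have h3 : 0 ≤ Real.log (2 * Real.pi) := Real.log_nonneg (by linarith [Real.pi_gt_three])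
    linarith
  have h2 : Real.log (n.factorial : ℕ) ≤ n * (aS n +
      ∑ k ∈ Finset.range (n + 1), 4 * (1 / (k : ℝ) ^ (3 / 2 : ℝ))) := by
    rw [log_factorial_eq, aS, ← Finset.sum_add_distrib, Finset.mul_sum]
    refine Finset.sum_le_sum fun k _ => ?_
    split_ifs with hk
    · have hk2 : (2 : ℝ) ≤ k := by exact_mod_cast hk.two_le
      have hk0 : (0 : ℝ) < k := by linarith
      have hk1 : (0 : ℝ) < k - 1 := by linarith
      have h3 : (n.factorial.factorization k : ℝ) ≤ n / ((k : ℝ) - 1) := by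
        have h4 := Nat.factorization_factorial_le_div_pred hk n
        have h5 : ((n / (k - 1) : ℕ) : ℝ) ≤ (n : ℝ) / ((k - 1 : ℕ) : ℝ) := Nat.cast_div_le
        rw [Nat.cast_sub hk.one_le, Nat.cast_one] at h5
        exact (by exact_mod_cast h4 : (n.factorial.factorization k : ℝ) ≤ _).trans h5
      have h6 : 0 ≤ Real.log k := Real.log_natCast_nonneg k
      have h7 : Real.log k ≤ 2 * (k : ℝ) ^ (1 / 2 : ℝ) := by
        have := Real.log_le_rpow_div hk0.le (show (0 : ℝ) < 1 / 2 by norm_num)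
        linarith
      have h8 : (k : ℝ) ^ (1 / 2 : ℝ) = k ^ 2 * (1 / (k : ℝ) ^ (3 / 2 : ℝ)) := by
        rw [one_div ((k : ℝ) ^ (3 / 2 : ℝ)), ← Real.rpow_neg hk0.le, ← Real.rpow_natCast,
          ← Real.rpow_add hk0]
        norm_num
      set u := 1 / (k : ℝ) ^ (3 / 2 : ℝ)
      have hu : 0 ≤ u := by positivity
      calc (n.factorial.factorization k : ℝ) * Real.log k ≤ n / ((k : ℝ) - 1) * Real.log k :=
            mul_le_mul_of_nonneg_right h3 h6
        _ = n * (Real.log k / k + Real.log k / (k * (k - 1))) := by field_simp; ring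
        _ ≤ n * (Real.log k / k + 4 * u) := by
          apply mul_le_mul_of_nonneg_left _ hn0.le
          gcongr
          rw [div_le_iff₀ (by positivity)]
          rw [h8] at h7
          have : (k : ℝ) ^ 2 ≤ 2 * (k * (k - 1)) := by nlinarith
          nlinarith [mul_le_mul_of_nonneg_left this hu]
    · positivity
  have h3 : ∑ k ∈ Finset.range (n + 1), 4 * (1 / (k : ℝ) ^ (3 / 2 : ℝ)) ≤
      ∑' k : ℕ, 4 * (1 / (k : ℝ) ^ (3 / 2 : ℝ)) :=
    hs.sum_le_tsum _ (fun k _ => by positivity)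
  have h4 : n * (Real.log n - 1) ≤ n * (aS n + ∑' k : ℕ, 4 * (1 / (k : ℝ) ^ (3 / 2 : ℝ))) := by
    nlinarith
  have := le_of_mul_le_mul_left h4 hn0
  linarith

/-- Mertens' second theorem, up to a bounded error. -/
lemma exists_mertens : ∃ C : ℝ, 1 ≤ C ∧ ∀ n : ℕ, 2 ≤ n →
    Real.log (Real.log n) - C ≤ hS n ∧ hS n ≤ Real.log (Real.log n) + C := by
  obtain ⟨C₀, hC₀, hlow⟩ := exists_aS_ge
  have h2pos : 0 < Real.log 2 := Real.log_pos (by norm_num)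
  have hφ : ∀ n : ℕ, 2 ≤ n →
      Real.log (Real.log n) - Real.log (Real.log 2) - (1 + C₀) * (1 / Real.log 2 - 1 / Real.log n)
        ≤ hS n - aS n / Real.log n ∧
      hS n - aS n / Real.log n ≤ Real.log (Real.log n) - Real.log (Real.log 2)
        + Real.log 4 * (1 / Real.log 2 - 1 / Real.log n) := by
    intro n hn
    induction n, hn using Nat.le_induction with
    | base =>
      have e1 : hS 2 = 1 / 2 := by
        norm_num [hS, Finset.sum_range_succ, Nat.prime_two]
      have e2 : aS 2 = Real.log 2 / 2 := by
        simp [aS, Finset.sum_range_succ, Nat.prime_two]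
      rw [e1, e2]
      have : (1 : ℝ) / 2 - Real.log 2 / 2 / Real.log 2 = 0 := by field_simp; norm_num
      push_cast
      rw [this]; simp
    | succ n hn ih =>
      have hn2 : (2 : ℝ) ≤ n := by exact_mod_cast hn
      set L := Real.log n with hL
      set L' := Real.log ((n + 1 : ℕ) : ℝ) with hL'
      have hLpos : 0 < L := Real.log_pos (by linarith)
      have hLL' : L < L' := Real.log_lt_log (by linarith) (by push_cast; linarith)
      have hL'pos : 0 < L' := hLpos.trans hLL'
      have hstep : hS (n + 1) - aS (n + 1) / L' = hS n - aS n / L + aS n * (1 / L - 1 / L') := by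
        have e1 : hS (n + 1) = hS n + if (n + 1).Prime then (1 : ℝ) / (n + 1 : ℕ) else 0 := by
          unfold hS; rw [Finset.sum_range_succ]
        have e2 : aS (n + 1) = aS n + if (n + 1).Prime then L' / (n + 1 : ℕ) else 0 := by
          unfold aS; rw [Finset.sum_range_succ]
        rw [e1, e2]
        have : (0 : ℝ) < ((n + 1 : ℕ) : ℝ) := by positivity
        split_ifs
        · field_simp; ring
        · field_simp; ring
      have hD : 0 < 1 / L - 1 / L' := sub_pos.2 (one_div_lt_one_div_of_lt hLpos hLL')
      have hdiff : L' - L ≤ 1 := by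
        have : L' = L + Real.log ((n + 1 : ℕ) / n) := by
          rw [Real.log_div (by positivity) (by positivity)]; ring
        have h3 := Real.log_le_sub_one_of_pos (show (0 : ℝ) < (n + 1 : ℕ) / n by positivity)
        have h4 : ((n + 1 : ℕ) : ℝ) / n - 1 = 1 / n := by push_cast; field_simp; ring
        have h5 : (1 : ℝ) / n ≤ 1 := by rw [div_le_one (by linarith)]; linarith
        linarith
      have hq : Real.log L' - Real.log L = Real.log (L' / L) := by
        rw [Real.log_div hL'pos.ne' hLpos.ne']
      have hup : Real.log L' - Real.log L ≤ L * (1 / L - 1 / L') + (1 / L - 1 / L') := by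
        rw [hq]
        have := Real.log_le_sub_one_of_pos (show 0 < L' / L by positivity)
        have e : L' / L - 1 = L * (1 / L - 1 / L') + (L' - L) * (1 / L - 1 / L') := by
          field_simp; ring
        nlinarith
      have hlo : L * (1 / L - 1 / L') ≤ Real.log L' - Real.log L := by
        have := Real.log_le_sub_one_of_pos (show 0 < L / L' by positivity)
        rw [Real.log_div hLpos.ne' hL'pos.ne'] at this
        have e : L * (1 / L - 1 / L') = 1 - L / L' := by field_simp
        linarith
      have a1 := aS_le (n := n) (by omega)
      have a2 := hlow n (by omega)
      rw [hstep]
      constructor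
      · nlinarith [mul_le_mul_of_nonneg_right a2 hD.le]
      · nlinarith [mul_le_mul_of_nonneg_right a1 hD.le]
  refine ⟨(1 + C₀) / Real.log 2 + 6 + |Real.log (Real.log 2)|, ?_, fun n hn => ?_⟩
  · have : 0 ≤ (1 + C₀) / Real.log 2 := by positivity
    have := abs_nonneg (Real.log (Real.log 2))
    linarith
  obtain ⟨h1, h2⟩ := hφ n hn
  have hn2 : (2 : ℝ) ≤ n := by exact_mod_cast hn
  have hLpos : 0 < Real.log n := Real.log_pos (by linarith)
  have hL2 : Real.log 2 ≤ Real.log n := Real.log_le_log (by norm_num) hn2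
  have e4 : Real.log 4 = 2 * Real.log 2 := by
    rw [show (4 : ℝ) = 2 ^ 2 by norm_num, Real.log_pow]; norm_num
  have b1 : 0 ≤ aS n / Real.log n := div_nonneg (aS_nonneg n) hLpos.le
  have b2 : aS n / Real.log n ≤ 3 := by
    rw [div_le_iff₀ hLpos]
    have := aS_le (n := n) (by omega)
    linarith
  have b3 : 0 ≤ 1 / Real.log n := by positivity
  have b4 : Real.log 4 * (1 / Real.log 2 - 1 / Real.log n) ≤ 2 := by
    have : Real.log 4 * (1 / Real.log 2) = 2 := by rw [e4]; field_simp
    have : 0 ≤ Real.log 4 * (1 / Real.log n) := by rw [e4]; positivity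
    linarith
  have b5 : (1 + C₀) * (1 / Real.log 2 - 1 / Real.log n) ≤ (1 + C₀) / Real.log 2 := by
    rw [div_eq_mul_one_div (1 + C₀)]
    apply mul_le_mul_of_nonneg_left _ (by linarith)
    linarith
  have b6 := le_abs_self (Real.log (Real.log 2))
  have b7 := neg_abs_le (Real.log (Real.log 2))
  have b8 : 0 ≤ (1 + C₀) / Real.log 2 := by positivity
  constructor <;> linarith

lemma hS_succ (n : ℕ) : hS (n + 1) = hS n + if (n + 1).Prime then (1 : ℝ) / (n + 1 : ℕ) else 0 := by
  unfold hS; rw [Finset.sum_range_succ]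

lemma hS_mono : Monotone hS := monotone_nat_of_le_succ fun n => by
  rw [hS_succ]
  split_ifs
  · have : (0 : ℝ) ≤ (1 : ℝ) / (n + 1 : ℕ) := by positivity
    linarith
  · simp

lemma hS_nonneg (n : ℕ) : 0 ≤ hS n := Finset.sum_nonneg fun k _ => by
  split_ifs <;> positivity

lemma hS_sub_prime_le {p : ℕ} (hp : 1 ≤ p) : hS p ≤ hS (p - 1) + 1 / p := by
  obtain ⟨n, rfl⟩ : ∃ n, p = n + 1 := ⟨p - 1, by omega⟩
  rw [hS_succ, Nat.add_sub_cancel]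
  have : (0 : ℝ) ≤ (1 : ℝ) / (n + 1 : ℕ) := by positivity
  split_ifs <;> linarith

lemma hS_tendsto : Tendsto hS atTop atTop := by
  obtain ⟨C, -, hC⟩ := exists_mertens
  have h1 : Tendsto (fun n : ℕ => Real.log (Real.log n) - C) atTop atTop :=
    tendsto_atTop_add_const_right _ _
      (Real.tendsto_log_atTop.comp (Real.tendsto_log_atTop.comp tendsto_natCast_atTop_atTop))
  refine tendsto_atTop_mono' atTop ?_ h1
  filter_upwards [eventually_ge_atTop 2] with n hn using (hC n hn).1

lemma sum_prime_Ioo (a b : ℕ) : ∑ p ∈ (Finset.Ioo a b).filter Nat.Prime, (1 : ℝ) / p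
    = if a < b then hS (b - 1) - hS a else 0 := by
  split_ifs with h
  · obtain ⟨c, rfl⟩ : ∃ c, b = a + c + 1 := ⟨b - a - 1, by omega⟩
    have e : Finset.Ioo a (a + c + 1) = Finset.Ico (a + 1) (a + c + 1) := by
      ext; simp only [Finset.mem_Ioo, Finset.mem_Ico]; omega
    rw [Finset.sum_filter, e, Nat.add_sub_cancel]
    unfold hS
    rw [Finset.sum_Ico_eq_sub _ (by omega)]
  · rw [Finset.Ioo_eq_empty h]; simp

/-- A system of blocks of primes.  The block `P k` consists of primes `p` with `log p` of order
`2 ^ k`, its reciprocal sum is `log 2` up to an exponentially small error, and the primes lying in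
no block (those with `p ∉ P (κ p)`, since `κ p` is defined for every `p`) have a bounded reciprocal
sum.  The field `short` bounds the primes of a block in an interval `(z, 4 * z]`. -/
structure BlockSys (P : ℕ → Finset ℕ) (κ : ℕ → ℕ) (C : ℝ) : Prop where
  one_le : 1 ≤ C
  kappa : ∀ k, ∀ p ∈ P k, κ p = k
  prime : ∀ k, ∀ p ∈ P k, p.Prime
  sum_le : ∀ k, ∑ p ∈ P k, (1 : ℝ) / p ≤ Real.log 2
  sum_ge : ∀ k, Real.log 2 - 2 * (C / 2 ^ k) ≤ ∑ p ∈ P k, (1 : ℝ) / p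
  log_le : ∀ k, ∀ p ∈ P k, Real.log p ≤ C * 2 ^ k
  le_log : ∀ p : ℕ, p.Prime → (2 : ℝ) ^ (κ p) ≤ C * Real.log p
  inv_le : ∀ k, ∀ p ∈ P k, (1 : ℝ) / p ≤ C / 2 ^ k
  strad : ∀ x : ℕ, ∑ p ∈ (Nat.primesLE x).filter (fun p => p ∉ P (κ p)), (1 : ℝ) / p ≤ C
  short : ∀ k, ∀ z : ℝ, 0 < z →
    ∑ p ∈ (P k).filter (fun p : ℕ => z < p ∧ (p : ℝ) ≤ 4 * z), (1 : ℝ) / p ≤ C / 2 ^ k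

/-- The blocks cut the partial sums of `∑ 1 / p` at the multiples of `log 2`.  The primes at which
such a multiple is crossed are left out, so that each block sum is at most `log 2`. -/
lemma exists_blockSys : ∃ P κ C, BlockSys P κ C := by
  obtain ⟨C, hC1, hC⟩ := exists_mertens
  set l := Real.log 2 with hl
  have hl0 : 0 < l := Real.log_pos (by norm_num)
  have hl4 : Real.log 4 = 2 * l := by
    rw [show (4 : ℝ) = 2 ^ 2 by norm_num, Real.log_pow]; norm_num [hl]
  have hl1 : l < 1 := by have := Real.log_two_lt_d9; linarith
  have hexN : ∀ k : ℕ, ∃ n, k * l ≤ hS n := fun k => (hS_tendsto.eventually_ge_atTop _).exists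
  have hexM : ∀ k : ℕ, ∃ n, ((k : ℝ) + 1) * l < hS n := fun k => (hS_tendsto.eventually_gt_atTop _).exists
  set N : ℕ → ℕ := fun k => Nat.find (hexN k) with hN
  set M : ℕ → ℕ := fun k => Nat.find (hexM k) with hM
  have hN1 : ∀ k : ℕ, k * l ≤ hS (N k) := fun k => Nat.find_spec (hexN k)
  have hM1 : ∀ k : ℕ, ((k : ℝ) + 1) * l < hS (M k) := fun k => Nat.find_spec (hexM k)
  have hN2 : ∀ k n : ℕ, n < N k → hS n < k * l := fun k n h => not_le.1 (Nat.find_min (hexN k) h)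
  have hM2 : ∀ k n : ℕ, n < M k → hS n ≤ ((k : ℝ) + 1) * l := fun k n h =>
    not_lt.1 (Nat.find_min (hexM k) h)
  have hN3 : ∀ k n : ℕ, k * l ≤ hS n → N k ≤ n := fun k n h => Nat.find_min' (hexN k) h
  -- `N k` and `M k` are the first points where the partial sums reach `k * l`, exceed `(k + 1) * l`
  set P : ℕ → Finset ℕ := fun k => (Finset.Ioo (N k) (M k)).filter Nat.Prime with hP
  set κ : ℕ → ℕ := fun p => ⌊hS (p - 1) / l⌋₊ with hκ
  set E := Real.exp C with hE
  have hE1 : 1 ≤ E := Real.one_le_exp (by linarith)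
  have hpow : ∀ k : ℕ, Real.exp (k * l) = 2 ^ k := fun k => by
    rw [Real.exp_nat_mul, hl, Real.exp_log (by norm_num)]
  have hlogpos : ∀ p : ℕ, 2 ≤ p → 0 < Real.log p := fun p hp =>
    Real.log_pos (by exact_mod_cast hp)
  have hexp_le : ∀ p : ℕ, 2 ≤ p → Real.exp (hS p) ≤ E * Real.log p := fun p hp => by
    calc Real.exp (hS p) ≤ Real.exp (C + Real.log (Real.log p)) :=
          Real.exp_le_exp.2 (by linarith [(hC p hp).2])
      _ = _ := by rw [Real.exp_add, Real.exp_log (hlogpos p hp)]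
  have hle_exp : ∀ p : ℕ, 2 ≤ p → Real.log p ≤ E * Real.exp (hS p) := fun p hp => by
    rw [hE, ← Real.exp_add]
    calc Real.log p = Real.exp (Real.log (Real.log p)) := (Real.exp_log (hlogpos p hp)).symm
      _ ≤ _ := Real.exp_le_exp.2 (by linarith [(hC p hp).1])
  have hinv : ∀ k p : ℕ, 1 ≤ p → (k : ℝ) * l ≤ hS p → (1 : ℝ) / p ≤ E / 2 ^ k := fun k p hp h => by
    rcases Nat.lt_or_ge p 2 with h2 | h2
    · have : p = 1 := by omega
      subst this
      have h0 : hS 1 = 0 := by norm_num [hS, Finset.sum_range_succ]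
      rw [h0] at h
      have hk : (k : ℝ) ≤ 0 := by
        by_contra hk
        push Not at hk
        nlinarith
      have hk : k = 0 := Nat.le_zero.1 (by exact_mod_cast hk)
      subst hk
      simpa using hE1
    · have h3 : (2 : ℝ) ^ k ≤ E * Real.log p := by
        rw [← hpow]
        exact (Real.exp_le_exp.2 h).trans (hexp_le p h2)
      have h4 : Real.log p ≤ p := (Real.log_le_sub_one_of_pos (by positivity)).trans (by linarith)
      rw [div_le_div_iff₀ (by positivity) (by positivity), one_mul]
      exact h3.trans (mul_le_mul_of_nonneg_left h4 (by linarith))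
  have hM0 : ∀ k, 1 ≤ M k := fun k => by
    by_contra h
    have h0 : M k = 0 := by omega
    have h1 := hM1 k
    have h2 : hS 0 = 0 := by norm_num [hS, Finset.sum_range_succ]
    rw [h0, h2] at h1
    have : 0 ≤ ((k : ℝ) + 1) * l := by positivity
    linarith
  have hmemP : ∀ k p, p ∈ P k → p.Prime ∧ k * l ≤ hS (p - 1) ∧ hS p ≤ ((k : ℝ) + 1) * l := by
    intro k p hp
    simp only [hP, Finset.mem_filter, Finset.mem_Ioo] at hp
    obtain ⟨⟨h1, h2⟩, h3⟩ := hp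
    exact ⟨h3, (hN1 k).trans (hS_mono (by omega)), hM2 k p h2⟩
  have hlt_prime : ∀ p : ℕ, p.Prime → hS (p - 1) < hS p := fun p hp => by
    obtain ⟨n, rfl⟩ : ∃ n, p = n + 1 := ⟨p - 1, by have := hp.one_le; omega⟩
    rw [hS_succ, if_pos hp, Nat.add_sub_cancel]
    have : (0 : ℝ) < (1 : ℝ) / (n + 1 : ℕ) := by positivity
    linarith
  have hkap : ∀ k, ∀ p ∈ P k, κ p = k := by
    intro k p hp
    obtain ⟨h1, h2, h3⟩ := hmemP k p hp
    have h4 := hlt_prime p h1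
    simp only [hκ]
    rw [Nat.floor_eq_iff (div_nonneg (hS_nonneg _) hl0.le)]
    exact ⟨by rwa [le_div_iff₀ hl0], by rw [div_lt_iff₀ hl0]; linarith⟩
  have hkl : ∀ p : ℕ, (κ p : ℝ) * l ≤ hS (p - 1) := fun p => by
    rw [← le_div_iff₀ hl0]
    exact Nat.floor_le (div_nonneg (hS_nonneg _) hl0.le)
  have hle_log : ∀ p : ℕ, p.Prime → (2 : ℝ) ^ (κ p) ≤ E * Real.log p := fun p hp => by
    rw [← hpow]
    exact (Real.exp_le_exp.2 ((hkl p).trans (hS_mono (Nat.sub_le _ _)))).trans (hexp_le p hp.two_le)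
  -- a prime outside of its block is the prime at which the partial sums cross the upper end
  have hstrad : ∀ p : ℕ, p.Prime → p ∉ P (κ p) → p = M (κ p) := by
    intro p hp hnot
    have h1 : N (κ p) ≤ p - 1 := hN3 _ _ (hkl p)
    have hp1 := hp.one_le
    have h2 : M (κ p) ≤ p := by
      by_contra h
      apply hnot
      simp only [hP, Finset.mem_filter, Finset.mem_Ioo]
      exact ⟨⟨by omega, by omega⟩, hp⟩
    have h3 : hS (p - 1) < ((κ p : ℝ) + 1) * l := by
      rw [← div_lt_iff₀ hl0]
      exact Nat.lt_floor_add_one _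
    have h4 : p - 1 < M (κ p) := by
      by_contra h
      have := hM1 (κ p)
      have := hS_mono (not_lt.1 h)
      linarith
    omega
  refine ⟨P, κ, 16 * E, ?_⟩
  have hEE : ∀ k : ℕ, E / 2 ^ k ≤ 16 * E / 2 ^ k := fun k => by
    gcongr; linarith
  refine ⟨by linarith, hkap, fun k p hp => (hmemP k p hp).1, ?_, ?_, ?_, ?_, ?_, ?_, ?_⟩
  · intro k
    simp only [hP]
    rw [sum_prime_Ioo]
    split_ifs with h
    · have h1 := hN1 k
      have h2 := hM2 k (M k - 1) (by have := hM0 k; omega)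
      linarith
    · exact hl0.le
  · intro k
    have h1 : ((k : ℝ) + 1) * l - E / 2 ^ k ≤ hS (M k - 1) := by
      have h2 := hS_sub_prime_le (hM0 k)
      have h3 := hinv k (M k) (hM0 k) (by have := hM1 k; nlinarith)
      linarith [hM1 k]
    have h2 : hS (N k) ≤ k * l + E / 2 ^ k := by
      rcases Nat.eq_zero_or_pos (N k) with h0 | h0
      · have e0 : hS 0 = 0 := by norm_num [hS, Finset.sum_range_succ]
        rw [h0, e0]; positivity
      · have h2 := hS_sub_prime_le h0
        have h3 := hinv k (N k) h0 (hN1 k)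
        linarith [hN2 k (N k - 1) (by omega)]
    have h3 : hS (M k - 1) - hS (N k) ≤ ∑ p ∈ P k, (1 : ℝ) / p := by
      simp only [hP]
      rw [sum_prime_Ioo]
      split_ifs with h
      · exact le_rfl
      · have := hS_mono (show M k - 1 ≤ N k by omega)
        linarith
    have := hEE k
    have e : 2 * (16 * E / 2 ^ k) = 32 * (E / 2 ^ k) := by ring
    have : 0 ≤ E / 2 ^ k := by positivity
    rw [e]
    linarith
  · intro k p hp
    obtain ⟨h1, h2, h3⟩ := hmemP k p hp
    refine (hle_exp p h1.two_le).trans ?_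
    have h4 : Real.exp (hS p) ≤ 2 ^ (k + 1) := by
      rw [← hpow]; apply Real.exp_le_exp.2; push_cast; exact h3
    have h5 : (0 : ℝ) < 2 ^ k := by positivity
    rw [pow_succ] at h4
    nlinarith [mul_le_mul_of_nonneg_left h4 (by linarith : 0 ≤ E)]
  · intro p hp
    refine (hle_log p hp).trans ?_
    have := hlogpos p hp.two_le
    nlinarith
  · intro k p hp
    obtain ⟨h1, h2, h3⟩ := hmemP k p hp
    exact (hinv k p h1.one_le (h2.trans (hS_mono (Nat.sub_le _ _)))).trans (hEE k)
  · intro x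
    set S := (Nat.primesLE x).filter (fun p => p ∉ P (κ p)) with hS'
    have hS1 : ∀ p ∈ S, p.Prime ∧ p ∉ P (κ p) := fun p hp => by
      rw [hS', Finset.mem_filter] at hp
      exact ⟨Nat.prime_of_mem_primesLE hp.1, hp.2⟩
    have hinj : Set.InjOn κ S := fun p hp q hq h => by
      have h1 := hstrad p (hS1 p hp).1 (hS1 p hp).2
      have h2 := hstrad q (hS1 q hq).1 (hS1 q hq).2
      rw [h1, h2, h]
    calc ∑ p ∈ S, (1 : ℝ) / p ≤ ∑ p ∈ S, E * (1 / 2) ^ (κ p) := by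
          refine Finset.sum_le_sum fun p hp => ?_
          have h1 := hS1 p hp
          have h2 := hinv (κ p) p h1.1.one_le ((hkl p).trans (hS_mono (Nat.sub_le _ _)))
          rwa [div_pow, one_pow, mul_one_div]
      _ = E * ∑ k ∈ S.image κ, (1 / 2 : ℝ) ^ k := by
          rw [← Finset.mul_sum, Finset.sum_image hinj]
      _ ≤ E * 2 := by
          apply mul_le_mul_of_nonneg_left _ (by linarith)
          exact (summable_geometric_two.sum_le_tsum _ (fun k _ => by positivity)).trans_eq
            tsum_geometric_two
      _ ≤ _ := by linarith
  · intro k z hz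
    set S := (P k).filter (fun p : ℕ => z < p ∧ (p : ℝ) ≤ 4 * z) with hS'
    have hS1 : ∀ p ∈ S, p.Prime ∧ p ∈ P k ∧ z < p ∧ (p : ℝ) ≤ 4 * z := fun p hp => by
      rw [hS', Finset.mem_filter] at hp
      exact ⟨(hmemP k p hp.1).1, hp⟩
    have h1 : ∑ p ∈ S, Real.log p ≤ Real.log 4 * (4 * z) := by
      refine le_trans ?_ (Chebyshev.theta_le_log4_mul_x (by positivity))
      rw [Chebyshev.theta_eq_sum_primesLE]
      refine Finset.sum_le_sum_of_subset_of_nonneg (fun p hp => ?_)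
        (fun p _ _ => Real.log_natCast_nonneg p)
      rw [Nat.mem_primesLE]
      exact ⟨Nat.le_floor (hS1 p hp).2.2.2, (hS1 p hp).1⟩
    calc ∑ p ∈ S, (1 : ℝ) / p ≤ ∑ p ∈ S, (E / 2 ^ k / z) * Real.log p := by
          refine Finset.sum_le_sum fun p hp => ?_
          obtain ⟨hp1, hp2, hp3, hp4⟩ := hS1 p hp
          have h2 := hle_log p hp1
          rw [hkap k p hp2] at h2
          have h3 : 1 ≤ E / 2 ^ k * Real.log p := by
            rw [div_mul_eq_mul_div, le_div_iff₀ (by positivity), one_mul]; exact h2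
          calc (1 : ℝ) / p ≤ 1 / z := one_div_le_one_div_of_le hz hp3.le
            _ ≤ (E / 2 ^ k * Real.log p) / z := by gcongr
            _ = _ := by ring
      _ = (E / 2 ^ k / z) * ∑ p ∈ S, Real.log p := by rw [Finset.mul_sum]
      _ ≤ (E / 2 ^ k / z) * (Real.log 4 * (4 * z)) := by gcongr
      _ = (8 * l) * (E / 2 ^ k) := by rw [hl4]; field_simp; ring
      _ ≤ 16 * (E / 2 ^ k) := by gcongr; linarith
      _ = _ := by ring

/-! ### From the mean value to the logarithmic mean value -/

/-- The number of `k` such that `n` has a divisor in `[2 ^ k, 2 ^ (k + 1))`. -/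
noncomputable def Lf (n : ℕ) : ℕ := (n.divisors.image (Nat.log 2)).card

lemma Lf_pos {n : ℕ} (hn : n ≠ 0) : 1 ≤ Lf n :=
  Finset.card_pos.2 ((Nat.nonempty_divisors.2 hn).image _)

lemma tauPlus_le_Lf (n : ℕ) : tauPlus n ≤ 2 * Lf n := by
  rcases Nat.eq_zero_or_pos n with rfl | hn
  · simp [tauPlus]
  set S := n.divisors.image (Nat.log 2) with hS
  have hsub : (Finset.range n).filter (fun k => ∃ d, d ∣ n ∧ 2 ^ k < d ∧ d ≤ 2 ^ (k + 1))
      ⊆ S ∪ S.image (fun j => j - 1) := by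
    intro k hk
    simp only [Finset.mem_filter] at hk
    obtain ⟨-, d, hd, h1, h2⟩ := hk
    have hdS : Nat.log 2 d ∈ S := Finset.mem_image_of_mem _ (Nat.mem_divisors.2 ⟨hd, hn.ne'⟩)
    rw [Finset.mem_union]
    rcases h2.lt_or_eq with h2 | h2
    · left
      rwa [Nat.log_eq_of_pow_le_of_lt_pow h1.le h2] at hdS
    · right
      rw [h2, Nat.log_pow (by norm_num)] at hdS
      exact Finset.mem_image.2 ⟨k + 1, hdS, by simp⟩
  calc tauPlus n ≤ (S ∪ S.image (fun j => j - 1)).card := Finset.card_le_card hsub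
    _ ≤ S.card + (S.image (fun j => j - 1)).card := Finset.card_union_le _ _
    _ ≤ S.card + S.card := Nat.add_le_add_left Finset.card_image_le _
    _ = 2 * Lf n := by rw [Lf, two_mul]

lemma log_mul_cases {a b : ℕ} (ha : a ≠ 0) (hb : b ≠ 0) :
    Nat.log 2 (a * b) = Nat.log 2 a + Nat.log 2 b ∨
    Nat.log 2 (a * b) = Nat.log 2 a + Nat.log 2 b + 1 := by
  have a1 := Nat.pow_log_le_self 2 ha
  have b1 := Nat.pow_log_le_self 2 hb
  have a2 := Nat.lt_pow_succ_log_self (b := 2) (by norm_num) a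
  have b2 := Nat.lt_pow_succ_log_self (b := 2) (by norm_num) b
  have h1 : Nat.log 2 a + Nat.log 2 b ≤ Nat.log 2 (a * b) := by
    apply Nat.le_log_of_pow_le (by norm_num)
    rw [pow_add]; exact Nat.mul_le_mul a1 b1
  have h2 : Nat.log 2 (a * b) < Nat.log 2 a + Nat.log 2 b + 2 := by
    apply Nat.log_lt_of_lt_pow (mul_ne_zero ha hb)
    calc a * b < 2 ^ (Nat.log 2 a + 1) * 2 ^ (Nat.log 2 b + 1) := Nat.mul_lt_mul'' a2 b2
      _ = _ := by rw [← pow_add]; congr 1; omega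
  omega

/-- Every divisor of `a * b` is a divisor of `a` times one of `b`, and multiplication by a fixed
integer moves a dyadic interval into two adjacent ones. -/
lemma Lf_mul_le (a b : ℕ) : Lf (a * b) ≤ 2 * b.divisors.card * Lf a := by
  rcases Nat.eq_zero_or_pos a with rfl | ha
  · simp [Lf]
  rcases Nat.eq_zero_or_pos b with rfl | hb
  · simp [Lf]
  have hsub : (a * b).divisors.image (Nat.log 2) ⊆
      ((a.divisors.image (Nat.log 2)) ×ˢ (b.divisors ×ˢ Finset.range 2)).image
        (fun t => t.1 + Nat.log 2 t.2.1 + t.2.2) := by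
    intro k hk
    rw [Finset.mem_image] at hk
    obtain ⟨d, hd, rfl⟩ := hk
    obtain ⟨d1, d2, h1, h2, rfl⟩ := (Nat.dvd_mul).1 (Nat.dvd_of_mem_divisors hd)
    have e1 : d1 ≠ 0 := fun h => by subst h; simp at h1; omega
    have e2 : d2 ≠ 0 := fun h => by subst h; simp at h2; omega
    have m1 : Nat.log 2 d1 ∈ a.divisors.image (Nat.log 2) :=
      Finset.mem_image_of_mem _ (Nat.mem_divisors.2 ⟨h1, ha.ne'⟩)
    have m2 : d2 ∈ b.divisors := Nat.mem_divisors.2 ⟨h2, hb.ne'⟩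
    rw [Finset.mem_image]
    rcases log_mul_cases e1 e2 with h | h
    · exact ⟨(Nat.log 2 d1, d2, 0), by simp only [Finset.mem_product]; exact ⟨m1, m2, by simp⟩, by simp [h]⟩
    · exact ⟨(Nat.log 2 d1, d2, 1), by simp only [Finset.mem_product]; exact ⟨m1, m2, by simp⟩, by simp [h]⟩
  calc Lf (a * b) ≤ _ := Finset.card_le_card hsub
    _ ≤ _ := Finset.card_image_le
    _ = 2 * b.divisors.card * Lf a := by
      rw [Finset.card_product, Finset.card_product, Finset.card_range, Lf]; ring

lemma Lf_le_log {n : ℕ} (hn : n ≠ 0) : Lf n ≤ Nat.log 2 n + 1 := by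
  calc Lf n ≤ (Finset.range (Nat.log 2 n + 1)).card := by
        apply Finset.card_le_card
        intro k hk
        obtain ⟨d, hd, rfl⟩ := Finset.mem_image.1 hk
        rw [Finset.mem_range, Nat.lt_succ_iff]
        exact Nat.log_mono_right (Nat.le_of_dvd (Nat.pos_of_ne_zero hn) (Nat.dvd_of_mem_divisors hd))
    _ = _ := Finset.card_range _

lemma sum_divisors_swap (F : ℕ → ℕ → ℝ) (x : ℕ) :
    ∑ n ∈ Finset.Icc 1 x, ∑ d ∈ n.divisors, F d (n / d) =
      ∑ m ∈ Finset.Icc 1 x, ∑ d ∈ Finset.Icc 1 (x / m), F d m := by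
  rw [Finset.sum_sigma', Finset.sum_sigma']
  refine Finset.sum_bij' (fun s _ => ⟨s.1 / s.2, s.2⟩) (fun s _ => ⟨s.1 * s.2, s.2⟩) ?_ ?_ ?_ ?_ ?_
  · rintro ⟨n, d⟩ h
    simp only [Finset.mem_sigma, Finset.mem_Icc, Nat.mem_divisors] at h ⊢
    obtain ⟨⟨h1, h2⟩, ⟨m, rfl⟩, h4⟩ := h
    have hd : 0 < d := Nat.pos_of_ne_zero (fun h => by simp [h] at h4)
    have hm : 0 < m := Nat.pos_of_ne_zero (fun h => by simp [h] at h4)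
    rw [Nat.mul_div_cancel_left _ hd]
    exact ⟨⟨hm, by nlinarith⟩, hd, by rw [Nat.le_div_iff_mul_le hm]; exact h2⟩
  · rintro ⟨m, d⟩ h
    simp only [Finset.mem_sigma, Finset.mem_Icc, Nat.mem_divisors] at h ⊢
    obtain ⟨⟨h1, h2⟩, h3, h4⟩ := h
    rw [Nat.le_div_iff_mul_le h1] at h4
    refine ⟨⟨Nat.mul_pos h1 h3, by linarith⟩, Dvd.intro_left _ rfl, ?_⟩
    positivity
  · rintro ⟨n, d⟩ h
    simp only [Finset.mem_sigma, Finset.mem_Icc, Nat.mem_divisors] at h ⊢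
    simp [Nat.div_mul_cancel h.2.1]
  · rintro ⟨m, d⟩ h
    simp only [Finset.mem_sigma, Finset.mem_Icc] at h ⊢
    simp [Nat.mul_div_cancel _ (show 0 < d by omega)]
  · rintro ⟨n, d⟩ h; rfl

lemma log_le_four_rpow {y : ℝ} (hy : 0 ≤ y) : Real.log y ≤ 4 * √(√y) := by
  have := Real.log_le_rpow_div hy (show (0 : ℝ) < 1 / 4 by norm_num)
  rw [Real.sqrt_eq_rpow, Real.sqrt_eq_rpow, ← Real.rpow_mul hy]
  norm_num at this ⊢
  linarith

lemma card_divisors_primePow_le {d : ℕ} (hd : IsPrimePow d) :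
    (d.divisors.card : ℝ) ≤ Real.log d / Real.log 2 + 1 := by
  obtain ⟨p, k, hp, hk, rfl⟩ := hd
  have hp' : p.Prime := hp.nat_prime
  rw [Nat.divisors_prime_pow hp', Finset.card_map, Finset.card_range]
  push_cast
  rw [Real.log_pow]
  have h2 : 0 < Real.log 2 := Real.log_pos (by norm_num)
  have h3 : Real.log 2 ≤ Real.log p := Real.log_le_log (by norm_num) (by exact_mod_cast hp'.two_le)
  gcongr
  rw [le_div_iff₀ h2]
  gcongr

open ArithmeticFunction in
lemma exists_sum_vonMangoldt_card_le : ∃ C : ℝ, 0 ≤ C ∧ ∀ y : ℕ,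
    ∑ d ∈ Finset.Icc 1 y, vonMangoldt d * (d.divisors.card : ℝ) ≤ C * y := by
  have h2 : 0 < Real.log 2 := Real.log_pos (by norm_num)
  refine ⟨2 * Real.log 4 + (32 / Real.log 2 + 8), by
    have : 0 ≤ Real.log 4 := Real.log_nonneg (by norm_num)
    positivity, fun y => ?_⟩
  rcases Nat.eq_zero_or_pos y with rfl | hy
  · simp
  have hy1 : (1 : ℝ) ≤ y := by exact_mod_cast hy
  have hL : 0 ≤ Real.log y := Real.log_nonneg hy1
  have e1 : ∀ d ∈ Finset.Icc 1 y, vonMangoldt d * (d.divisors.card : ℝ) ≤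
      2 * (if d.Prime then Real.log d else 0) +
      (Real.log y / Real.log 2 + 1) * (if ¬ d.Prime then vonMangoldt d else 0) := by
    intro d hd
    rw [Finset.mem_Icc] at hd
    by_cases hp : d.Prime
    · rw [if_pos hp, if_neg (not_not.2 hp), vonMangoldt_apply_prime hp, hp.divisors,
        Finset.card_pair hp.one_lt.ne]
      push_cast; linarith
    · rw [if_neg hp, if_pos hp, mul_zero, zero_add, mul_comm]
      by_cases hpp : IsPrimePow d
      · apply mul_le_mul_of_nonneg_right _ vonMangoldt_nonneg
        refine (card_divisors_primePow_le hpp).trans ?_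
        have : Real.log d ≤ Real.log y :=
          Real.log_le_log (by exact_mod_cast hd.1) (by exact_mod_cast hd.2)
        gcongr
      · rw [vonMangoldt_eq_zero_iff.2 hpp]; simp
  refine (Finset.sum_le_sum e1).trans ?_
  rw [Finset.sum_add_distrib, ← Finset.mul_sum, ← Finset.mul_sum]
  have e2 : ∑ d ∈ Finset.Icc 1 y, (if d.Prime then Real.log d else 0) ≤ Real.log 4 * y := by
    refine le_trans ?_ (Chebyshev.theta_le_log4_mul_x (by linarith : (0 : ℝ) ≤ y))
    rw [theta_nat_eq]
    refine Finset.sum_le_sum_of_subset_of_nonneg (fun d hd => ?_) (fun d _ _ => ?_)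
    · simp only [Finset.mem_Icc, Finset.mem_range] at hd ⊢; omega
    · split_ifs
      · exact Real.log_natCast_nonneg d
      · exact le_rfl
  have e3 : ∑ d ∈ Finset.Icc 1 y, (if ¬ d.Prime then vonMangoldt d else 0) ≤ 2 * √y * Real.log y := by
    refine le_trans (le_of_eq ?_) (Chebyshev.psi_sub_theta_le hy1)
    rw [Chebyshev.psi_sub_theta_eq_sum_not_prime, Nat.floor_natCast, Finset.sum_filter]
    rfl
  have hlog := log_le_four_rpow (by linarith : (0 : ℝ) ≤ y)
  have hss : √(√(y : ℝ)) * √(√(y : ℝ)) = √y := Real.mul_self_sqrt (Real.sqrt_nonneg _)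
  have hs : √(y : ℝ) * √y = y := Real.mul_self_sqrt (by linarith)
  have hss0 : 0 ≤ √(√(y : ℝ)) := Real.sqrt_nonneg _
  have hs1 : 1 ≤ √(y : ℝ) := Real.one_le_sqrt.2 hy1
  have hss1 : 1 ≤ √(√(y : ℝ)) := Real.one_le_sqrt.2 hs1
  have e4 : Real.log y * Real.log y ≤ 16 * √y := by nlinarith
  have e5 : Real.log y ≤ 4 * √y := by nlinarith
  have e6 : (Real.log y / Real.log 2 + 1) * (2 * √y * Real.log y) ≤ (32 / Real.log 2 + 8) * y := by
    have a1 : 2 * √y * (Real.log y * Real.log y) ≤ 32 * y := by nlinarith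
    have a2 : 2 * √y * Real.log y ≤ 8 * y := by nlinarith
    calc _ = (2 * √y * (Real.log y * Real.log y)) / Real.log 2 + 2 * √y * Real.log y := by ring
      _ ≤ 32 * y / Real.log 2 + 8 * y := by gcongr
      _ = _ := by ring
  have e7 : (Real.log y / Real.log 2 + 1) *
      ∑ d ∈ Finset.Icc 1 y, (if ¬ d.Prime then vonMangoldt d else 0) ≤ (32 / Real.log 2 + 8) * y :=
    (mul_le_mul_of_nonneg_left e3 (by positivity)).trans e6
  linarith

open ArithmeticFunction in
/-- The mean value of `Lf` is controlled by its logarithmic mean value.  This comes from writing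
`log n` as the sum of `Λ d` over `d ∣ n` and using `Lf n ≤ 2 * τ(d) * Lf (n / d)`. -/
lemma exists_sum_Lf_le : ∃ C : ℝ, 0 ≤ C ∧ ∀ x : ℕ, 1 ≤ x →
    Real.log x * ∑ n ∈ Finset.Icc 1 x, (Lf n : ℝ) ≤ C * x * ∑ n ∈ Finset.Icc 1 x, (Lf n : ℝ) / n := by
  obtain ⟨C, hC0, hC⟩ := exists_sum_vonMangoldt_card_le
  refine ⟨2 * C + 1, by positivity, fun x hx => ?_⟩
  have h1 : ∑ n ∈ Finset.Icc 1 x, (Lf n : ℝ) * Real.log n ≤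
      2 * C * x * ∑ n ∈ Finset.Icc 1 x, (Lf n : ℝ) / n := by
    calc ∑ n ∈ Finset.Icc 1 x, (Lf n : ℝ) * Real.log n
        = ∑ n ∈ Finset.Icc 1 x, ∑ d ∈ n.divisors, vonMangoldt d * (Lf (n / d * d) : ℝ) := by
          refine Finset.sum_congr rfl fun n _ => ?_
          rw [← vonMangoldt_sum, Finset.mul_sum]
          refine Finset.sum_congr rfl fun d hd => ?_
          rw [Nat.div_mul_cancel (Nat.dvd_of_mem_divisors hd), mul_comm]
      _ = ∑ m ∈ Finset.Icc 1 x, ∑ d ∈ Finset.Icc 1 (x / m), vonMangoldt d * (Lf (m * d) : ℝ) :=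
          sum_divisors_swap (fun d m => vonMangoldt d * (Lf (m * d) : ℝ)) x
      _ ≤ ∑ m ∈ Finset.Icc 1 x, 2 * C * x * ((Lf m : ℝ) / m) := by
          refine Finset.sum_le_sum fun m hm => ?_
          have hm0 : (0 : ℝ) < m := by exact_mod_cast (Finset.mem_Icc.1 hm).1
          calc ∑ d ∈ Finset.Icc 1 (x / m), vonMangoldt d * (Lf (m * d) : ℝ)
              ≤ ∑ d ∈ Finset.Icc 1 (x / m), 2 * (Lf m : ℝ) * (vonMangoldt d * (d.divisors.card : ℝ)) := by
                refine Finset.sum_le_sum fun d _ => ?_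
                have h3 : (Lf (m * d) : ℝ) ≤ 2 * d.divisors.card * Lf m := by
                  exact_mod_cast Lf_mul_le m d
                have := mul_le_mul_of_nonneg_left h3 (vonMangoldt_nonneg (n := d))
                linarith
            _ ≤ 2 * (Lf m : ℝ) * (C * (x / m : ℕ)) := by
                rw [← Finset.mul_sum]
                exact mul_le_mul_of_nonneg_left (hC _) (by positivity)
            _ ≤ 2 * (Lf m : ℝ) * (C * ((x : ℝ) / m)) := by
                gcongr; exact Nat.cast_div_le
            _ = _ := by ring
      _ = _ := by rw [Finset.mul_sum]
  have h2 : ∑ n ∈ Finset.Icc 1 x, (Lf n : ℝ) * (Real.log x - Real.log n) ≤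
      x * ∑ n ∈ Finset.Icc 1 x, (Lf n : ℝ) / n := by
    rw [Finset.mul_sum]
    refine Finset.sum_le_sum fun n hn => ?_
    have hn0 : (0 : ℝ) < n := by exact_mod_cast (Finset.mem_Icc.1 hn).1
    have hx0 : (0 : ℝ) < x := by exact_mod_cast hx
    rw [← Real.log_div hx0.ne' hn0.ne']
    have := Real.log_le_sub_one_of_pos (show (0 : ℝ) < x / n by positivity)
    calc (Lf n : ℝ) * Real.log (x / n) ≤ Lf n * (x / n) := by gcongr; linarith
      _ = _ := by ring
  have h3 : Real.log x * ∑ n ∈ Finset.Icc 1 x, (Lf n : ℝ) =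
      ∑ n ∈ Finset.Icc 1 x, (Lf n : ℝ) * Real.log n +
      ∑ n ∈ Finset.Icc 1 x, (Lf n : ℝ) * (Real.log x - Real.log n) := by
    rw [← Finset.sum_add_distrib, Finset.mul_sum]
    exact Finset.sum_congr rfl fun n _ => by ring
  rw [h3]
  linarith

/-! ### Reduction to squarefree integers -/

/-- The divisor density `τ(b) / b`, restricted to the integers `b` which no prime of `U` divides
exactly once. -/
noncomputable def cofac (U : Finset ℕ) (b : ℕ) : ℝ :=
  if ∀ p ∈ U, b.factorization p ≠ 1 then (b.divisors.card : ℝ) / b else 0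

lemma cofac_nonneg (U : Finset ℕ) (b : ℕ) : 0 ≤ cofac U b := by
  unfold cofac; split_ifs <;> positivity

lemma cofac_one (U : Finset ℕ) : cofac U 1 = 1 := by simp [cofac]

lemma cofac_mul (U : Finset ℕ) {m n : ℕ} (h : Nat.Coprime m n) :
    cofac U (m * n) = cofac U m * cofac U n := by
  rcases Nat.eq_zero_or_pos m with rfl | hm
  · rw [Nat.coprime_zero_left] at h
    subst h
    rw [mul_one, cofac_one, mul_one]
  rcases Nat.eq_zero_or_pos n with rfl | hn
  · rw [Nat.coprime_zero_right] at h
    subst h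
    rw [one_mul, cofac_one, one_mul]
  have hf : ∀ p, (m * n).factorization p = m.factorization p + n.factorization p := fun p => by
    rw [Nat.factorization_mul hm.ne' hn.ne']; rfl
  have hz : ∀ p, m.factorization p = 0 ∨ n.factorization p = 0 := fun p => by
    by_contra! hc
    have h1 := Nat.dvd_of_factorization_pos hc.1
    have h2 := Nat.dvd_of_factorization_pos hc.2
    have h3 : p = 1 := Nat.eq_one_of_dvd_coprimes h h1 h2
    subst h3
    simp at hc
  have hiff : (∀ p ∈ U, (m * n).factorization p ≠ 1) ↔
      (∀ p ∈ U, m.factorization p ≠ 1) ∧ (∀ p ∈ U, n.factorization p ≠ 1) := by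
    constructor
    · intro h'
      refine ⟨fun p hp he => h' p hp ?_, fun p hp he => h' p hp ?_⟩
      · have := hz p; rw [hf]; omega
      · have := hz p; rw [hf]; omega
    · rintro ⟨h1, h2⟩ p hp he
      have := hz p
      have := h1 p hp
      have := h2 p hp
      rw [hf] at he
      omega
  unfold cofac
  by_cases h1 : ∀ p ∈ U, m.factorization p ≠ 1
  · by_cases h2 : ∀ p ∈ U, n.factorization p ≠ 1
    · rw [if_pos h1, if_pos h2, if_pos (hiff.2 ⟨h1, h2⟩), h.card_divisors_mul]
      push_cast
      rw [div_mul_div_comm]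
    · rw [if_neg h2, if_neg (fun h => h2 (hiff.1 h).2), mul_zero]
  · rw [if_neg h1, if_neg (fun h => h1 (hiff.1 h).1), zero_mul]

lemma cofac_pow_le (U : Finset ℕ) {p : ℕ} (hp : p.Prime) (k : ℕ) :
    cofac U (p ^ k) ≤ ((k : ℝ) + 1) * (1 / p) ^ k := by
  have : (((p ^ k).divisors.card : ℕ) : ℝ) / ((p ^ k : ℕ) : ℝ) = ((k : ℝ) + 1) * (1 / p) ^ k := by
    rw [Nat.divisors_prime_pow hp, Finset.card_map, Finset.card_range]
    push_cast
    rw [one_div, inv_pow, div_eq_mul_inv]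
  unfold cofac
  split_ifs
  · exact this.le
  · positivity

lemma cofac_prime_le (U : Finset ℕ) {p : ℕ} (hp : p.Prime) :
    cofac U (p ^ 1) ≤ if p ∉ U then 2 / (p : ℝ) else 0 := by
  by_cases h : p ∈ U
  · rw [if_neg (not_not.2 h)]
    unfold cofac
    rw [if_neg]
    intro h'
    exact h' p h (by rw [pow_one]; exact hp.factorization_self)
  · rw [if_pos h]
    have := cofac_pow_le U hp 1
    refine this.trans (le_of_eq ?_)
    push_cast; ring

lemma inv_prime_le_half {p : ℕ} (hp : p.Prime) : 1 / (p : ℝ) ≤ 1 / 2 :=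
  one_div_le_one_div_of_le (by norm_num) (by exact_mod_cast hp.two_le)

lemma hasSum_half : HasSum (fun k : ℕ => ((k : ℝ) + 3) * (1 / 2) ^ k) 8 := by
  have h1 := hasSum_coe_mul_geometric_of_norm_lt_one (𝕜 := ℝ) (r := 1 / 2) (by norm_num)
  have h2 := hasSum_geometric_two.mul_left 3
  have h3 := h1.add h2
  have e1 : (fun k : ℕ => ((k : ℝ) + 3) * (1 / 2) ^ k) =
      fun k : ℕ => (k : ℝ) * (1 / 2) ^ k + 3 * (1 / 2) ^ k := by
    funext k; ring
  have e2 : (8 : ℝ) = (1 / 2) / (1 - 1 / 2) ^ 2 + 3 * 2 := by norm_num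
  rw [e1, e2]
  exact h3

lemma cofac_summable (U : Finset ℕ) {p : ℕ} (hp : p.Prime) :
    Summable fun k : ℕ => cofac U (p ^ k) := by
  refine Summable.of_nonneg_of_le (fun k => cofac_nonneg _ _) (fun k => ?_) hasSum_half.summable
  refine (cofac_pow_le U hp k).trans ?_
  have := inv_prime_le_half hp
  gcongr
  norm_num

lemma cofac_tsum_le (U : Finset ℕ) {p : ℕ} (hp : p.Prime) :
    ∑' k : ℕ, cofac U (p ^ k) ≤ 1 + ((if p ∉ U then 2 / (p : ℝ) else 0) + 8 * (1 / (p : ℝ) ^ 2)) := by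
  rw [← (cofac_summable U hp).sum_add_tsum_nat_add 2, Finset.sum_range_succ, Finset.sum_range_one,
    pow_zero, cofac_one]
  have h1 := cofac_prime_le U hp
  have h2 : ∑' k : ℕ, cofac U (p ^ (k + 2)) ≤ 8 * (1 / (p : ℝ) ^ 2) := by
    have hs : HasSum (fun k : ℕ => cofac U (p ^ (k + 2))) (∑' k : ℕ, cofac U (p ^ (k + 2))) :=
      ((summable_nat_add_iff 2).2 (cofac_summable U hp)).hasSum
    refine hasSum_le (fun k => ?_) hs (hasSum_half.mul_right (1 / (p : ℝ) ^ 2))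
    refine (cofac_pow_le U hp (k + 2)).trans ?_
    have := inv_prime_le_half hp
    rw [pow_add, ← mul_assoc]
    have e : (1 / (p : ℝ)) ^ 2 = 1 / (p : ℝ) ^ 2 := by rw [div_pow, one_pow]
    rw [e]
    push_cast
    apply mul_le_mul_of_nonneg_right _ (by positivity)
    apply mul_le_mul _ (by gcongr) (by positivity) (by positivity)
    linarith
  linarith

/-- The Euler product of `cofac U` converges, uniformly in `U`: a prime of `U` contributes
`1 + O(1 / p ^ 2)`, and the other primes have bounded reciprocal sum. -/
lemma exists_sum_cofac_le (C : ℝ) : ∃ K : ℝ, 0 ≤ K ∧ ∀ (U : Finset ℕ) (x : ℕ),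
    ∑ p ∈ (Nat.primesLE x).filter (fun p => p ∉ U), (1 : ℝ) / p ≤ C →
    ∑ b ∈ Finset.Icc 1 x, cofac U b ≤ K := by
  have hs : Summable fun n : ℕ => 1 / (n : ℝ) ^ 2 := Real.summable_one_div_nat_pow.2 (by norm_num)
  refine ⟨Real.exp (2 * C + 8 * ∑' n : ℕ, 1 / (n : ℝ) ^ 2), (Real.exp_pos _).le, fun U x hU => ?_⟩
  obtain ⟨h1, h2⟩ := EulerProduct.summable_and_hasSum_smoothNumbers_prod_primesBelow_tsum
    (f := cofac U) (cofac_one U) (fun h => cofac_mul U h)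
    (fun hp => (cofac_summable U hp).norm) (x + 1)
  calc ∑ b ∈ Finset.Icc 1 x, cofac U b
      = ∑ b ∈ (Finset.Icc 1 x).attach.image (fun b : {b // b ∈ Finset.Icc 1 x} =>
          (⟨b.1, by
            have := Finset.mem_Icc.1 b.2
            exact Nat.mem_smoothNumbers_of_lt (by omega) (by omega)⟩ :
            (x + 1).smoothNumbers)), cofac U b := by
        rw [Finset.sum_image, ← Finset.sum_attach]
        intro a _ b _ hab
        ext
        simpa using hab
    _ ≤ ∏ p ∈ (x + 1).primesBelow, ∑' n : ℕ, cofac U (p ^ n) :=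
        sum_le_hasSum _ (fun b _ => cofac_nonneg _ _) h2
    _ ≤ ∏ p ∈ (x + 1).primesBelow,
          Real.exp ((if p ∉ U then 2 / (p : ℝ) else 0) + 8 * (1 / (p : ℝ) ^ 2)) := by
        refine Finset.prod_le_prod (fun p _ => tsum_nonneg fun k => cofac_nonneg _ _) fun p hp => ?_
        refine (cofac_tsum_le U (Nat.prime_of_mem_primesBelow hp)).trans ?_
        rw [add_comm]
        exact Real.add_one_le_exp _
    _ = Real.exp (∑ p ∈ (x + 1).primesBelow,
          ((if p ∉ U then 2 / (p : ℝ) else 0) + 8 * (1 / (p : ℝ) ^ 2))) := (Real.exp_sum _ _).symm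
    _ ≤ _ := by
        apply Real.exp_le_exp.2
        rw [Finset.sum_add_distrib, ← Finset.mul_sum, ← Finset.sum_filter]
        have e1 : ∑ p ∈ (x + 1).primesBelow with p ∉ U, 2 / (p : ℝ) ≤ 2 * C := by
          refine le_trans (le_of_eq ?_) (mul_le_mul_of_nonneg_left hU (by norm_num : (0 : ℝ) ≤ 2))
          rw [Finset.mul_sum]
          exact Finset.sum_congr rfl fun p _ => by ring
        have e2 : ∑ p ∈ (x + 1).primesBelow, 1 / (p : ℝ) ^ 2 ≤ ∑' n : ℕ, 1 / (n : ℝ) ^ 2 :=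
          hs.sum_le_tsum _ (fun _ _ => by positivity)
        linarith

lemma factorization_prod_primes {A : Finset ℕ} (hA : ∀ p ∈ A, p.Prime) (q : ℕ) :
    (∏ p ∈ A, p).factorization q = if q ∈ A then 1 else 0 := by
  rw [Nat.factorization_prod fun p hp => (hA p hp).ne_zero, Finset.sum_apply']
  rw [Finset.sum_congr rfl fun p hp => by rw [(hA p hp).factorization]]
  simp [Finsupp.single_apply]

/-- Every integer is the product of a squarefree integer built from `U` and of an integer which no
prime of `U` divides exactly once; this bounds the logarithmic mean value of `Lf`. -/
lemma exists_sum_Lf_div_le (C : ℝ) : ∃ K : ℝ, 0 ≤ K ∧ ∀ (U : Finset ℕ) (x : ℕ),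
    (∀ p ∈ U, p.Prime) → ∑ p ∈ (Nat.primesLE x).filter (fun p => p ∉ U), (1 : ℝ) / p ≤ C →
    ∑ n ∈ Finset.Icc 1 x, (Lf n : ℝ) / n ≤
      K * ∑ A ∈ U.powerset, (Lf (∏ p ∈ A, p) : ℝ) * ∏ p ∈ A, (1 : ℝ) / p := by
  obtain ⟨K, hK0, hK⟩ := exists_sum_cofac_le C
  refine ⟨2 * K, by positivity, fun U x hUp hU => ?_⟩
  set a : ℕ → Finset ℕ := fun n => U.filter (fun p => n.factorization p = 1) with ha
  set b : ℕ → ℕ := fun n => n / ∏ p ∈ a n, p with hb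
  have hap : ∀ n, ∀ p ∈ a n, p.Prime := fun n p hp => hUp p (Finset.mem_filter.1 hp).1
  have hdvd : ∀ n, ∏ p ∈ a n, p ∣ n := fun n => by
    apply Finset.prod_primes_dvd
    · intro p hp; exact (hap n p hp).prime
    · intro p hp
      refine Nat.dvd_of_factorization_pos ?_
      rw [(Finset.mem_filter.1 hp).2]; norm_num
  have hmul : ∀ n, (∏ p ∈ a n, p) * b n = n := fun n => Nat.mul_div_cancel' (hdvd n)
  have hpos : ∀ n, 0 < ∏ p ∈ a n, p := fun n => Finset.prod_pos fun p hp => (hap n p hp).pos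
  set g : Finset ℕ → ℝ := fun A => (Lf (∏ p ∈ A, p) : ℝ) * ∏ p ∈ A, (1 : ℝ) / p with hg
  have hg0 : ∀ A, 0 ≤ g A := fun A =>
    mul_nonneg (Nat.cast_nonneg _) (Finset.prod_nonneg fun p _ => by positivity)
  have h1 : ∀ n ∈ Finset.Icc 1 x, (Lf n : ℝ) / n ≤ 2 * (g (a n) * cofac U (b n)) := by
    intro n hn
    have hn0 : 0 < n := (Finset.mem_Icc.1 hn).1
    have hb0 : 0 < b n := Nat.pos_of_ne_zero fun h => by
      have := hmul n; rw [h] at this; omega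
    have hcof : cofac U (b n) = ((b n).divisors.card : ℝ) / b n := by
      unfold cofac
      rw [if_pos]
      intro p hp he
      have h2 : n.factorization p = (if p ∈ a n then 1 else 0) + (b n).factorization p := by
        conv_lhs => rw [← hmul n]
        rw [Nat.factorization_mul (hpos n).ne' hb0.ne', Finsupp.add_apply,
          factorization_prod_primes (hap n)]
      rw [he] at h2
      split_ifs at h2 with h3
      · have := (Finset.mem_filter.1 h3).2; omega
      · exact h3 (Finset.mem_filter.2 ⟨hp, by omega⟩)
    rw [hcof]
    have h2 : (Lf n : ℝ) ≤ 2 * (b n).divisors.card * Lf (∏ p ∈ a n, p) := by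
      have := Lf_mul_le (∏ p ∈ a n, p) (b n)
      rw [hmul] at this
      exact_mod_cast this
    have h3 : (n : ℝ) = (∏ p ∈ a n, (p : ℝ)) * b n := by
      conv_lhs => rw [← hmul n]
      push_cast; rfl
    have h4 : (0 : ℝ) < ∏ p ∈ a n, (p : ℝ) := Finset.prod_pos fun p hp => by
      exact_mod_cast (hap n p hp).pos
    have hb0' : (0 : ℝ) < b n := by exact_mod_cast hb0
    rw [hg]
    simp only [Finset.prod_div_distrib, Finset.prod_const_one]
    rw [h3]
    calc _ ≤ (2 * (b n).divisors.card * Lf (∏ p ∈ a n, p) : ℝ) / ((∏ p ∈ a n, (p : ℝ)) * b n) := by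
          gcongr
      _ = _ := by field_simp
  calc ∑ n ∈ Finset.Icc 1 x, (Lf n : ℝ) / n
      ≤ ∑ n ∈ Finset.Icc 1 x, 2 * (g (a n) * cofac U (b n)) := Finset.sum_le_sum h1
    _ = ∑ t ∈ (Finset.Icc 1 x).image (fun n => (a n, b n)), 2 * (g t.1 * cofac U t.2) := by
        rw [Finset.sum_image]
        intro m _ n _ hmn
        simp only [Prod.mk.injEq] at hmn
        rw [← hmul m, ← hmul n, hmn.1, hmn.2]
    _ ≤ ∑ t ∈ U.powerset ×ˢ Finset.Icc 1 x, 2 * (g t.1 * cofac U t.2) := by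
        refine Finset.sum_le_sum_of_subset_of_nonneg (fun t ht => ?_) (fun t _ _ =>
          mul_nonneg (by norm_num) (mul_nonneg (hg0 _) (cofac_nonneg _ _)))
        obtain ⟨n, hn, rfl⟩ := Finset.mem_image.1 ht
        rw [Finset.mem_Icc] at hn
        simp only [Finset.mem_product, Finset.mem_powerset, Finset.mem_Icc]
        refine ⟨Finset.filter_subset _ _, ?_, ?_⟩
        · exact Nat.div_pos (Nat.le_of_dvd hn.1 (hdvd n)) (hpos n)
        · exact (Nat.div_le_self _ _).trans hn.2
    _ = 2 * ((∑ A ∈ U.powerset, g A) * ∑ c ∈ Finset.Icc 1 x, cofac U c) := by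
        rw [Finset.sum_product, Finset.sum_mul_sum, Finset.mul_sum]
        refine Finset.sum_congr rfl fun A _ => ?_
        rw [Finset.mul_sum]
    _ ≤ 2 * ((∑ A ∈ U.powerset, g A) * K) := by
        have := hK U x hU
        have h0 : 0 ≤ ∑ A ∈ U.powerset, g A := Finset.sum_nonneg fun A _ => hg0 A
        gcongr
    _ = _ := by ring

/-! ### Lower bound by the logarithmic mean value -/

/-- A weak form of the Chebyshev lower bound. -/
lemma exists_theta_ge : ∃ n₀ : ℕ, ∀ n : ℕ, n₀ ≤ n → (n : ℝ) / 2 ≤ Chebyshev.theta n := by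
  obtain ⟨C, hC⟩ := Chebyshev.psi_sub_theta_le_mul_sqrt
  obtain ⟨n₀, hn₀⟩ := exists_nat_ge ((6 * (|C| + 4)) ^ 2)
  refine ⟨n₀ + 1, fun n hn => ?_⟩
  have hn1 : (1 : ℝ) ≤ n := by exact_mod_cast (by omega : 1 ≤ n)
  have h1 := Chebyshev.psi_ge n
  have h2 := hC n
  have h3 : 6 * (|C| + 4) ≤ √(n : ℝ) := by
    apply Real.le_sqrt_of_sq_le
    refine hn₀.trans ?_
    exact_mod_cast (by omega : n₀ ≤ n)
  have h4 : Real.log ((n : ℝ) + 1) ≤ 4 * √(n : ℝ) := by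
    have e : Real.log ((n : ℝ) + 1) = 2 * Real.log (√((n : ℝ) + 1)) := by
      rw [Real.log_sqrt (by positivity)]; ring
    have h5 := Real.log_le_sub_one_of_pos (x := √((n : ℝ) + 1)) (by positivity)
    have h6 : √((n : ℝ) + 1) ≤ 2 * √(n : ℝ) := by
      rw [Real.sqrt_le_left (by positivity), mul_pow, Real.sq_sqrt (by positivity)]
      linarith
    linarith
  have h7 : C * √(n : ℝ) ≤ |C| * √(n : ℝ) := by gcongr; exact le_abs_self C
  have h8 : (n : ℝ) = √(n : ℝ) * √(n : ℝ) := (Real.mul_self_sqrt (by positivity)).symm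
  have h9 : 6 * (|C| + 4) * √(n : ℝ) ≤ n := by
    nth_rewrite 2 [h8]
    gcongr
  have := Real.log_two_gt_d9
  nlinarith

lemma tauPlus_dvd_le {a n : ℕ} (h : a ∣ n) (hn : n ≠ 0) : tauPlus a ≤ tauPlus n := by
  apply Finset.card_le_card
  intro k hk
  simp only [Finset.mem_filter, Finset.mem_range] at hk ⊢
  obtain ⟨h1, d, h2, h3⟩ := hk
  exact ⟨h1.trans_le (Nat.le_of_dvd (Nat.pos_of_ne_zero hn) h), d, h2.trans h, h3⟩

lemma theta_sub_le {R Y x : ℕ} (hRY : R ≤ Y) (hYx : Y ≤ x) :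
    Chebyshev.theta Y - Chebyshev.theta R ≤
      (((Finset.Ioc R Y).filter Nat.Prime).card : ℝ) * Real.log x := by
  have e : Finset.range (Y + 1) = Finset.range (R + 1) ∪ Finset.Ioc R Y := by
    ext k; simp only [Finset.mem_range, Finset.mem_union, Finset.mem_Ioc]; omega
  have hd : Disjoint (Finset.range (R + 1)) (Finset.Ioc R Y) := by
    rw [Finset.disjoint_left]; intro k; simp only [Finset.mem_range, Finset.mem_Ioc]; omega
  rw [theta_nat_eq, theta_nat_eq, e, Finset.sum_union hd, add_sub_cancel_left, ← Finset.sum_filter,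
    ← nsmul_eq_mul]
  refine Finset.sum_le_card_nsmul _ _ _ fun k hk => ?_
  simp only [Finset.mem_filter, Finset.mem_Ioc] at hk
  have : (0 : ℝ) < k := by exact_mod_cast hk.2.pos
  apply Real.log_le_log this
  exact_mod_cast hk.1.2.trans hYx

/-- Multiplying the integers `a ≤ x ^ (1 / 4)` by large primes gives at least a constant proportion
of the size of the sum of `τ⁺` that is expected from `∑ τ⁺(a) / a`. -/
lemma exists_sum_tauPlus_ge : ∃ x₀ : ℕ, ∀ x : ℕ, x₀ ≤ x →
    1 / 8 * (x / Real.log x) * ∑ a ∈ Finset.Icc 1 (Nat.sqrt (Nat.sqrt x)), (tauPlus a : ℝ) / a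
      ≤ ∑ n ∈ Finset.Icc 1 x, (tauPlus n : ℝ) := by
  obtain ⟨n₀, hn₀⟩ := exists_theta_ge
  refine ⟨(n₀ + 3) ^ 4, fun x hx => ?_⟩
  set R := Nat.sqrt (Nat.sqrt x) with hR
  have hR1 : n₀ + 3 ≤ R := by
    rw [hR, Nat.le_sqrt', Nat.le_sqrt', ← pow_mul]; exact hx
  have hR4 : R ^ 4 ≤ x := by
    have h1 : R ^ 2 ≤ Nat.sqrt x := Nat.sqrt_le' _
    calc R ^ 4 = (R ^ 2) ^ 2 := by ring
      _ ≤ (Nat.sqrt x) ^ 2 := Nat.pow_le_pow_left h1 2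
      _ ≤ x := Nat.sqrt_le' _
  have hx2 : 2 ≤ x := by
    have : R ≤ R ^ 4 := Nat.le_self_pow (by norm_num) R
    omega
  have hlog : 0 < Real.log x := Real.log_pos (by exact_mod_cast hx2)
  -- the number of admissible primes for a given `a`
  have hcount : ∀ a ∈ Finset.Icc 1 R, (1 : ℝ) / 8 * (x / Real.log x) / a ≤
      (((Finset.Ioc R (x / a)).filter Nat.Prime).card : ℝ) := by
    intro a ha
    rw [Finset.mem_Icc] at ha
    have ha0 : (0 : ℝ) < a := by exact_mod_cast ha.1
    set Y := x / a with hY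
    have hY3 : R ^ 3 ≤ Y := by
      rw [hY, Nat.le_div_iff_mul_le (by omega)]
      calc R ^ 3 * a ≤ R ^ 3 * R := Nat.mul_le_mul_left _ ha.2
        _ ≤ x := by rw [← pow_succ]; exact hR4
    have hRY : 9 * R ≤ Y := by
      refine le_trans ?_ hY3
      have : 3 * 3 ≤ R * R := Nat.mul_le_mul (by omega) (by omega)
      calc 9 * R ≤ (R * R) * R := Nat.mul_le_mul_right _ this
        _ = R ^ 3 := by ring
    have h1 := theta_sub_le (R := R) (Y := Y) (x := x) (by omega) (Nat.div_le_self _ _)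
    have h2 := hn₀ Y (by omega)
    have h3 := Chebyshev.theta_le_log4_mul_x (x := (R : ℝ)) (by positivity)
    have h4 : Real.log 4 ≤ 2 := by
      rw [show (4 : ℝ) = 2 ^ 2 by norm_num, Real.log_pow]
      have := Real.log_two_lt_d9
      push_cast; linarith
    have h5 : (9 : ℝ) * R ≤ Y := by exact_mod_cast hRY
    have h6 : (x : ℝ) ≤ 2 * Y * a := by
      have : x < (Y + 1) * a := by
        have := Nat.lt_div_mul_add (a := x) (b := a) (by omega)
        rw [add_mul, one_mul]; exact this
      have h7 : x ≤ 2 * Y * a := this.le.trans (Nat.mul_le_mul_right _ (by omega))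
      exact_mod_cast h7
    have h8 : (R : ℝ) * Real.log 4 ≤ R * 2 := by gcongr
    rw [div_le_iff₀ ha0, ← mul_div_assoc, div_le_iff₀ hlog]
    have h9 : (Y : ℝ) / 4 ≤ (((Finset.Ioc R Y).filter Nat.Prime).card : ℝ) * Real.log x := by
      linarith
    have h10 : (Y : ℝ) / 4 * a ≤ (((Finset.Ioc R Y).filter Nat.Prime).card : ℝ) * Real.log x * a := by
      gcongr
    linarith
  set I := (Finset.Icc 1 R).sigma (fun a => (Finset.Ioc R (x / a)).filter Nat.Prime) with hI
  have hmem : ∀ i ∈ I, (1 ≤ i.1 ∧ i.1 ≤ R) ∧ (R < i.2 ∧ i.1 * i.2 ≤ x) ∧ i.2.Prime := by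
    intro i hi
    simp only [hI, Finset.mem_sigma, Finset.mem_Icc, Finset.mem_filter, Finset.mem_Ioc] at hi
    refine ⟨hi.1, ⟨hi.2.1.1, ?_⟩, hi.2.2⟩
    rw [mul_comm]
    exact (Nat.le_div_iff_mul_le (by omega)).1 hi.2.1.2
  have hinj : Set.InjOn (fun i : (Σ _ : ℕ, ℕ) => i.1 * i.2) (I : Set (Σ _ : ℕ, ℕ)) := by
    rintro ⟨a, p⟩ hi ⟨b, q⟩ hj hij
    obtain ⟨h1, h2, h3⟩ := hmem _ hi
    obtain ⟨g1, g2, g3⟩ := hmem _ hj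
    simp only at h1 h2 h3 g1 g2 g3 hij
    have hpq : p = q := by
      have : p ∣ b * q := hij ▸ dvd_mul_left p a
      rcases (h3.dvd_mul).1 this with h | h
      · have := Nat.le_of_dvd (by omega) h
        omega
      · exact (Nat.prime_dvd_prime_iff_eq h3 g3).1 h
    subst hpq
    have := Nat.eq_of_mul_eq_mul_right h3.pos hij
    subst this
    rfl
  calc 1 / 8 * (x / Real.log x) * ∑ a ∈ Finset.Icc 1 R, (tauPlus a : ℝ) / a
      = ∑ a ∈ Finset.Icc 1 R, (tauPlus a : ℝ) * ((1 : ℝ) / 8 * (x / Real.log x) / a) := by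
        rw [Finset.mul_sum]
        exact Finset.sum_congr rfl fun a _ => by ring
    _ ≤ ∑ a ∈ Finset.Icc 1 R, (tauPlus a : ℝ) *
          (((Finset.Ioc R (x / a)).filter Nat.Prime).card : ℝ) :=
        Finset.sum_le_sum fun a ha => mul_le_mul_of_nonneg_left (hcount a ha) (by positivity)
    _ = ∑ i ∈ I, (tauPlus i.1 : ℝ) := by
        rw [hI, Finset.sum_sigma]
        refine Finset.sum_congr rfl fun a _ => ?_
        simp only
        rw [Finset.sum_const, nsmul_eq_mul, mul_comm]
    _ ≤ ∑ i ∈ I, (tauPlus (i.1 * i.2) : ℝ) := by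
        refine Finset.sum_le_sum fun i hi => ?_
        obtain ⟨h1, h2, h3⟩ := hmem _ hi
        have h3 := h3.pos
        exact_mod_cast tauPlus_dvd_le (dvd_mul_right _ _) (Nat.mul_ne_zero (by omega) (by omega))
    _ = ∑ n ∈ I.image (fun i => i.1 * i.2), (tauPlus n : ℝ) := by
        rw [Finset.sum_image hinj]
    _ ≤ ∑ n ∈ Finset.Icc 1 x, (tauPlus n : ℝ) := by
        refine Finset.sum_le_sum_of_subset_of_nonneg ?_ fun _ _ _ => by positivity
        intro n hn
        rw [Finset.mem_image] at hn
        obtain ⟨i, hi, rfl⟩ := hn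
        obtain ⟨h1, h2, h3⟩ := hmem _ hi
        rw [Finset.mem_Icc]
        exact ⟨Nat.mul_pos h1.1 h3.pos, h2.2⟩

/-! ### The two sides of a maximum of the walk -/

section
variable {P : ℕ → Finset ℕ} {κ : ℕ → ℕ} {C : ℝ}

lemma sum_blockU (hκ : ∀ k, ∀ p ∈ P k, κ p = k) (s N : ℕ) (F : ℕ → ℝ) :
    ∑ p ∈ blockU P s N, F p = ∑ k ∈ Finset.Ico s (s + N), ∑ p ∈ P k, F p := by
  unfold blockU
  rw [Finset.sum_biUnion]
  intro i _ j _ hij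
  rw [Function.onFun, Finset.disjoint_left]
  intro p hp hq
  exact hij ((hκ i p hp).symm.trans (hκ j p hq))

lemma barrier_mono {s N m : ℕ} {A B : Finset ℕ} (h : B ⊆ A) (hA : Barrier κ s N m A) :
    Barrier κ s N m B := fun j hj => (cntBelow_mono h).trans (hA j hj)

/-- Summing an additive weight over a family costs the total weight of one removed prime. -/
lemma fam_removal {f : ℕ → ℝ} (hf : ∀ p, 0 ≤ f p) (c : ℕ → ℝ) (hc : ∀ p, 0 ≤ c p) (s N m n : ℕ) :
    ∑ A ∈ (blockU P s N).powerset,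
      (if A.card = n + 1 ∧ Barrier κ s N m A then (∑ p ∈ A, c p) * ∏ p ∈ A, f p else 0)
      ≤ (∑ p ∈ blockU P s N, c p * f p) * famSum P κ f s N m n := by
  have h := sum_mem_le (U := blockU P s N)
    (fun p A => if A.card = n + 1 ∧ Barrier κ s N m A then c p * ∏ p ∈ A, f p else 0)
    (fun p => c p * f p)
    (fun B => if B.card = n ∧ Barrier κ s N m B then ∏ p ∈ B, f p else 0)
    (fun p _ => mul_nonneg (hc p) (hf p))
    (fun B _ => by
      split_ifs
      · exact Finset.prod_nonneg fun p _ => hf p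
      · exact le_rfl)
    (fun p _ B _ hpB => by
      by_cases h : (insert p B).card = n + 1 ∧ Barrier κ s N m (insert p B)
      · have h1 : B.card = n ∧ Barrier κ s N m B := by
          refine ⟨?_, barrier_mono (Finset.subset_insert _ _) h.2⟩
          have := h.1
          rw [Finset.card_insert_of_notMem hpB] at this
          omega
        rw [if_pos h, if_pos h1, Finset.prod_insert hpB, mul_assoc]
      · rw [if_neg h]
        apply mul_nonneg (mul_nonneg (hc p) (hf p))
        split_ifs
        · exact Finset.prod_nonneg fun p _ => hf p
        · exact le_rfl)
  refine le_trans (le_of_eq ?_) h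
  refine Finset.sum_congr rfl fun A _ => ?_
  split_ifs
  · rw [Finset.sum_mul]
  · simp

lemma log_two_bounds : (0.69 : ℝ) < Real.log 2 ∧ Real.log 2 < 0.6932 :=
  ⟨by have := Real.log_two_gt_d9; linarith, by have := Real.log_two_lt_d9; linarith⟩

/-- The contribution of the primes above a maximum of the walk, where the number of dyadic intervals
hit by divisors is bounded by the number of divisors `2 ^ A.card`. -/
lemma exists_right_le (hB : BlockSys P κ C) : ∃ K : ℝ, 0 ≤ K ∧ ∀ s N : ℕ,
    ∑ A ∈ (blockU P s N).powerset,
      (if Barrier κ s N 0 A then (2 : ℝ) ^ A.card * ∏ p ∈ A, (1 : ℝ) / p else 0)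
      ≤ K * ((2 * Real.log 2 * Real.exp 1) ^ N * wt N) := by
  obtain ⟨l1, l2⟩ := log_two_bounds
  set l := Real.log 2 with hl
  have hl0 : 0 < l := by linarith
  obtain ⟨K, hK0, hK⟩ := exists_sum_sq_geom_le (1 / (2 * l)) (by positivity)
    (by rw [div_lt_one (by positivity)]; linarith)
  refine ⟨2 * K, by positivity, fun s N => ?_⟩
  have hf : ∀ p : ℕ, (0 : ℝ) ≤ 1 / p := fun p => by positivity
  calc ∑ A ∈ (blockU P s N).powerset,
      (if Barrier κ s N 0 A then (2 : ℝ) ^ A.card * ∏ p ∈ A, (1 : ℝ) / p else 0)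
      = ∑ A ∈ (blockU P s N).powerset, ∑ n ∈ Finset.range (N + 1),
          (2 : ℝ) ^ n * (if A.card = n ∧ Barrier κ s N 0 A then ∏ p ∈ A, (1 : ℝ) / p else 0) := by
        refine Finset.sum_congr rfl fun A hA => ?_
        rw [Finset.mem_powerset] at hA
        by_cases h : Barrier κ s N 0 A
        · have hc : A.card ∈ Finset.range (N + 1) := by
            have := h N le_rfl
            rw [cntBelow_eq_card (fun p hp => (kappa_of_mem_blockU hB.kappa (hA hp)).2.1)] at this
            rw [Finset.mem_range]; omega
          rw [if_pos h, Finset.sum_eq_single_of_mem _ hc]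
          · rw [if_pos ⟨rfl, h⟩]
          · intro n _ hn
            rw [if_neg (fun h' => hn h'.1.symm), mul_zero]
        · simp [h]
    _ = ∑ n ∈ Finset.range (N + 1), (2 : ℝ) ^ n * famSum P κ (fun p => 1 / (p : ℝ)) s N 0 n := by
        rw [Finset.sum_comm]
        refine Finset.sum_congr rfl fun n _ => ?_
        rw [famSum, Finset.mul_sum]
    _ ≤ ∑ n ∈ Finset.range (N + 1), (2 * l) ^ n * (2 * ((N : ℝ) - n + 1) * Real.exp N * wt N) := by
        refine Finset.sum_le_sum fun n hn => ?_
        rw [mul_pow, mul_assoc]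
        gcongr
        refine (famSum_le hB.kappa hf l hB.sum_le s N 0 n).trans ?_
        gcongr
        exact parkW_zero_le N n (by simpa [Nat.lt_succ_iff] using hn)
    _ = ∑ r ∈ Finset.range (N + 1), (2 * l) ^ N * (Real.exp N * wt N) * 2 *
          (((r : ℝ) + 1) * (1 / (2 * l)) ^ r) := by
        rw [← Finset.sum_range_reflect]
        refine Finset.sum_congr rfl fun r hr => ?_
        have hr : r ≤ N := by simpa [Nat.lt_succ_iff] using hr
        have e : (2 * l) ^ N = (2 * l) ^ (N + 1 - 1 - r) * (2 * l) ^ r := by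
          rw [← pow_add]; congr 1; omega
        have e2 : ((N + 1 - 1 - r : ℕ) : ℝ) = N - r := by
          rw [Nat.add_sub_cancel, Nat.cast_sub hr]
        have e3 : (2 * l) ^ r * (1 / (2 * l)) ^ r = 1 := by
          rw [← mul_pow, mul_one_div_cancel (by positivity), one_pow]
        rw [e2, e]
        linear_combination (-(2 * l) ^ (N + 1 - 1 - r) * (Real.exp N * wt N) * 2 * ((r : ℝ) + 1)) * e3
    _ ≤ (2 * l) ^ N * (Real.exp N * wt N) * 2 * K := by
        rw [← Finset.mul_sum]
        have := (wt_pos N).le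
        gcongr
        refine le_trans (Finset.sum_le_sum fun r _ => ?_) (hK (N + 1))
        gcongr
        nlinarith [Nat.cast_nonneg (α := ℝ) r]
    _ = _ := by
        rw [mul_pow (2 * l), Real.exp_one_pow]; ring

/-- The contribution of the primes below a maximum of the walk: here the number of dyadic
intervals hit by divisors is bounded by the logarithm of the product. -/
lemma exists_left_le (hB : BlockSys P κ C) : ∃ K : ℝ, 0 ≤ K ∧ ∀ N : ℕ,
    ∑ A ∈ (blockU P 0 N).powerset,
      (if N ≤ A.card ∧ Barrier κ 0 N (A.card - N) A then
        (Lf (∏ p ∈ A, p) : ℝ) * ∏ p ∈ A, (1 : ℝ) / p else 0)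
      ≤ K * ((2 * Real.log 2 * Real.exp 1) ^ N * wt N) := by
  obtain ⟨l1, l2⟩ := log_two_bounds
  set l := Real.log 2 with hl
  have hl0 : 0 < l := by linarith
  have hC := hB.one_le
  obtain ⟨K, hK0, hK⟩ := exists_sum_sq_geom_le (l * (Real.exp 1 / 2)) (by positivity)
    (by have := Real.exp_one_lt_d9; nlinarith)
  refine ⟨(1 + C / l) * 24 * K, by positivity, fun N => ?_⟩
  have hf : ∀ p : ℕ, (0 : ℝ) ≤ 1 / p := fun p => by positivity
  set U := blockU P 0 N with hU
  set f : ℕ → ℝ := fun p => 1 / (p : ℝ) with hfdef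
  have hwt := (wt_pos N).le
  -- the bound for a fixed maximum `M` of the walk
  have hM : ∀ M : ℕ, ∑ A ∈ U.powerset, (if A.card = N + M ∧ Barrier κ 0 N M A then
        (Lf (∏ p ∈ A, p) : ℝ) * ∏ p ∈ A, f p else 0)
      ≤ (1 + C / l) * 24 * ((2 * l * Real.exp 1) ^ N * wt N) *
        (((M : ℝ) + 1) ^ 2 * (l * (Real.exp 1 / 2)) ^ M) := by
    intro M
    have hLf : ∀ A ∈ U.powerset, (Lf (∏ p ∈ A, p) : ℝ) ≤ 1 + C / l * ∑ p ∈ A, (2 : ℝ) ^ κ p := by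
      intro A hA
      rw [Finset.mem_powerset] at hA
      have hpr : ∀ p ∈ A, p.Prime := fun p hp =>
        hB.prime _ p (kappa_of_mem_blockU hB.kappa (hA hp)).2.2
      have h0 : ∏ p ∈ A, p ≠ 0 := Finset.prod_ne_zero_iff.2 fun p hp => (hpr p hp).ne_zero
      have h1 : (Lf (∏ p ∈ A, p) : ℝ) ≤ Nat.log 2 (∏ p ∈ A, p) + 1 := by
        exact_mod_cast Lf_le_log h0
      have h2 : (Nat.log 2 (∏ p ∈ A, p) : ℝ) * l ≤ ∑ p ∈ A, Real.log p := by
        rw [← Real.log_prod (fun p hp => by exact_mod_cast (hpr p hp).ne_zero), hl, ← Real.log_pow]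
        apply Real.log_le_log (by positivity)
        rw [← Nat.cast_prod]
        have := Nat.pow_log_le_self 2 h0
        calc (2 : ℝ) ^ Nat.log 2 (∏ p ∈ A, p) = ((2 ^ Nat.log 2 (∏ p ∈ A, p) : ℕ) : ℝ) := by
              rw [Nat.cast_pow]; norm_num
          _ ≤ _ := Nat.cast_le.2 this
      have h3 : ∑ p ∈ A, Real.log p ≤ C * ∑ p ∈ A, (2 : ℝ) ^ κ p := by
        rw [Finset.mul_sum]
        exact Finset.sum_le_sum fun p hp => hB.log_le _ p (kappa_of_mem_blockU hB.kappa (hA hp)).2.2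
      have h4 : (Nat.log 2 (∏ p ∈ A, p) : ℝ) ≤ (C * ∑ p ∈ A, (2 : ℝ) ^ κ p) / l := by
        rw [le_div_iff₀ hl0]; linarith
      rw [div_mul_eq_mul_div]; linarith
    have hup : ∀ n, n ≤ N + M → N + M ≤ n + 1 → famSum P κ f 0 N M n ≤
        l ^ n * (24 * (((M : ℝ) + 1) * (Real.exp 1 / 2) ^ M) * Real.exp N * wt N) := by
      intro n h1 h2
      refine (famSum_le hB.kappa hf l hB.sum_le 0 N M n).trans ?_
      gcongr
      exact parkW_up_le M N n h1 h2
    have hwsum : ∑ p ∈ U, (2 : ℝ) ^ κ p * f p ≤ l * 2 ^ N := by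
      rw [hU, sum_blockU hB.kappa]
      calc _ ≤ ∑ k ∈ Finset.Ico 0 (0 + N), (2 : ℝ) ^ k * l := by
            refine Finset.sum_le_sum fun k _ => ?_
            calc _ = ∑ p ∈ P k, (2 : ℝ) ^ k * f p :=
                  Finset.sum_congr rfl fun p hp => by rw [hB.kappa k p hp]
              _ ≤ _ := by rw [← Finset.mul_sum]; gcongr; exact hB.sum_le k
        _ ≤ _ := by
            rw [zero_add, ← Finset.range_eq_Ico, ← Finset.sum_mul, geom_sum_eq (by norm_num)]
            nlinarith
    set T := 24 * (((M : ℝ) + 1) * (Real.exp 1 / 2) ^ M) * Real.exp N * wt N with hT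
    have hT0 : 0 ≤ T := by positivity
    have hS : ∑ A ∈ U.powerset, (if A.card = N + M ∧ Barrier κ 0 N M A then
        (∑ p ∈ A, (2 : ℝ) ^ κ p) * ∏ p ∈ A, f p else 0) ≤ 2 ^ N * (l ^ (N + M) * T) := by
      rcases Nat.eq_zero_or_pos (N + M) with h | h
      · refine le_trans (le_of_eq ?_) (by positivity : (0 : ℝ) ≤ _)
        refine Finset.sum_eq_zero fun A _ => ?_
        split_ifs with h'
        · rw [h, Finset.card_eq_zero] at h'
          rw [h'.1]; simp
        · rfl
      · obtain ⟨n, hn⟩ := Nat.exists_eq_add_of_le' h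
        rw [hn]
        refine (fam_removal hf _ (fun p => by positivity) 0 N M n).trans ?_
        have h5 := hup n (by omega) (by omega)
        calc _ ≤ (l * 2 ^ N) * (l ^ n * T) := by
              gcongr
              exact famSum_nonneg hf _ _ _ _
          _ = _ := by rw [pow_succ]; ring
    calc _ ≤ ∑ A ∈ U.powerset, ((if A.card = N + M ∧ Barrier κ 0 N M A then ∏ p ∈ A, f p else 0)
            + C / l * (if A.card = N + M ∧ Barrier κ 0 N M A then
                (∑ p ∈ A, (2 : ℝ) ^ κ p) * ∏ p ∈ A, f p else 0)) := by
          refine Finset.sum_le_sum fun A hA => ?_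
          split_ifs
          · have := hLf A hA
            have hp : 0 ≤ ∏ p ∈ A, f p := Finset.prod_nonneg fun p _ => hf p
            calc _ ≤ (1 + C / l * ∑ p ∈ A, (2 : ℝ) ^ κ p) * ∏ p ∈ A, f p := by gcongr
              _ = _ := by ring
          · simp
      _ ≤ l ^ (N + M) * T + C / l * (2 ^ N * (l ^ (N + M) * T)) := by
          rw [Finset.sum_add_distrib, ← Finset.mul_sum]
          have := hup (N + M) le_rfl (by omega)
          rw [famSum] at this
          gcongr
      _ ≤ 2 ^ N * (l ^ (N + M) * T) + C / l * (2 ^ N * (l ^ (N + M) * T)) := by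
          have : (1 : ℝ) ≤ 2 ^ N := one_le_pow₀ (by norm_num)
          have h0 : 0 ≤ l ^ (N + M) * T := by positivity
          nlinarith
      _ = (1 + C / l) * 24 * ((2 * l * Real.exp 1) ^ N * wt N) *
            (((M : ℝ) + 1) * (l * (Real.exp 1 / 2)) ^ M) := by
          rw [hT, mul_pow (2 * l), Real.exp_one_pow, mul_pow 2 l, mul_pow l, pow_add]; ring
      _ ≤ _ := by
          gcongr
          nlinarith [Nat.cast_nonneg (α := ℝ) M]
  calc _ ≤ ∑ A ∈ U.powerset, ∑ M ∈ Finset.range (U.card + 1),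
        (if A.card = N + M ∧ Barrier κ 0 N M A then
          (Lf (∏ p ∈ A, p) : ℝ) * ∏ p ∈ A, f p else 0) := by
        refine Finset.sum_le_sum fun A hA => ?_
        rw [Finset.mem_powerset] at hA
        have hnn : ∀ M, 0 ≤ (if A.card = N + M ∧ Barrier κ 0 N M A then
          (Lf (∏ p ∈ A, p) : ℝ) * ∏ p ∈ A, f p else 0) := fun M => by
          split_ifs
          · exact mul_nonneg (by positivity) (Finset.prod_nonneg fun p _ => hf p)
          · exact le_rfl
        split_ifs with h
        · have hm : A.card - N ∈ Finset.range (U.card + 1) := by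
            have := Finset.card_le_card hA
            rw [Finset.mem_range]; omega
          refine le_trans ?_ (Finset.single_le_sum (fun M _ => hnn M) hm)
          rw [if_pos ⟨by omega, h.2⟩]
        · exact Finset.sum_nonneg fun M _ => hnn M
    _ = ∑ M ∈ Finset.range (U.card + 1), ∑ A ∈ U.powerset,
        (if A.card = N + M ∧ Barrier κ 0 N M A then
          (Lf (∏ p ∈ A, p) : ℝ) * ∏ p ∈ A, f p else 0) := Finset.sum_comm
    _ ≤ ∑ M ∈ Finset.range (U.card + 1), (1 + C / l) * 24 * ((2 * l * Real.exp 1) ^ N * wt N) *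
        (((M : ℝ) + 1) ^ 2 * (l * (Real.exp 1 / 2)) ^ M) := Finset.sum_le_sum fun M _ => hM M
    _ ≤ (1 + C / l) * 24 * ((2 * l * Real.exp 1) ^ N * wt N) * K := by
        rw [← Finset.mul_sum]
        gcongr
        exact hK _
    _ = _ := by ring

end

/-! ### Decomposition at a maximum of the walk -/

section
variable {P : ℕ → Finset ℕ} {κ : ℕ → ℕ} {C : ℝ}

lemma card_divisors_prod_primes {A : Finset ℕ} (h : ∀ p ∈ A, p.Prime) :
    (∏ p ∈ A, p).divisors.card = 2 ^ A.card := by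
  induction A using Finset.induction_on with
  | empty => simp
  | insert a A ha ih =>
    have hA : ∀ p ∈ A, p.Prime := fun p hp => h p (Finset.mem_insert_of_mem hp)
    have hap := h a (Finset.mem_insert_self _ _)
    rw [Finset.prod_insert ha, Finset.card_insert_of_notMem ha, Nat.Coprime.card_divisors_mul, ih hA,
      pow_succ', hap.divisors, Finset.card_pair hap.one_lt.ne]
    rw [Nat.coprime_prod_right_iff]
    intro p hp
    exact (Nat.coprime_primes hap (hA p hp)).2 (fun e => ha (e ▸ hp))

/-- Splitting a set of primes at the maximum of the walk `j ↦ cntBelow κ j A - j`. -/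
lemma Lf_split_le (hB : BlockSys P κ C) (J : ℕ) {A : Finset ℕ} (hA : A ⊆ blockU P 0 J) :
    ∃ j ≤ J, ((j ≤ (A ∩ blockU P 0 j).card ∧
        Barrier κ 0 j ((A ∩ blockU P 0 j).card - j) (A ∩ blockU P 0 j)) ∧
      Barrier κ j (J - j) 0 (A ∩ blockU P j (J - j))) ∧
      (Lf (∏ p ∈ A, p) : ℝ) * ∏ p ∈ A, (1 : ℝ) / p ≤
        2 * ((Lf (∏ p ∈ A ∩ blockU P 0 j, p) : ℝ) * ∏ p ∈ A ∩ blockU P 0 j, (1 : ℝ) / p) *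
          (2 ^ (A ∩ blockU P j (J - j)).card * ∏ p ∈ A ∩ blockU P j (J - j), (1 : ℝ) / p) := by
  obtain ⟨j, hj, hmax⟩ := Finset.exists_max_image (Finset.range (J + 1))
    (fun j => (cntBelow κ j A : ℤ) - j) ⟨0, by simp⟩
  rw [Finset.mem_range, Nat.lt_succ_iff] at hj
  refine ⟨j, hj, ?_⟩
  set A₁ := A ∩ blockU P 0 j with hA₁
  set A₂ := A ∩ blockU P j (J - j) with hA₂
  have hJ : blockU P 0 J = blockU P 0 j ∪ blockU P j (J - j) := by
    have := blockU_add (P := P) 0 j (J - j)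
    rwa [zero_add, Nat.add_sub_cancel' hj] at this
  have hdisj : Disjoint A₁ A₂ := by
    have := blockU_disjoint (P := P) hB.kappa 0 j (J - j)
    rw [zero_add] at this
    exact Finset.disjoint_of_subset_left Finset.inter_subset_right
      (Finset.disjoint_of_subset_right Finset.inter_subset_right this)
  have hun : A = A₁ ∪ A₂ := by
    rw [hA₁, hA₂, ← Finset.inter_union_distrib_left, ← hJ, Finset.inter_eq_left.2 hA]
  have hk1 : ∀ p ∈ A₁, κ p < j := fun p hp => by
    have := (kappa_of_mem_blockU hB.kappa (Finset.inter_subset_right hp)).2.1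
    omega
  have hk2 : ∀ p ∈ A₂, j ≤ κ p := fun p hp =>
    (kappa_of_mem_blockU hB.kappa (Finset.inter_subset_right hp)).1
  have hpr : ∀ p ∈ A, p.Prime := fun p hp =>
    hB.prime _ p (kappa_of_mem_blockU hB.kappa (hA hp)).2.2
  have hcj : cntBelow κ j A = A₁.card := by
    rw [hun, cntBelow_union hdisj, cntBelow_eq_card hk1, cntBelow_eq_zero hk2, add_zero]
  have hle : ∀ i ≤ J, (cntBelow κ i A : ℤ) - i ≤ A₁.card - j := fun i hi => by
    have := hmax i (by rw [Finset.mem_range]; omega)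
    rwa [hcj] at this
  refine ⟨⟨⟨?_, ?_⟩, ?_⟩, ?_⟩
  · have := hle 0 (by omega)
    have h0 : (0 : ℤ) ≤ cntBelow κ 0 A := by positivity
    push_cast at this
    omega
  · intro i hi
    rw [zero_add]
    have h1 := hle i (by omega)
    have h2 : cntBelow κ i A₁ ≤ cntBelow κ i A := cntBelow_mono Finset.inter_subset_left
    omega
  · intro i hi
    have h1 := hle (j + i) (by omega)
    have h2 : cntBelow κ (j + i) A = A₁.card + cntBelow κ (j + i) A₂ := by
      rw [hun, cntBelow_union hdisj, cntBelow_eq_card (fun p hp => by have := hk1 p hp; omega)]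
    push_cast at h1
    omega
  · have h1 : (Lf (∏ p ∈ A, p) : ℝ) ≤ 2 * 2 ^ A₂.card * Lf (∏ p ∈ A₁, p) := by
      have h2 := Lf_mul_le (∏ p ∈ A₁, p) (∏ p ∈ A₂, p)
      rw [← Finset.prod_union hdisj, ← hun,
        card_divisors_prod_primes (fun p hp => hpr p (Finset.inter_subset_left hp))] at h2
      exact_mod_cast h2
    have h3 : ∏ p ∈ A, (1 : ℝ) / p = (∏ p ∈ A₁, (1 : ℝ) / p) * ∏ p ∈ A₂, (1 : ℝ) / p := by
      rw [← Finset.prod_union hdisj, ← hun]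
    rw [h3]
    have h4 : 0 ≤ ∏ p ∈ A₁, (1 : ℝ) / p := Finset.prod_nonneg fun p _ => by positivity
    have h5 : 0 ≤ ∏ p ∈ A₂, (1 : ℝ) / p := Finset.prod_nonneg fun p _ => by positivity
    calc _ ≤ (2 * 2 ^ A₂.card * Lf (∏ p ∈ A₁, p)) *
          ((∏ p ∈ A₁, (1 : ℝ) / p) * ∏ p ∈ A₂, (1 : ℝ) / p) := by gcongr
      _ = _ := by ring

/-- The logarithmic mean value of `Lf` over squarefree integers composed of the first `J` blocks.
The pieces on both sides of the maximum, located at `j`, contribute `b ^ j * wt j` and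
`b ^ (J - j) * wt (J - j)`, and `wt` is stable under convolution. -/
lemma exists_sum_Lf_blockU_le (hB : BlockSys P κ C) : ∃ K : ℝ, 0 ≤ K ∧ ∀ J : ℕ,
    ∑ A ∈ (blockU P 0 J).powerset, (Lf (∏ p ∈ A, p) : ℝ) * ∏ p ∈ A, (1 : ℝ) / p
      ≤ K * ((2 * Real.log 2 * Real.exp 1) ^ J * wt J) := by
  obtain ⟨K₁, hK₁, hl⟩ := exists_left_le hB
  obtain ⟨K₂, hK₂, hr⟩ := exists_right_le hB
  set b := 2 * Real.log 2 * Real.exp 1 with hb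
  have hb0 : 0 ≤ b := by have := log_two_bounds.1; positivity
  refine ⟨2 * K₁ * K₂ * 24, by positivity, fun J => ?_⟩
  set g₁ : ℕ → Finset ℕ → ℝ := fun j A => if j ≤ A.card ∧ Barrier κ 0 j (A.card - j) A then
        (Lf (∏ p ∈ A, p) : ℝ) * ∏ p ∈ A, (1 : ℝ) / p else 0 with hg₁
  set g₂ : ℕ → Finset ℕ → ℝ := fun j A => if Barrier κ j (J - j) 0 A then
        (2 : ℝ) ^ A.card * ∏ p ∈ A, (1 : ℝ) / p else 0 with hg₂
  have hprod : ∀ A : Finset ℕ, 0 ≤ ∏ p ∈ A, (1 : ℝ) / p := fun A =>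
    Finset.prod_nonneg fun p _ => by positivity
  have hg₁0 : ∀ j A, 0 ≤ g₁ j A := fun j A => by
    have := hprod A
    simp only [hg₁]; split_ifs <;> positivity
  have hg₂0 : ∀ j A, 0 ≤ g₂ j A := fun j A => by
    have := hprod A
    simp only [hg₂]; split_ifs <;> positivity
  calc _ ≤ ∑ A ∈ (blockU P 0 J).powerset, ∑ j ∈ Finset.range (J + 1),
        2 * g₁ j (A ∩ blockU P 0 j) * g₂ j (A ∩ blockU P j (J - j)) := by
        refine Finset.sum_le_sum fun A hA => ?_
        rw [Finset.mem_powerset] at hA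
        obtain ⟨j, hj, ⟨h1, h2⟩, h3⟩ := Lf_split_le hB J hA
        refine le_trans ?_ (Finset.single_le_sum (f := fun j => 2 * g₁ j (A ∩ blockU P 0 j) *
          g₂ j (A ∩ blockU P j (J - j))) (fun j _ => mul_nonneg (mul_nonneg (by norm_num)
            (hg₁0 _ _)) (hg₂0 _ _)) (Finset.mem_range.2 (Nat.lt_succ_of_le hj)))
        simp only [hg₁, hg₂]
        rw [if_pos h1, if_pos h2]
        exact h3
    _ = ∑ j ∈ Finset.range (J + 1), 2 * (∑ A ∈ (blockU P 0 j).powerset, g₁ j A) *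
          ∑ A ∈ (blockU P j (J - j)).powerset, g₂ j A := by
        rw [Finset.sum_comm]
        refine Finset.sum_congr rfl fun j hj => ?_
        have hj : j ≤ J := by simpa [Nat.lt_succ_iff] using hj
        have hJ : blockU P 0 J = blockU P 0 j ∪ blockU P j (J - j) := by
          have := blockU_add (P := P) 0 j (J - j)
          rwa [zero_add, Nat.add_sub_cancel' hj] at this
        have hd : Disjoint (blockU P 0 j) (blockU P j (J - j)) := by
          have := blockU_disjoint (P := P) hB.kappa 0 j (J - j)
          rwa [zero_add] at this
        rw [hJ, sum_powerset_union hd, mul_assoc, Finset.sum_mul, Finset.mul_sum]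
        refine Finset.sum_congr rfl fun A hA => ?_
        rw [Finset.mul_sum, Finset.mul_sum]
        refine Finset.sum_congr rfl fun B hB₂ => ?_
        rw [Finset.mem_powerset] at hA hB₂
        have e1 : (A ∪ B) ∩ blockU P 0 j = A := by
          rw [Finset.union_inter_distrib_right, Finset.inter_eq_left.2 hA,
            Finset.disjoint_iff_inter_eq_empty.1 (Finset.disjoint_of_subset_left hB₂ hd.symm),
            Finset.union_empty]
        have e2 : (A ∪ B) ∩ blockU P j (J - j) = B := by
          rw [Finset.union_inter_distrib_right, Finset.inter_eq_left.2 hB₂,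
            Finset.disjoint_iff_inter_eq_empty.1 (Finset.disjoint_of_subset_left hA hd),
            Finset.empty_union]
        rw [e1, e2, mul_assoc]
    _ ≤ ∑ j ∈ Finset.range (J + 1), 2 * (K₁ * (b ^ j * wt j)) * (K₂ * (b ^ (J - j) * wt (J - j))) := by
        refine Finset.sum_le_sum fun j _ => ?_
        have h1 := hl j
        have h2 := hr j (J - j)
        have h3 : 0 ≤ ∑ A ∈ (blockU P j (J - j)).powerset, g₂ j A :=
          Finset.sum_nonneg fun A _ => hg₂0 j A
        have := (wt_pos j).le
        gcongr
    _ = 2 * K₁ * K₂ * b ^ J * ∑ j ∈ Finset.range (J + 1), wt j * wt (J - j) := by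
        rw [Finset.mul_sum]
        refine Finset.sum_congr rfl fun j hj => ?_
        have hj : j ≤ J := by simpa [Nat.lt_succ_iff] using hj
        have e : b ^ J = b ^ j * b ^ (J - j) := by rw [← pow_add, Nat.add_sub_cancel' hj]
        rw [e]; ring
    _ ≤ 2 * K₁ * K₂ * b ^ J * (24 * wt J) := by
        gcongr
        exact wt_conv_le J
    _ = _ := by ring

end

/-! ### The upper bound -/

lemma wt_eq (N : ℕ) : wt N = 1 / ((N : ℝ) + 1) ^ ((3 : ℝ) / 2) := by
  have h : (0 : ℝ) < (N : ℝ) + 1 := by positivity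
  rw [wt, show (3 : ℝ) / 2 = 1 + 1 / 2 by norm_num, Real.rpow_add h, Real.rpow_one,
    ← Real.sqrt_eq_rpow]

lemma two_sub_delta_pos : 0 < 2 - deltaEFT := by
  obtain ⟨h1, h2⟩ := log_two_bounds
  have h3 := Real.one_sub_inv_le_log_of_pos (x := Real.log 2) (by linarith)
  have h4 : (Real.log 2)⁻¹ ≤ 2 := by
    rw [inv_le_comm₀ (by linarith) (by norm_num)]; norm_num; linarith
  have h5 : 0 ≤ (1 + Real.log (Real.log 2)) / Real.log 2 := div_nonneg (by linarith) (by linarith)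
  unfold deltaEFT
  linarith

/-- The exponent `2 - δ` arises here: `2 * e * log 2 = 2 ^ (2 - δ)`. -/
lemma base_pow (J : ℕ) :
    (2 * Real.log 2 * Real.exp 1) ^ J = ((2 : ℝ) ^ J) ^ (2 - deltaEFT) := by
  have hl : 0 < Real.log 2 := by linarith [log_two_bounds.1]
  have h : 2 * Real.log 2 * Real.exp 1 = (2 : ℝ) ^ (2 - deltaEFT) := by
    rw [Real.rpow_def_of_pos (by norm_num)]
    have e : Real.log 2 * (2 - deltaEFT) = Real.log 2 + Real.log (Real.log 2) + 1 := by
      unfold deltaEFT; field_simp; ring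
    rw [e, Real.exp_add, Real.exp_add, Real.exp_log (by norm_num), Real.exp_log hl]
  rw [h, ← Real.rpow_natCast, ← Real.rpow_mul (by norm_num), mul_comm, Real.rpow_mul (by norm_num),
    Real.rpow_natCast]

/-- The blocks up to `2 ^ J ≍ log x` contain almost all primes up to `x`. -/
lemma exists_upper : ∃ c₂ : ℝ, 0 < c₂ ∧ ∀ᶠ x : ℕ in atTop,
    (∑ n ∈ Finset.Icc 1 x, (tauPlus n : ℝ)) ≤
      c₂ * x * (Real.log x) ^ (1 - deltaEFT) / (Real.log (Real.log x)) ^ ((3 : ℝ) / 2) := by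
  obtain ⟨P, κ, C, hB⟩ := exists_blockSys
  have hC := hB.one_le
  obtain ⟨K₁, hK₁, h1⟩ := exists_sum_Lf_le
  obtain ⟨K₂, hK₂, h2⟩ := exists_sum_Lf_div_le C
  obtain ⟨K₃, hK₃, h3⟩ := exists_sum_Lf_blockU_le hB
  have ht : Tendsto (fun x : ℕ => Real.log (x : ℝ)) atTop atTop :=
    Real.tendsto_log_atTop.comp tendsto_natCast_atTop_atTop
  have htt := Real.tendsto_log_atTop.comp ht
  refine ⟨2 * K₁ * K₂ * K₃ * (2 * C) ^ (2 - deltaEFT) + 1, by positivity, ?_⟩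
  filter_upwards [htt.eventually_ge_atTop 1, ht.eventually_ge_atTop 1, eventually_ge_atTop 2] with x hx1 hx2 hx3
  simp only [Function.comp] at hx1
  set L := Real.log x with hL
  have hL0 : 0 < L := by linarith
  have hCL : 1 ≤ C * L := by nlinarith
  set J := Nat.log 2 ⌊C * L⌋₊ + 1 with hJ
  have hfl : ⌊C * L⌋₊ ≠ 0 := by
    have := (Nat.one_le_floor_iff _).2 hCL
    omega
  have hJ1 : C * L < 2 ^ J := by
    have := Nat.lt_pow_succ_log_self (b := 2) (by norm_num) ⌊C * L⌋₊
    have h := (Nat.floor_lt (by positivity)).1 this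
    push_cast at h
    exact h
  have hJ2 : (2 : ℝ) ^ J ≤ 2 * C * L := by
    have := Nat.pow_log_le_self 2 hfl
    have h := (Nat.le_floor_iff (by positivity)).1 this
    push_cast at h
    rw [hJ, pow_succ]; linarith
  have hstr : ∑ p ∈ (Nat.primesLE x).filter (fun p => p ∉ blockU P 0 J), (1 : ℝ) / p ≤ C := by
    refine le_trans (Finset.sum_le_sum_of_subset_of_nonneg ?_ fun _ _ _ => by positivity)
      (hB.strad x)
    intro p hp
    rw [Finset.mem_filter] at hp ⊢
    refine ⟨hp.1, fun h => hp.2 ?_⟩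
    have hpx := Nat.mem_primesLE.1 hp.1
    have hκ : κ p < J := by
      have h5 := hB.le_log p hpx.2
      have h6 : Real.log p ≤ L := Real.log_le_log (by exact_mod_cast hpx.2.pos) (by exact_mod_cast hpx.1)
      have h7 : (2 : ℝ) ^ κ p < 2 ^ J := by nlinarith
      exact (pow_lt_pow_iff_right₀ (by norm_num)).1 h7
    rw [blockU, Finset.mem_biUnion]
    exact ⟨κ p, by rw [Finset.mem_Ico]; omega, h⟩
  have hprime : ∀ p ∈ blockU P 0 J, p.Prime := fun p hp =>
    hB.prime _ p (kappa_of_mem_blockU hB.kappa hp).2.2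
  have a1 := h1 x (by omega)
  have a2 := h2 _ x hprime hstr
  have a3 := h3 J
  have a4 : (∑ n ∈ Finset.Icc 1 x, (tauPlus n : ℝ)) ≤ 2 * ∑ n ∈ Finset.Icc 1 x, (Lf n : ℝ) := by
    rw [Finset.mul_sum]
    exact Finset.sum_le_sum fun n _ => by exact_mod_cast tauPlus_le_Lf n
  have hw : wt J ≤ 1 / (Real.log L) ^ ((3 : ℝ) / 2) := by
    rw [wt_eq]
    apply one_div_le_one_div_of_le (by positivity)
    apply Real.rpow_le_rpow (by linarith) _ (by norm_num)
    have h8 : Real.log L ≤ J * Real.log 2 := by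
      rw [← Real.log_pow]
      apply Real.log_le_log hL0
      nlinarith
    have := log_two_bounds
    nlinarith [Nat.cast_nonneg (α := ℝ) J]
  have hb : (2 * Real.log 2 * Real.exp 1) ^ J ≤ (2 * C) ^ (2 - deltaEFT) * (L ^ (1 - deltaEFT) * L) := by
    have e : L ^ (2 - deltaEFT) = L ^ (1 - deltaEFT) * L := by
      rw [← Real.rpow_add_one hL0.ne']; congr 1; ring
    rw [base_pow, ← e, ← Real.mul_rpow (by positivity) (by positivity)]
    exact Real.rpow_le_rpow (by positivity) hJ2 two_sub_delta_pos.le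
  have hwt := (wt_pos J).le
  have hl2 := log_two_bounds.1
  have a5 : (2 * Real.log 2 * Real.exp 1) ^ J * wt J ≤
      ((2 * C) ^ (2 - deltaEFT) * (L ^ (1 - deltaEFT) * L)) * (1 / (Real.log L) ^ ((3 : ℝ) / 2)) := by
    gcongr
  set D := 1 / (Real.log L) ^ ((3 : ℝ) / 2) with hD
  have hD0 : 0 ≤ D := by positivity
  have a6 : L * ∑ n ∈ Finset.Icc 1 x, (Lf n : ℝ) ≤
      K₁ * x * (K₂ * (K₃ * (((2 * C) ^ (2 - deltaEFT) * (L ^ (1 - deltaEFT) * L)) * D))) := by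
    refine a1.trans ?_
    gcongr
    refine a2.trans ?_
    gcongr
    refine a3.trans ?_
    gcongr
  have a7 : ∑ n ∈ Finset.Icc 1 x, (Lf n : ℝ) ≤
      K₁ * x * (K₂ * (K₃ * ((2 * C) ^ (2 - deltaEFT) * L ^ (1 - deltaEFT) * D))) := by
    refine le_of_mul_le_mul_left (a6.trans (le_of_eq ?_)) hL0
    ring
  calc _ ≤ 2 * (K₁ * x * (K₂ * (K₃ * ((2 * C) ^ (2 - deltaEFT) * L ^ (1 - deltaEFT) * D)))) := by
        linarith
    _ = (2 * K₁ * K₂ * K₃ * (2 * C) ^ (2 - deltaEFT)) * x * L ^ (1 - deltaEFT) * D := by ring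
    _ ≤ (2 * K₁ * K₂ * K₃ * (2 * C) ^ (2 - deltaEFT) + 1) * x * L ^ (1 - deltaEFT) * D := by
        gcongr; linarith
    _ = _ := by rw [hD, mul_one_div]

/-! ### Close pairs of subsets -/

/-- The number of pairs of subsets of `A` whose products differ by a factor less than `2`. -/
noncomputable def closePairs (A : Finset ℕ) : ℕ :=
  ((A.powerset ×ˢ A.powerset).filter (fun x : Finset ℕ × Finset ℕ =>
    ∏ p ∈ x.1, p < 2 * ∏ p ∈ x.2, p ∧ ∏ p ∈ x.2, p < 2 * ∏ p ∈ x.1, p)).card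

/-- The nonempty subsets of `A` are distributed among the dyadic intervals containing their
products.  An interval with `N k ≥ t` subsets contributes `N k ≤ N k ^ 2 / t`, and the number of pairs
sharing an interval is at most `closePairs A`. -/
lemma le_tauPlus_add_closePairs {A : Finset ℕ} (hA : ∀ p ∈ A, p.Prime) {t : ℝ} (ht : 0 < t) :
    (2 : ℝ) ^ A.card - 1 ≤ t * tauPlus (∏ p ∈ A, p) + 1 / t * closePairs A := by
  set S := A.powerset.erase ∅ with hS
  set φ : Finset ℕ → ℕ := fun D => Nat.clog 2 (∏ p ∈ D, p) - 1 with hφ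
  set K := S.image φ with hK
  set T := (A.powerset ×ˢ A.powerset).filter (fun x : Finset ℕ × Finset ℕ =>
    ∏ p ∈ x.1, p < 2 * ∏ p ∈ x.2, p ∧ ∏ p ∈ x.2, p < 2 * ∏ p ∈ x.1, p) with hT
  have hspec : ∀ D ∈ S, 2 ^ φ D < ∏ p ∈ D, p ∧ ∏ p ∈ D, p ≤ 2 ^ (φ D + 1) := by
    intro D hD
    rw [hS, Finset.mem_erase, Finset.mem_powerset] at hD
    obtain ⟨q, hq⟩ := Finset.nonempty_iff_ne_empty.2 hD.1
    have h0 : ∏ p ∈ D, p ≠ 0 := Finset.prod_ne_zero_iff.2 fun p hp => (hA p (hD.2 hp)).ne_zero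
    have h1 : 1 < ∏ p ∈ D, p :=
      (hA q (hD.2 hq)).one_lt.trans_le (Nat.le_of_dvd (Nat.pos_of_ne_zero h0)
        (Finset.dvd_prod_of_mem _ hq))
    have h2 := Nat.clog_pos (b := 2) (by norm_num) h1
    refine ⟨Nat.pow_pred_clog_lt_self (by norm_num) h1, ?_⟩
    simp only [hφ]
    rw [Nat.sub_add_cancel h2]
    exact Nat.le_pow_clog (by norm_num) _
  have hKcard : K.card ≤ tauPlus (∏ p ∈ A, p) := by
    apply Finset.card_le_card
    intro k hk
    rw [hK, Finset.mem_image] at hk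
    obtain ⟨D, hD, rfl⟩ := hk
    obtain ⟨h1, h2⟩ := hspec D hD
    rw [hS, Finset.mem_erase, Finset.mem_powerset] at hD
    have h3 : ∏ p ∈ D, p ∣ ∏ p ∈ A, p := Finset.prod_dvd_prod_of_subset _ _ _ hD.2
    have h4 : ∏ p ∈ A, p ≠ 0 := Finset.prod_ne_zero_iff.2 fun p hp => (hA p hp).ne_zero
    rw [Finset.mem_filter, Finset.mem_range]
    refine ⟨?_, _, h3, h1, h2⟩
    calc φ D < 2 ^ φ D := Nat.lt_two_pow_self
      _ < _ := h1
      _ ≤ _ := Nat.le_of_dvd (Nat.pos_of_ne_zero h4) h3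
  set N : ℕ → ℕ := fun k => (S.filter (fun D => φ D = k)).card with hN
  have hsum : S.card = ∑ k ∈ K, N k :=
    Finset.card_eq_sum_card_fiberwise fun D hD => Finset.mem_image_of_mem φ hD
  have hsq : ∑ k ∈ K, N k * N k ≤ closePairs A := by
    calc ∑ k ∈ K, N k * N k
        ≤ ∑ k ∈ K, ((T.filter (fun x => φ x.1 ∈ K)).filter (fun x => φ x.1 = k)).card := by
          refine Finset.sum_le_sum fun k hk => ?_
          rw [hN]
          simp only
          rw [← Finset.card_product]
          apply Finset.card_le_card
          rintro ⟨D, D'⟩ hx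
          rw [Finset.mem_product, Finset.mem_filter, Finset.mem_filter] at hx
          obtain ⟨⟨h1, h2⟩, h3, h4⟩ := hx
          simp only at h1 h2 h3 h4
          have g1 := hspec D h1
          have g2 := hspec D' h3
          rw [h2, pow_succ] at g1
          rw [h4, pow_succ] at g2
          rw [Finset.mem_filter, Finset.mem_filter, hT, Finset.mem_filter, Finset.mem_product]
          refine ⟨⟨⟨⟨Finset.mem_of_mem_erase h1, Finset.mem_of_mem_erase h3⟩, ?_, ?_⟩, ?_⟩, h2⟩
          · simp only; omega
          · simp only; omega
          · simp only; rw [h2]; exact hk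
      _ = (T.filter (fun x => φ x.1 ∈ K)).card :=
          (Finset.card_eq_sum_card_fiberwise fun x hx => (Finset.mem_filter.1 hx).2).symm
      _ ≤ T.card := Finset.card_filter_le _ _
      _ = closePairs A := rfl
  have hSc : (S.card : ℝ) = 2 ^ A.card - 1 := by
    rw [hS, Finset.card_erase_of_mem (Finset.empty_mem_powerset _), Finset.card_powerset,
      Nat.cast_sub Nat.one_le_two_pow]
    push_cast; ring
  have hsqR : ∑ k ∈ K, (N k : ℝ) * N k ≤ closePairs A := by exact_mod_cast hsq
  have hKR : (K.card : ℝ) ≤ tauPlus (∏ p ∈ A, p) := by exact_mod_cast hKcard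
  calc (2 : ℝ) ^ A.card - 1 = ∑ k ∈ K, (N k : ℝ) := by rw [← hSc, hsum]; push_cast; rfl
    _ ≤ ∑ k ∈ K, (t + 1 / t * ((N k : ℝ) * N k)) := by
        refine Finset.sum_le_sum fun k _ => ?_
        -- either `N k ≤ t` or `N k ≤ N k ^ 2 / t`
        rcases le_total (N k : ℝ) t with h | h
        · have : 0 ≤ 1 / t * ((N k : ℝ) * N k) := by positivity
          linarith
        · have : (N k : ℝ) ≤ 1 / t * ((N k : ℝ) * N k) := by
            rw [one_div_mul_eq_div, le_div_iff₀ ht]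
            exact mul_le_mul_of_nonneg_left h (by positivity)
          linarith
    _ = t * K.card + 1 / t * ∑ k ∈ K, (N k : ℝ) * N k := by
        rw [Finset.sum_add_distrib, Finset.sum_const, nsmul_eq_mul, Finset.mul_sum, mul_comm t]
    _ ≤ _ := by gcongr

/-- The pairs of subsets of `B` which agree on the primes lying in blocks beyond the `k`-th one. -/
noncomputable def agreePairs (κ : ℕ → ℕ) (k : ℕ) (B : Finset ℕ) : Finset (Finset ℕ × Finset ℕ) :=
  (B.powerset ×ˢ B.powerset).filter (fun x => ∀ q ∈ B, k < κ q → (q ∈ x.1 ↔ q ∈ x.2))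

/-- Such a pair is determined by its first component and the part of the second one in the blocks
up to the `k`-th. -/
lemma card_agreePairs_le (κ : ℕ → ℕ) (k : ℕ) (B : Finset ℕ) :
    (agreePairs κ k B).card ≤ 2 ^ B.card * 2 ^ cntBelow κ (k + 1) B := by
  rw [cntBelow, ← Finset.card_powerset, ← Finset.card_powerset, ← Finset.card_product]
  refine Finset.card_le_card_of_injOn (fun x => (x.1, x.2.filter (fun p => κ p < k + 1))) ?_ ?_
  · intro x hx
    have hx := (Finset.mem_filter.1 (Finset.mem_coe.1 hx)).1
    rw [Finset.mem_product, Finset.mem_powerset, Finset.mem_powerset] at hx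
    rw [Finset.mem_coe, Finset.mem_product, Finset.mem_powerset, Finset.mem_powerset]
    exact ⟨hx.1, Finset.filter_subset_filter _ hx.2⟩
  · rintro ⟨D, E⟩ hx ⟨D', E'⟩ hy hxy
    have hx := Finset.mem_filter.1 (Finset.mem_coe.1 hx)
    have hy := Finset.mem_filter.1 (Finset.mem_coe.1 hy)
    rw [Finset.mem_product, Finset.mem_powerset, Finset.mem_powerset] at hx hy
    simp only [Prod.mk.injEq] at hxy hx hy ⊢
    obtain ⟨rfl, he⟩ := hxy
    refine ⟨rfl, ?_⟩
    ext q
    by_cases hq : κ q < k + 1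
    · have := Finset.ext_iff.1 he q
      have hq₁ : κ q ≤ k := by omega
      simpa [hq₁] using this
    · constructor
      · intro h
        exact (hy.2 q (hx.1.2 h) (by omega)).1 ((hx.2 q (hx.1.2 h) (by omega)).2 h)
      · intro h
        exact (hx.2 q (hy.1.2 h) (by omega)).1 ((hy.2 q (hy.1.2 h) (by omega)).2 h)

/-- The pairs `(D, E)` of subsets of `B` agreeing beyond the block of `p` for which the products
over `D ∪ {p}` and over `E` differ by a factor less than `2`. -/
noncomputable def pivotPairs (κ : ℕ → ℕ) (p : ℕ) (B : Finset ℕ) : Finset (Finset ℕ × Finset ℕ) :=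
  (agreePairs κ (κ p) B).filter (fun x : Finset ℕ × Finset ℕ =>
    p * ∏ q ∈ x.1, q < 2 * ∏ q ∈ x.2, q ∧ ∏ q ∈ x.2, q < 2 * (p * ∏ q ∈ x.1, q))

/-- If `p` lies in `D` but not in `E`, and in a block of maximal index among the primes at which
`D` and `E` differ, then removing `p` from `D` gives a pivot pair. -/
lemma mem_pivotPairs_aux {κ : ℕ → ℕ} {A D E : Finset ℕ} {p : ℕ} (hD : D ⊆ A) (hE : E ⊆ A)
    (hpD : p ∈ D) (hpE : p ∉ E)
    (hmax : ∀ q, (q ∈ D ∧ q ∉ E) ∨ (q ∈ E ∧ q ∉ D) → κ q ≤ κ p)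
    (h1 : ∏ q ∈ D, q < 2 * ∏ q ∈ E, q) (h2 : ∏ q ∈ E, q < 2 * ∏ q ∈ D, q) :
    (D.erase p, E) ∈ pivotPairs κ p (A.erase p) := by
  rw [pivotPairs, agreePairs, Finset.mem_filter, Finset.mem_filter, Finset.mem_product,
    Finset.mem_powerset, Finset.mem_powerset]
  simp only
  rw [Finset.mul_prod_erase D (fun q => q) hpD]
  refine ⟨⟨⟨Finset.erase_subset_erase _ hD, Finset.subset_erase.2 ⟨hE, hpE⟩⟩, ?_⟩, h1, h2⟩
  intro q hq hκ
  rw [Finset.mem_erase] at hq ⊢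
  have := hmax q
  constructor
  · intro h
    by_contra hc
    have := this (Or.inl ⟨h.2, hc⟩)
    omega
  · intro h
    refine ⟨hq.1, ?_⟩
    by_contra hc
    have := this (Or.inr ⟨h, hc⟩)
    omega

/-- Two distinct subsets of `A` are told apart by a prime in the last block where they differ. -/
lemma closePairs_le (κ : ℕ → ℕ) (A : Finset ℕ) :
    closePairs A ≤ 2 ^ A.card + ∑ p ∈ A, 2 * (pivotPairs κ p (A.erase p)).card := by
  have hsub : (A.powerset ×ˢ A.powerset).filter (fun x : Finset ℕ × Finset ℕ =>
      ∏ p ∈ x.1, p < 2 * ∏ p ∈ x.2, p ∧ ∏ p ∈ x.2, p < 2 * ∏ p ∈ x.1, p) ⊆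
      A.powerset.image (fun D => (D, D)) ∪ A.biUnion (fun p =>
        (pivotPairs κ p (A.erase p)).image (fun x => (insert p x.1, x.2)) ∪
        (pivotPairs κ p (A.erase p)).image (fun x => (x.2, insert p x.1))) := by
    rintro ⟨D, E⟩ hx
    rw [Finset.mem_filter, Finset.mem_product, Finset.mem_powerset, Finset.mem_powerset] at hx
    simp only at hx
    obtain ⟨⟨hD, hE⟩, h1, h2⟩ := hx
    rw [Finset.mem_union]
    by_cases hDE : D = E
    · left
      subst hDE
      exact Finset.mem_image.2 ⟨D, Finset.mem_powerset.2 hD, rfl⟩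
    right
    set X := (A.filter (fun q => (q ∈ D ∧ q ∉ E) ∨ (q ∈ E ∧ q ∉ D))) with hX
    have hXn : X.Nonempty := by
      by_contra hc
      rw [Finset.not_nonempty_iff_eq_empty] at hc
      apply hDE
      ext q
      by_contra hq
      have : q ∈ X := by
        rw [hX, Finset.mem_filter]
        by_cases a1 : q ∈ D
        · have a2 : q ∉ E := fun a2 => hq (by simp [a1, a2])
          exact ⟨hD a1, Or.inl ⟨a1, a2⟩⟩
        · have a2 : q ∈ E := by_contra fun a2 => hq (by simp [a1, a2])
          exact ⟨hE a2, Or.inr ⟨a2, a1⟩⟩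
      rw [hc] at this
      simp at this
    obtain ⟨p, hpX, hmax⟩ := Finset.exists_max_image X κ hXn
    rw [hX, Finset.mem_filter] at hpX
    have hmax' : ∀ q, (q ∈ D ∧ q ∉ E) ∨ (q ∈ E ∧ q ∉ D) → κ q ≤ κ p := fun q hq => by
      apply hmax
      rw [hX, Finset.mem_filter]
      refine ⟨?_, hq⟩
      rcases hq with h | h
      · exact hD h.1
      · exact hE h.1
    rw [Finset.mem_biUnion]
    refine ⟨p, hpX.1, ?_⟩
    rw [Finset.mem_union]
    rcases hpX.2 with ⟨b1, b2⟩ | ⟨b1, b2⟩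
    · left
      refine Finset.mem_image.2 ⟨(D.erase p, E), mem_pivotPairs_aux hD hE b1 b2 hmax' h1 h2, ?_⟩
      simp only [Finset.insert_erase b1]
    · right
      refine Finset.mem_image.2 ⟨(E.erase p, D), mem_pivotPairs_aux hE hD b1 b2
        (fun q hq => hmax' q hq.symm) h2 h1, ?_⟩
      simp only [Finset.insert_erase b1]
  refine (Finset.card_le_card hsub).trans ((Finset.card_union_le _ _).trans ?_)
  refine add_le_add (Finset.card_image_le.trans (Finset.card_powerset A).le) ?_
  refine Finset.card_biUnion_le.trans (Finset.sum_le_sum fun p _ => ?_)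
  refine (Finset.card_union_le _ _).trans ?_
  rw [two_mul]
  exact add_le_add Finset.card_image_le Finset.card_image_le

/-! ### Summation over the pivot prime -/

section
variable {P : ℕ → Finset ℕ} {κ : ℕ → ℕ} {C : ℝ}

/-- The sum over a pivot prime: its size is determined up to a factor `4` by the other primes. -/
lemma sum_pivotPairs_le (hB : BlockSys P κ C) (s N : ℕ) {B : Finset ℕ} (hBU : B ⊆ blockU P s N) :
    ∑ p ∈ blockU P s N, 1 / (p : ℝ) * (pivotPairs κ p B).card ≤
      ∑ k ∈ Finset.Ico s (s + N), (2 : ℝ) ^ B.card * 2 ^ cntBelow κ (k + 1) B * (C / 2 ^ k) := by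
  rw [sum_blockU hB.kappa]
  refine Finset.sum_le_sum fun k _ => ?_
  have hpos : ∀ D ⊆ B, 0 < ∏ q ∈ D, q := fun D hD => Finset.prod_pos fun q hq =>
    (hB.prime _ q (kappa_of_mem_blockU hB.kappa (hBU (hD hq))).2.2).pos
  calc ∑ p ∈ P k, 1 / (p : ℝ) * (pivotPairs κ p B).card
      = ∑ p ∈ P k, ∑ x ∈ agreePairs κ k B,
          (if p * ∏ q ∈ x.1, q < 2 * ∏ q ∈ x.2, q ∧ ∏ q ∈ x.2, q < 2 * (p * ∏ q ∈ x.1, q)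
            then 1 / (p : ℝ) else 0) := by
        refine Finset.sum_congr rfl fun p hp => ?_
        rw [← Finset.sum_filter, Finset.sum_const, nsmul_eq_mul, mul_comm, pivotPairs, hB.kappa k p hp]
    _ = ∑ x ∈ agreePairs κ k B, ∑ p ∈ P k,
          (if p * ∏ q ∈ x.1, q < 2 * ∏ q ∈ x.2, q ∧ ∏ q ∈ x.2, q < 2 * (p * ∏ q ∈ x.1, q)
            then 1 / (p : ℝ) else 0) := Finset.sum_comm
    _ ≤ ∑ x ∈ agreePairs κ k B, C / 2 ^ k := by
        refine Finset.sum_le_sum fun x hx => ?_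
        have hx := (Finset.mem_filter.1 hx).1
        rw [Finset.mem_product, Finset.mem_powerset, Finset.mem_powerset] at hx
        have d1 : (0 : ℝ) < (∏ q ∈ x.1, q : ℕ) := by exact_mod_cast hpos _ hx.1
        have d2 : (0 : ℝ) < (∏ q ∈ x.2, q : ℕ) := by exact_mod_cast hpos _ hx.2
        rw [← Finset.sum_filter]
        refine le_trans (Finset.sum_le_sum_of_subset_of_nonneg ?_ fun _ _ _ => by positivity)
          (hB.short k ((∏ q ∈ x.2, q : ℕ) / (2 * (∏ q ∈ x.1, q : ℕ))) (by positivity))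
        intro p hp
        rw [Finset.mem_filter] at hp ⊢
        obtain ⟨hp0, h1, h2⟩ := hp
        have h1 : (p : ℝ) * (∏ q ∈ x.1, q : ℕ) < 2 * (∏ q ∈ x.2, q : ℕ) := by exact_mod_cast h1
        have h2 : ((∏ q ∈ x.2, q : ℕ) : ℝ) < 2 * (p * (∏ q ∈ x.1, q : ℕ)) := by exact_mod_cast h2
        refine ⟨hp0, ?_, ?_⟩
        · rw [div_lt_iff₀ (by positivity)]; linarith
        · rw [← mul_div_assoc, le_div_iff₀ (by positivity)]; linarith
    _ = (agreePairs κ k B).card * (C / 2 ^ k) := by rw [Finset.sum_const, nsmul_eq_mul]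
    _ ≤ _ := by
        have := hB.one_le
        gcongr
        exact_mod_cast card_agreePairs_le κ k B

/-- Splitting a family at level `N₁`, with weight `2` for each prime below the splitting point. -/
lemma sum_two_pow_cntBelow_le (hB : BlockSys P κ C) (s N₁ N₂ n : ℕ) {f : ℕ → ℝ}
    (hf : ∀ p, 0 ≤ f p) :
    ∑ B ∈ (blockU P s (N₁ + N₂)).powerset, (if B.card = n ∧ Barrier κ s (N₁ + N₂) 0 B then
      (∏ p ∈ B, f p) * 2 ^ cntBelow κ (s + N₁) B else 0) ≤
    ∑ c ∈ Finset.range (N₁ + 1), 2 ^ c * famSum P κ f s N₁ 0 c *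
      famSum P κ f (s + N₁) N₂ (N₁ - c) (n - c) := by
  have hprod : ∀ A : Finset ℕ, 0 ≤ ∏ p ∈ A, f p := fun A => Finset.prod_nonneg fun p _ => hf p
  rw [blockU_add, sum_powerset_union (blockU_disjoint hB.kappa s N₁ N₂)]
  calc _ ≤ ∑ A ∈ (blockU P s N₁).powerset, ∑ B ∈ (blockU P (s + N₁) N₂).powerset,
        ∑ c ∈ Finset.range (N₁ + 1), 2 ^ c *
          (if A.card = c ∧ Barrier κ s N₁ 0 A then ∏ p ∈ A, f p else 0) *
          (if B.card = n - c ∧ Barrier κ (s + N₁) N₂ (N₁ - c) B then ∏ p ∈ B, f p else 0) := by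
        refine Finset.sum_le_sum fun A hA => Finset.sum_le_sum fun B hB' => ?_
        rw [Finset.mem_powerset] at hA hB'
        have hnn : ∀ c : ℕ, 0 ≤ (2 : ℝ) ^ c *
          (if A.card = c ∧ Barrier κ s N₁ 0 A then ∏ p ∈ A, f p else 0) *
          (if B.card = n - c ∧ Barrier κ (s + N₁) N₂ (N₁ - c) B then ∏ p ∈ B, f p else 0) := by
          intro c
          have := hprod A
          have := hprod B
          split_ifs <;> positivity
        split_ifs with h
        swap
        · exact Finset.sum_nonneg fun c _ => hnn c
        have hd : Disjoint A B := Finset.disjoint_of_subset_left hA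
          (Finset.disjoint_of_subset_right hB' (blockU_disjoint hB.kappa s N₁ N₂))
        have hkA : ∀ p ∈ A, κ p < s + N₁ := fun p hp =>
          (kappa_of_mem_blockU hB.kappa (hA hp)).2.1
        have hkB : ∀ p ∈ B, s + N₁ ≤ κ p := fun p hp =>
          (kappa_of_mem_blockU hB.kappa (hB' hp)).1
        have hcut : ∀ i, cntBelow κ (s + N₁ + i) (A ∪ B) = A.card + cntBelow κ (s + N₁ + i) B :=
          fun i => by
            rw [cntBelow_union hd, cntBelow_eq_card fun p hp => by have := hkA p hp; omega]
        have h0 : cntBelow κ (s + N₁) (A ∪ B) = A.card := by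
          rw [cntBelow_union hd, cntBelow_eq_card hkA, cntBelow_eq_zero hkB, add_zero]
        have hc : A.card ≤ N₁ := by
          have := h.2 N₁ (by omega)
          rw [h0] at this; omega
        have hcard : B.card = n - A.card := by
          have := h.1
          rw [Finset.card_union_of_disjoint hd] at this
          omega
        have hb1 : Barrier κ s N₁ 0 A := fun j hj =>
          (cntBelow_mono Finset.subset_union_left).trans (h.2 j (by omega))
        have hb2 : Barrier κ (s + N₁) N₂ (N₁ - A.card) B := fun j hj => by
          have := h.2 (N₁ + j) (by omega)
          rw [← add_assoc, hcut] at this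
          omega
        refine le_trans (le_of_eq ?_) (Finset.single_le_sum (fun c _ => hnn c)
          (Finset.mem_range.2 (Nat.lt_succ_of_le hc)))
        rw [if_pos ⟨rfl, hb1⟩, if_pos ⟨hcard, hb2⟩, h0, Finset.prod_union hd]
        ring
    _ = _ := by
        rw [Finset.sum_congr rfl fun A _ => Finset.sum_comm, Finset.sum_comm]
        refine Finset.sum_congr rfl fun c _ => ?_
        rw [famSum, famSum, mul_assoc, Finset.sum_mul, Finset.mul_sum]
        refine Finset.sum_congr rfl fun A _ => ?_
        rw [Finset.mul_sum, Finset.mul_sum]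
        exact Finset.sum_congr rfl fun B _ => by ring

end

/-! ### The second moment bound -/

section
variable {P : ℕ → Finset ℕ} {κ : ℕ → ℕ} {C : ℝ}

/-- The split sums of `sum_two_pow_cntBelow_le` for the weight `1 / p`: the second factor starts with
room `N₁ - c` below the barrier and ends within one step of it, and the sum over the room converges
since `e / 4 < 1`. -/
lemma exists_split_le (hB : BlockSys P κ C) : ∃ K : ℝ, 0 ≤ K ∧ ∀ s N₁ N₂ n : ℕ, n + 1 = N₁ + N₂ →
    ∑ c ∈ Finset.range (N₁ + 1), 2 ^ c * famSum P κ (fun p => 1 / (p : ℝ)) s N₁ 0 c *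
      famSum P κ (fun p => 1 / (p : ℝ)) (s + N₁) N₂ (N₁ - c) (n - c) ≤
    K * (2 ^ N₁ * Real.log 2 ^ n * Real.exp 1 ^ (n + 1) * (wt N₁ * wt N₂)) := by
  obtain ⟨l1, l2⟩ := log_two_bounds
  set l := Real.log 2 with hl
  have hl0 : 0 < l := by linarith
  have hf : ∀ p : ℕ, (0 : ℝ) ≤ 1 / p := fun p => by positivity
  obtain ⟨K, hK0, hK⟩ := exists_sum_sq_geom_le (Real.exp 1 / 4) (by positivity)
    (by have := Real.exp_one_lt_d9; linarith)
  refine ⟨48 * K, by positivity, fun s N₁ N₂ n hn => ?_⟩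
  have w1 := (wt_pos N₁).le
  have w2 := (wt_pos N₂).le
  rw [← Finset.sum_range_reflect]
  calc _ ≤ ∑ r ∈ Finset.range (N₁ + 1), 48 * (2 ^ N₁ * l ^ n * Real.exp 1 ^ (n + 1) *
        (wt N₁ * wt N₂)) * (((r : ℝ) + 1) ^ 2 * (Real.exp 1 / 4) ^ r) := by
        refine Finset.sum_le_sum fun r hr => ?_
        have hr : r ≤ N₁ := by simpa [Nat.lt_succ_iff] using hr
        rw [Nat.add_sub_cancel, Nat.sub_sub_self hr]
        set c := N₁ - r with hc
        have a1 : famSum P κ (fun p => 1 / (p : ℝ)) s N₁ 0 c ≤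
            l ^ c * (2 * ((r : ℝ) + 1) * Real.exp N₁ * wt N₁) := by
          refine (famSum_le hB.kappa hf l hB.sum_le _ _ _ _).trans ?_
          have := parkW_zero_le N₁ c (by omega)
          have e : (N₁ : ℝ) - c + 1 = r + 1 := by rw [hc, Nat.cast_sub hr]; ring
          rw [e] at this
          gcongr
        have a2 : famSum P κ (fun p => 1 / (p : ℝ)) (s + N₁) N₂ r (n - c) ≤
            l ^ (n - c) * (24 * (((r : ℝ) + 1) * (Real.exp 1 / 2) ^ r) * Real.exp N₂ * wt N₂) := by
          refine (famSum_le hB.kappa hf l hB.sum_le _ _ _ _).trans ?_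
          have := parkW_up_le r N₂ (n - c) (by omega) (by omega)
          gcongr
        have a3 : l ^ c * l ^ (n - c) ≤ l ^ n := by
          rw [← pow_add]
          exact pow_le_pow_of_le_one hl0.le (by linarith) (by omega)
        have e1 : Real.exp N₁ * Real.exp N₂ = Real.exp 1 ^ (n + 1) := by
          rw [← Real.exp_add, Real.exp_one_pow, hn]; push_cast; rfl
        have e2 : (2 : ℝ) ^ c * (Real.exp 1 / 2) ^ r = 2 ^ N₁ * (Real.exp 1 / 4) ^ r := by
          have : (2 : ℝ) ^ N₁ = 2 ^ c * 2 ^ r := by rw [← pow_add]; congr 1; omega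
          rw [this, mul_assoc, ← mul_pow]; congr 2; ring
        calc _ ≤ 2 ^ c * (l ^ c * (2 * ((r : ℝ) + 1) * Real.exp N₁ * wt N₁)) *
              (l ^ (n - c) * (24 * (((r : ℝ) + 1) * (Real.exp 1 / 2) ^ r) * Real.exp N₂ * wt N₂)) := by
              have := famSum_nonneg (P := P) (κ := κ) hf (s + N₁) N₂ r (n - c)
              gcongr
          _ = (l ^ c * l ^ (n - c)) * (48 * ((2 : ℝ) ^ c * (Real.exp 1 / 2) ^ r) *
              (Real.exp N₁ * Real.exp N₂) * (wt N₁ * wt N₂) * ((r : ℝ) + 1) ^ 2) := by ring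
          _ ≤ l ^ n * (48 * ((2 : ℝ) ^ c * (Real.exp 1 / 2) ^ r) *
              (Real.exp N₁ * Real.exp N₂) * (wt N₁ * wt N₂) * ((r : ℝ) + 1) ^ 2) := by
              gcongr
          _ = _ := by rw [e1, e2]; ring
    _ ≤ 48 * (2 ^ N₁ * l ^ n * Real.exp 1 ^ (n + 1) * (wt N₁ * wt N₂)) * K := by
        rw [← Finset.mul_sum]
        gcongr
        exact hK _
    _ = _ := by ring

/-- The off-diagonal close pairs, after summation over the pivot prime in the block `s + j`. -/
lemma sum_pivot_le (hB : BlockSys P κ C) (s n : ℕ) :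
    ∑ A ∈ (blockU P s (n + 1)).powerset, ∑ p ∈ A,
      (if A.card = n + 1 ∧ Barrier κ s (n + 1) 0 A then
        2 * (∏ q ∈ A, 1 / (q : ℝ)) * (pivotPairs κ p (A.erase p)).card else 0) ≤
    ∑ j ∈ Finset.range (n + 1), 2 * 2 ^ n * (C / 2 ^ (s + j)) *
      ∑ B ∈ (blockU P s (n + 1)).powerset, (if B.card = n ∧ Barrier κ s (n + 1) 0 B then
        (∏ q ∈ B, 1 / (q : ℝ)) * 2 ^ cntBelow κ (s + (j + 1)) B else 0) := by
  set U := blockU P s (n + 1) with hU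
  have hprod : ∀ A : Finset ℕ, 0 ≤ ∏ q ∈ A, 1 / (q : ℝ) := fun A =>
    Finset.prod_nonneg fun p _ => by positivity
  set w : Finset ℕ → ℝ := fun B => if B.card = n ∧ Barrier κ s (n + 1) 0 B then
    ∏ q ∈ B, 1 / (q : ℝ) else 0 with hw
  have hw0 : ∀ B, 0 ≤ w B := fun B => by
    have := hprod B
    simp only [hw]; split_ifs
    · exact this
    · exact le_rfl
  rw [sum_powerset_mem (fun p A => if A.card = n + 1 ∧ Barrier κ s (n + 1) 0 A then
        2 * (∏ q ∈ A, 1 / (q : ℝ)) * (pivotPairs κ p (A.erase p)).card else 0)]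
  calc _ ≤ ∑ p ∈ U, ∑ B ∈ U.powerset, 2 * w B * (1 / (p : ℝ) * (pivotPairs κ p B).card) := by
        refine Finset.sum_le_sum fun p _ => ?_
        refine le_trans (Finset.sum_le_sum fun B hB' => ?_)
          (Finset.sum_le_sum_of_subset_of_nonneg
            (Finset.powerset_mono.2 (Finset.erase_subset p U)) fun B _ _ => by
              have := hw0 B; positivity)
        have hpB : p ∉ B := fun h => (Finset.mem_erase.1 (Finset.mem_powerset.1 hB' h)).1 rfl
        split_ifs with h
        · have h1 : B.card = n ∧ Barrier κ s (n + 1) 0 B := by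
            refine ⟨?_, barrier_mono (Finset.subset_insert _ _) h.2⟩
            have := h.1
            rw [Finset.card_insert_of_notMem hpB] at this
            omega
          simp only [hw]
          rw [if_pos h1, Finset.erase_insert hpB, Finset.prod_insert hpB]
          exact le_of_eq (by ring)
        · have := hw0 B; positivity
    _ = ∑ B ∈ U.powerset, 2 * w B * ∑ p ∈ U, 1 / (p : ℝ) * (pivotPairs κ p B).card := by
        rw [Finset.sum_comm]
        exact Finset.sum_congr rfl fun B _ => by rw [Finset.mul_sum]
    _ ≤ ∑ B ∈ U.powerset, 2 * w B * ∑ j ∈ Finset.range (n + 1),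
          2 ^ B.card * 2 ^ cntBelow κ (s + (j + 1)) B * (C / 2 ^ (s + j)) := by
        refine Finset.sum_le_sum fun B hB' => ?_
        have := sum_pivotPairs_le hB s (n + 1) (Finset.mem_powerset.1 hB')
        rw [Finset.sum_Ico_eq_sum_range, Nat.add_sub_cancel_left] at this
        have h0 := hw0 B
        exact mul_le_mul_of_nonneg_left this (by positivity)
    _ = ∑ B ∈ U.powerset, ∑ j ∈ Finset.range (n + 1), 2 * 2 ^ n * (C / 2 ^ (s + j)) *
          (if B.card = n ∧ Barrier κ s (n + 1) 0 B then
            (∏ q ∈ B, 1 / (q : ℝ)) * 2 ^ cntBelow κ (s + (j + 1)) B else 0) := by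
        refine Finset.sum_congr rfl fun B _ => ?_
        rw [Finset.mul_sum]
        refine Finset.sum_congr rfl fun j _ => ?_
        simp only [hw]
        split_ifs with h
        · rw [h.1]; ring
        · ring
    _ = _ := by
        rw [Finset.sum_comm]
        exact Finset.sum_congr rfl fun j _ => by rw [Finset.mul_sum]

/-- The second moment bound: on average over the family, a set of `J` primes has `O(2 ^ J)` close
pairs, the order of magnitude of the number of diagonal ones. -/
lemma exists_sum_closePairs_le (hB : BlockSys P κ C) : ∃ K : ℝ, 0 < K ∧ ∀ s J : ℕ,
    ∑ A ∈ (blockU P s J).powerset, (if A.card = J ∧ Barrier κ s J 0 A then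
      (∏ q ∈ A, 1 / (q : ℝ)) * closePairs A else 0) ≤
    K * (2 ^ J * ((Real.log 2 * Real.exp 1) ^ J * wt J)) := by
  obtain ⟨l1, l2⟩ := log_two_bounds
  set l := Real.log 2 with hl
  have hl0 : 0 < l := by linarith
  have hC := hB.one_le
  have hf : ∀ p : ℕ, (0 : ℝ) ≤ 1 / p := fun p => by positivity
  obtain ⟨K, hK0, hK⟩ := exists_split_le hB
  refine ⟨2 + 48 * C * K / l, by positivity, fun s J => ?_⟩
  have hprod : ∀ A : Finset ℕ, 0 ≤ ∏ q ∈ A, 1 / (q : ℝ) := fun A =>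
    Finset.prod_nonneg fun p _ => by positivity
  have hwJ := (wt_pos J).le
  have hdiag : famSum P κ (fun p => 1 / (p : ℝ)) s J 0 J ≤ 2 * ((l * Real.exp 1) ^ J * wt J) := by
    refine (famSum_le hB.kappa hf l hB.sum_le _ _ _ _).trans ?_
    have := parkW_zero_le J J le_rfl
    rw [sub_self, zero_add, mul_one] at this
    calc _ ≤ l ^ J * (2 * Real.exp J * wt J) := by gcongr
      _ = _ := by rw [mul_pow, Real.exp_one_pow]; ring
  have hoff : ∑ A ∈ (blockU P s J).powerset, ∑ p ∈ A,
      (if A.card = J ∧ Barrier κ s J 0 A then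
        2 * (∏ q ∈ A, 1 / (q : ℝ)) * (pivotPairs κ p (A.erase p)).card else 0) ≤
      48 * C * K / l * (2 ^ J * ((l * Real.exp 1) ^ J * wt J)) := by
    rcases J with _ | n
    · refine le_trans (le_of_eq ?_) (by positivity : (0 : ℝ) ≤ _)
      refine Finset.sum_eq_zero fun A _ => Finset.sum_eq_zero fun p hp => ?_
      rw [if_neg]
      intro h
      rw [Finset.card_eq_zero] at h
      rw [h.1] at hp
      simp at hp
    refine (sum_pivot_le hB s n).trans ?_
    calc _ ≤ ∑ j ∈ Finset.range (n + 1), 2 * 2 ^ n * (2 * C) * K * l ^ n * Real.exp 1 ^ (n + 1) *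
          (wt (j + 1) * wt (n + 1 - (j + 1))) := by
          refine Finset.sum_le_sum fun j hj => ?_
          rw [Finset.mem_range] at hj
          have hJ : j + 1 + (n + 1 - (j + 1)) = n + 1 := by omega
          have h1 := (sum_two_pow_cntBelow_le hB s (j + 1) (n + 1 - (j + 1)) n hf).trans
            (hK s (j + 1) (n + 1 - (j + 1)) n hJ.symm)
          rw [hJ] at h1
          have w1 := (wt_pos (j + 1)).le
          have w2 := (wt_pos (n + 1 - (j + 1))).le
          have h2 : C / 2 ^ (s + j) * 2 ^ (j + 1) ≤ 2 * C := by
            rw [div_mul_eq_mul_div, div_le_iff₀ (by positivity), pow_succ, pow_add]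
            have : (1 : ℝ) ≤ 2 ^ s := one_le_pow₀ (by norm_num)
            have h3 : C * 2 ^ j * 1 ≤ C * 2 ^ j * 2 ^ s := by gcongr
            linarith
          calc _ ≤ 2 * 2 ^ n * (C / 2 ^ (s + j)) * (K * (2 ^ (j + 1) * l ^ n * Real.exp 1 ^ (n + 1) *
                (wt (j + 1) * wt (n + 1 - (j + 1))))) := by gcongr
            _ = (C / 2 ^ (s + j) * 2 ^ (j + 1)) * (2 * 2 ^ n * K * l ^ n * Real.exp 1 ^ (n + 1) *
                (wt (j + 1) * wt (n + 1 - (j + 1)))) := by ring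
            _ ≤ (2 * C) * (2 * 2 ^ n * K * l ^ n * Real.exp 1 ^ (n + 1) *
                (wt (j + 1) * wt (n + 1 - (j + 1)))) := by gcongr
            _ = _ := by ring
      _ ≤ 2 * 2 ^ n * (2 * C) * K * l ^ n * Real.exp 1 ^ (n + 1) * (24 * wt (n + 1)) := by
          rw [← Finset.mul_sum]
          have h4 := wt_conv_le (n + 1)
          rw [Finset.sum_range_succ'] at h4
          have h5 : 0 ≤ wt 0 * wt (n + 1 - 0) := mul_nonneg (wt_pos _).le (wt_pos _).le
          gcongr
          linarith
      _ = _ := by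
          rw [mul_pow, pow_succ l, pow_succ (2 : ℝ)]
          field_simp
          ring
  calc _ ≤ ∑ A ∈ (blockU P s J).powerset, (2 ^ J *
        (if A.card = J ∧ Barrier κ s J 0 A then ∏ q ∈ A, 1 / (q : ℝ) else 0) + ∑ p ∈ A,
        (if A.card = J ∧ Barrier κ s J 0 A then
          2 * (∏ q ∈ A, 1 / (q : ℝ)) * (pivotPairs κ p (A.erase p)).card else 0)) := by
        refine Finset.sum_le_sum fun A _ => ?_
        split_ifs with h
        · have h1 : (closePairs A : ℝ) ≤ 2 ^ A.card + ∑ p ∈ A, 2 * ((pivotPairs κ p (A.erase p)).card : ℝ) := by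
            exact_mod_cast closePairs_le κ A
          rw [h.1] at h1
          calc _ ≤ (∏ q ∈ A, 1 / (q : ℝ)) *
                (2 ^ J + ∑ p ∈ A, 2 * ((pivotPairs κ p (A.erase p)).card : ℝ)) :=
                mul_le_mul_of_nonneg_left h1 (hprod A)
            _ = _ := by
                rw [mul_add, Finset.mul_sum, mul_comm]
                congr 1
                exact Finset.sum_congr rfl fun p _ => by ring
        · simp
    _ ≤ 2 ^ J * (2 * ((l * Real.exp 1) ^ J * wt J)) +
        48 * C * K / l * (2 ^ J * ((l * Real.exp 1) ^ J * wt J)) := by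
        rw [Finset.sum_add_distrib, ← Finset.mul_sum]
        rw [famSum] at hdiag
        gcongr
    _ = _ := by ring

end

/-! ### The lower bound -/

section
variable {P : ℕ → Finset ℕ} {κ : ℕ → ℕ} {C : ℝ}

lemma errSeq_parkW_le (J : ℕ) : errSeq (parkW 0 J) J ≤ 10 * parkW 0 J J := by
  have h0 := parkW_zero_self_ge J
  have hx : 0 < Real.exp J * wt J := mul_pos (Real.exp_pos _) (wt_pos J)
  match J, h0, hx with
  | 0, h0, hx => simp only [errSeq, shiftSeq]; linarith
  | 1, h0, hx =>
    have h := parkW_zero_le 1 0 (by omega)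
    simp only [errSeq, shiftSeq]
    push_cast at *
    nlinarith
  | k + 2, h0, hx =>
    have h := parkW_zero_le (k + 2) (k + 1) (by omega)
    have h' := parkW_zero_le (k + 2) k (by omega)
    simp only [errSeq, shiftSeq]
    push_cast at *
    nlinarith

/-- For blocks starting far enough out, the error term in `famSum_ge` is at most half of the main
term, so the ballot family has the expected total weight. -/
lemma famSum_diag_ge (hB : BlockSys P κ C) {s : ℕ} (hs : 120 * C ≤ 2 ^ s) (J : ℕ) :
    1 / 2 * ((Real.log 2 * Real.exp 1) ^ J * wt J) ≤ famSum P κ (fun p => 1 / (p : ℝ)) s J 0 J := by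
  obtain ⟨l1, l2⟩ := log_two_bounds
  set l := Real.log 2 with hl
  have hl0 : 0 < l := by linarith
  have hC := hB.one_le
  have h := famSum_ge (P := P) (κ := κ) (f := fun p => 1 / (p : ℝ)) hB.kappa
    (fun p => by positivity) l hl0 (fun k => C / 2 ^ k) (fun k => by positivity) s
    (fun k _ p hp => hB.inv_le k p hp) (fun k _ => hB.sum_ge k) J J
  refine le_trans ?_ h
  have hsum : ∑ k ∈ Finset.range J, 2 * (C / 2 ^ (s + k) / l) ≤ 1 / 20 := by
    calc _ = 2 * (C / 2 ^ s / l) * ∑ k ∈ Finset.range J, (1 / 2 : ℝ) ^ k := by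
          rw [Finset.mul_sum]
          refine Finset.sum_congr rfl fun k _ => ?_
          rw [pow_add, one_div, inv_pow]
          field_simp
      _ ≤ 2 * (C / 2 ^ s / l) * 2 := by
          gcongr; exact sum_geometric_two_le J
      _ ≤ 1 / 20 := by
          have h2 : (0 : ℝ) < 2 ^ s := by positivity
          rw [div_div, mul_div_assoc', div_mul_eq_mul_div, div_le_div_iff₀ (by positivity) (by norm_num)]
          nlinarith
  have he := errSeq_parkW_le J
  have hp := parkW_zero_self_ge J
  have he0 := errSeq_nonneg (parkW 0 J) (parkW_nonneg 0 J) J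
  have hp0 := parkW_nonneg 0 J J
  have h3 : (∑ k ∈ Finset.range J, 2 * (C / 2 ^ (s + k) / l)) * errSeq (parkW 0 J) J ≤
      1 / 20 * (10 * parkW 0 J J) := by gcongr
  have e : (l * Real.exp 1) ^ J * wt J = l ^ J * (Real.exp J * wt J) := by
    rw [mul_pow, ← Real.exp_nat_mul, mul_one, mul_assoc]
  rw [e]
  have hlJ : 0 < l ^ J := by positivity
  calc _ = l ^ J * (1 / 2 * (Real.exp J * wt J)) := by ring
    _ ≤ _ := by gcongr; linarith

/-- The average of `log ∏ A` over the ballot family is `O (2 ^ (s + J))`. -/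
lemma sum_log_ballot_le (hB : BlockSys P κ C) (s n : ℕ) :
    ∑ A ∈ (blockU P s (n + 1)).powerset, (if A.card = n + 1 ∧ Barrier κ s (n + 1) 0 A then
        (∑ p ∈ A, Real.log p) * ∏ p ∈ A, 1 / (p : ℝ) else 0) ≤
      4 * C * 2 ^ (s + (n + 1)) * ((Real.log 2 * Real.exp 1) ^ (n + 1) * wt (n + 1)) := by
  obtain ⟨l1, l2⟩ := log_two_bounds
  set l := Real.log 2 with hl
  have hl0 : 0 < l := by linarith
  have hC := hB.one_le
  have hw := (wt_pos (n + 1)).le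
  have hf : ∀ p : ℕ, (0 : ℝ) ≤ 1 / p := fun p => by positivity
  refine (fam_removal (P := P) (κ := κ) hf (fun p => Real.log p)
    (fun p => Real.log_natCast_nonneg p) s (n + 1) 0 n).trans ?_
  have h1 : ∑ p ∈ blockU P s (n + 1), Real.log p * (1 / (p : ℝ)) ≤ C * l * 2 ^ (s + (n + 1)) := by
    rw [sum_blockU hB.kappa]
    calc _ ≤ ∑ k ∈ Finset.Ico s (s + (n + 1)), C * l * 2 ^ k := by
          refine Finset.sum_le_sum fun k _ => ?_
          calc _ ≤ ∑ p ∈ P k, C * 2 ^ k * (1 / (p : ℝ)) :=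
                Finset.sum_le_sum fun p hp => by gcongr; exact hB.log_le k p hp
            _ = C * 2 ^ k * ∑ p ∈ P k, 1 / (p : ℝ) := by rw [Finset.mul_sum]
            _ ≤ C * 2 ^ k * l := by gcongr; exact hB.sum_le k
            _ = _ := by ring
      _ = C * l * ∑ k ∈ Finset.Ico s (s + (n + 1)), (2 : ℝ) ^ k := by rw [Finset.mul_sum]
      _ ≤ _ := by
          gcongr
          rw [geom_sum_Ico (by norm_num) (by omega)]
          have : (0 : ℝ) < 2 ^ s := by positivity
          norm_num
  have h2 := famSum_le (P := P) (κ := κ) hB.kappa hf l hB.sum_le s (n + 1) 0 n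
  have h3 := parkW_zero_le (n + 1) n (by omega)
  have h4 : parkW 0 (n + 1) n ≤ 4 * Real.exp 1 ^ (n + 1) * wt (n + 1) := by
    refine h3.trans (le_of_eq ?_)
    rw [← Real.exp_nat_mul, mul_one]
    push_cast; ring
  calc _ ≤ C * l * 2 ^ (s + (n + 1)) * (l ^ n * (4 * Real.exp 1 ^ (n + 1) * wt (n + 1))) := by
        gcongr
        · exact famSum_nonneg hf _ _ _ _
        · exact h2.trans (by gcongr)
    _ = _ := by rw [mul_pow, pow_succ l]; ring

/-- Markov's inequality, applied to `log ∏ A`: a quarter of the weight of the ballot family is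
carried by the sets whose product is at most `R`. -/
lemma ballot_small_ge (hB : BlockSys P κ C) {s : ℕ} (hs : 120 * C ≤ 2 ^ s) (n R : ℕ)
    (hR : 16 * C * 2 ^ (s + (n + 1)) ≤ Real.log R) :
    1 / 4 * ((Real.log 2 * Real.exp 1) ^ (n + 1) * wt (n + 1)) ≤
      ∑ A ∈ (blockU P s (n + 1)).powerset, (if (A.card = n + 1 ∧ Barrier κ s (n + 1) 0 A) ∧
        ∏ p ∈ A, p ≤ R then ∏ p ∈ A, 1 / (p : ℝ) else 0) := by
  have h1 := famSum_diag_ge hB hs (n + 1)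
  have h2 := sum_log_ballot_le hB s n
  have hC := hB.one_le
  have hM : 0 < 16 * C * 2 ^ (s + (n + 1)) := by positivity
  have hlR : 0 < Real.log R := hM.trans_le hR
  set S := (Real.log 2 * Real.exp 1) ^ (n + 1) * wt (n + 1) with hS
  have hS0 : 0 ≤ S := mul_nonneg (by have := log_two_bounds.1; positivity) (wt_pos _).le
  have h3 : famSum P κ (fun p => 1 / (p : ℝ)) s (n + 1) 0 (n + 1) ≤
      ∑ A ∈ (blockU P s (n + 1)).powerset, (if (A.card = n + 1 ∧ Barrier κ s (n + 1) 0 A) ∧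
        ∏ p ∈ A, p ≤ R then ∏ p ∈ A, 1 / (p : ℝ) else 0) + 1 / Real.log R *
      ∑ A ∈ (blockU P s (n + 1)).powerset, (if A.card = n + 1 ∧ Barrier κ s (n + 1) 0 A then
        (∑ p ∈ A, Real.log p) * ∏ p ∈ A, 1 / (p : ℝ) else 0) := by
    rw [Finset.mul_sum, ← Finset.sum_add_distrib]
    refine Finset.sum_le_sum fun A hA => ?_
    have hW : 0 ≤ ∏ p ∈ A, 1 / (p : ℝ) := Finset.prod_nonneg fun p _ => by positivity
    have hlog : 0 ≤ ∑ p ∈ A, Real.log p := Finset.sum_nonneg fun p _ => Real.log_natCast_nonneg p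
    by_cases hc : A.card = n + 1 ∧ Barrier κ s (n + 1) 0 A
    · by_cases hr : ∏ p ∈ A, p ≤ R
      · rw [if_pos hc, if_pos ⟨hc, hr⟩, if_pos hc]
        have : 0 ≤ 1 / Real.log R * ((∑ p ∈ A, Real.log p) * ∏ p ∈ A, 1 / (p : ℝ)) := by positivity
        linarith
      · rw [if_pos hc, if_neg (fun h => hr h.2), if_pos hc, zero_add, ← mul_assoc]
        have h5 : Real.log R ≤ ∑ p ∈ A, Real.log p := by
          have hp : ∀ p ∈ A, (p : ℝ) ≠ 0 := fun p hp => by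
            have := hB.prime _ p (kappa_of_mem_blockU hB.kappa (Finset.mem_powerset.1 hA hp)).2.2
            exact_mod_cast this.ne_zero
          rw [← Real.log_prod hp]
          have hR0 : 0 < R := by
            rcases Nat.eq_zero_or_pos R with h | h
            · subst h; simp at hlR
            · exact h
          apply Real.log_le_log (by exact_mod_cast hR0)
          exact (Nat.cast_le.2 (not_le.1 hr).le).trans_eq (Nat.cast_prod _ _)
        refine le_mul_of_one_le_left hW ?_
        rw [div_mul_eq_mul_div, one_mul, le_div_iff₀ hlR, one_mul]
        exact h5
    · rw [if_neg hc, if_neg (fun h => hc h.1), if_neg hc]; simp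
  have h4 : 1 / Real.log R * ∑ A ∈ (blockU P s (n + 1)).powerset,
      (if A.card = n + 1 ∧ Barrier κ s (n + 1) 0 A then
        (∑ p ∈ A, Real.log p) * ∏ p ∈ A, 1 / (p : ℝ) else 0) ≤ 1 / 4 * S := by
    calc _ ≤ 1 / Real.log R * (4 * C * 2 ^ (s + (n + 1)) * S) := by gcongr
      _ ≤ 1 / (16 * C * 2 ^ (s + (n + 1))) * (4 * C * 2 ^ (s + (n + 1)) * S) := by gcongr
      _ = 1 / 4 * S := by field_simp; norm_num
  linarith

/-- Distinct sets of primes have distinct products, so a sum over sets of primes with small product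
is bounded by the corresponding sum over integers. -/
lemma sum_prod_le_sum_Icc {F : Finset (Finset ℕ)} {R : ℕ} (hp : ∀ A ∈ F, ∀ p ∈ A, p.Prime)
    (hR : ∀ A ∈ F, ∏ p ∈ A, p ≤ R) :
    ∑ A ∈ F, (∏ p ∈ A, 1 / (p : ℝ)) * tauPlus (∏ p ∈ A, p) ≤
      ∑ a ∈ Finset.Icc 1 R, (tauPlus a : ℝ) / a := by
  have hinj : Set.InjOn (fun A : Finset ℕ => ∏ p ∈ A, p) F := by
    intro A hA B hB' h
    have h1 := Nat.primeFactors_prod (hp A hA)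
    have h2 := Nat.primeFactors_prod (hp B hB')
    simp only at h
    rw [← h1, ← h2, h]
  calc _ = ∑ A ∈ F, (tauPlus (∏ p ∈ A, p) : ℝ) / ((∏ p ∈ A, p : ℕ) : ℝ) := by
        refine Finset.sum_congr rfl fun A _ => ?_
        push_cast
        rw [Finset.prod_div_distrib, Finset.prod_const_one]
        ring
    _ = ∑ a ∈ F.image (fun A : Finset ℕ => ∏ p ∈ A, p), (tauPlus a : ℝ) / a := by
        rw [Finset.sum_image hinj]
    _ ≤ _ := by
        refine Finset.sum_le_sum_of_subset_of_nonneg ?_ fun _ _ _ => by positivity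
        intro a ha
        obtain ⟨A, hA, rfl⟩ := Finset.mem_image.1 ha
        exact Finset.mem_Icc.2 ⟨Finset.prod_pos fun p h => (hp A hA p h).pos, hR A hA⟩

/-- Lower bound for the logarithmic average of `tauPlus`: the ballot family contributes its total
weight times the maximal possible order `2 ^ J` of `tauPlus`. -/
lemma exists_sum_tauPlus_div_ge (hB : BlockSys P κ C) {s : ℕ} (hs : 120 * C ≤ 2 ^ s) :
    ∃ c : ℝ, 0 < c ∧ ∀ n R : ℕ, 16 * C * 2 ^ (s + (n + 1)) ≤ Real.log R →
      c * ((2 * Real.log 2 * Real.exp 1) ^ (n + 1) * wt (n + 1)) ≤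
        ∑ a ∈ Finset.Icc 1 R, (tauPlus a : ℝ) / a := by
  obtain ⟨K, hK, hcl⟩ := exists_sum_closePairs_le hB
  refine ⟨1 / (256 * K), by positivity, fun n R hR => ?_⟩
  have h1 := ballot_small_ge hB hs n R hR
  have h2 := hcl s (n + 1)
  set S := (Real.log 2 * Real.exp 1) ^ (n + 1) * wt (n + 1) with hS
  rw [← Finset.sum_filter] at h1 h2
  set F := (blockU P s (n + 1)).powerset.filter
    (fun A => (A.card = n + 1 ∧ Barrier κ s (n + 1) 0 A) ∧ ∏ p ∈ A, p ≤ R) with hF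
  have hprime : ∀ A ∈ F, ∀ p ∈ A, p.Prime := fun A hA p hp =>
    hB.prime _ p (kappa_of_mem_blockU hB.kappa
      (Finset.mem_powerset.1 (Finset.mem_filter.1 hA).1 hp)).2.2
  have hW : ∀ A : Finset ℕ, 0 ≤ ∏ p ∈ A, 1 / (p : ℝ) := fun A =>
    Finset.prod_nonneg fun p _ => by positivity
  have h3 := sum_prod_le_sum_Icc hprime (fun A hA => (Finset.mem_filter.1 hA).2.2)
  have h4 : ∑ A ∈ F, (∏ p ∈ A, 1 / (p : ℝ)) * closePairs A ≤ K * (2 ^ (n + 1) * S) := by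
    refine le_trans (Finset.sum_le_sum_of_subset_of_nonneg ?_ fun A _ _ => ?_) h2
    · intro A hA
      rw [hF, Finset.mem_filter] at hA
      exact Finset.mem_filter.2 ⟨hA.1, hA.2.1⟩
    · exact mul_nonneg (hW A) (Nat.cast_nonneg _)
  have h5 : 2 ^ n * ∑ A ∈ F, ∏ p ∈ A, 1 / (p : ℝ) ≤
      16 * K * ∑ A ∈ F, (∏ p ∈ A, 1 / (p : ℝ)) * tauPlus (∏ p ∈ A, p) +
      1 / (16 * K) * ∑ A ∈ F, (∏ p ∈ A, 1 / (p : ℝ)) * closePairs A := by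
    rw [Finset.mul_sum, Finset.mul_sum, Finset.mul_sum, ← Finset.sum_add_distrib]
    refine Finset.sum_le_sum fun A hA => ?_
    have h6 := le_tauPlus_add_closePairs (hprime A hA) (t := 16 * K) (by positivity)
    rw [(Finset.mem_filter.1 hA).2.1.1] at h6
    have h7 : (2 : ℝ) ^ n ≤ 2 ^ (n + 1) - 1 := by
      have : (1 : ℝ) ≤ 2 ^ n := one_le_pow₀ (by norm_num)
      rw [pow_succ]; linarith
    have h8 := mul_le_mul_of_nonneg_left (h7.trans h6) (hW A)
    calc _ = (∏ p ∈ A, 1 / (p : ℝ)) * 2 ^ n := by ring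
      _ ≤ _ := h8
      _ = _ := by ring
  have e : (2 * Real.log 2 * Real.exp 1) ^ (n + 1) * wt (n + 1) = 2 * (2 ^ n * S) := by
    rw [hS, mul_assoc 2, mul_pow 2, pow_succ (2 : ℝ)]; ring
  rw [e]
  have h9 : 1 / (16 * K) * ∑ A ∈ F, (∏ p ∈ A, 1 / (p : ℝ)) * closePairs A ≤ 1 / 8 * (2 ^ n * S) := by
    calc _ ≤ 1 / (16 * K) * (K * (2 ^ (n + 1) * S)) := by gcongr
      _ = _ := by field_simp; ring
  have h10 : 2 ^ n * (1 / 4 * S) ≤ 2 ^ n * ∑ A ∈ F, ∏ p ∈ A, 1 / (p : ℝ) := by gcongr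
  have h11 : 1 / 8 * (2 ^ n * S) ≤ 16 * K * ∑ a ∈ Finset.Icc 1 R, (tauPlus a : ℝ) / a := by
    have := mul_le_mul_of_nonneg_left h3 (show 0 ≤ 16 * K by positivity)
    linarith
  rw [div_mul_eq_mul_div, div_le_iff₀ (by positivity)]
  linarith

lemma log_le_log_sqrt_sqrt {x : ℕ} (hx : 16 ≤ x) :
    Real.log x ≤ 8 * Real.log (Nat.sqrt (Nat.sqrt x)) := by
  set R := Nat.sqrt (Nat.sqrt x) with hR
  have h2 : 2 ≤ R := Nat.le_sqrt.2 (Nat.le_sqrt.2 (by omega))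
  have h3 : Nat.sqrt x < (R + 1) * (R + 1) := Nat.lt_succ_sqrt _
  have h4 : x < (Nat.sqrt x + 1) * (Nat.sqrt x + 1) := Nat.lt_succ_sqrt x
  have h5 : R + 1 ≤ R ^ 2 := by nlinarith
  have h6 : x ≤ R ^ 8 := by
    calc x ≤ (Nat.sqrt x + 1) * (Nat.sqrt x + 1) := h4.le
      _ ≤ ((R + 1) * (R + 1)) * ((R + 1) * (R + 1)) := Nat.mul_le_mul h3 h3
      _ ≤ (R ^ 2 * R ^ 2) * (R ^ 2 * R ^ 2) := by gcongr
      _ = R ^ 8 := by ring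
  have h7 : Real.log x ≤ Real.log ((R : ℝ) ^ 8) :=
    Real.log_le_log (by exact_mod_cast (by omega : 0 < x)) (by exact_mod_cast h6)
  rw [Real.log_pow] at h7
  exact_mod_cast h7

/-- The number `J = n + 1` of blocks is chosen with `2 ^ J ≍ log x`, small enough for the products of
the ballot family to be typically at most `x ^ (1 / 4)`. -/
lemma exists_lower : ∃ c₁ : ℝ, 0 < c₁ ∧ ∀ᶠ x : ℕ in atTop,
    c₁ * x * (Real.log x) ^ (1 - deltaEFT) / (Real.log (Real.log x)) ^ ((3 : ℝ) / 2) ≤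
      ∑ n ∈ Finset.Icc 1 x, (tauPlus n : ℝ) := by
  obtain ⟨P, κ, C, hB⟩ := exists_blockSys
  have hC := hB.one_le
  obtain ⟨s, hs⟩ := pow_unbounded_of_one_lt (120 * C) (show (1 : ℝ) < 2 by norm_num)
  obtain ⟨c, hc, h1⟩ := exists_sum_tauPlus_div_ge hB hs.le
  obtain ⟨x₀, h2⟩ := exists_sum_tauPlus_ge
  set D : ℝ := 128 * C * 2 ^ s with hD
  have hs1 : (1 : ℝ) ≤ 2 ^ s := one_le_pow₀ (by norm_num)
  have hD1 : 1 ≤ D := by nlinarith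
  have ht : Tendsto (fun x : ℕ => Real.log (x : ℝ)) atTop atTop :=
    Real.tendsto_log_atTop.comp tendsto_natCast_atTop_atTop
  have htt := Real.tendsto_log_atTop.comp ht
  refine ⟨1 / 8 * c * (1 / (2 * D)) ^ (2 - deltaEFT) * (1 / (3 : ℝ) ^ ((3 : ℝ) / 2)),
    by positivity, ?_⟩
  filter_upwards [htt.eventually_ge_atTop 1, ht.eventually_ge_atTop (2 * D),
    eventually_ge_atTop 16, eventually_ge_atTop x₀] with x hx1 hx2 hx3 hx4
  simp only [Function.comp] at hx1
  have a1 := h2 x hx4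
  have hlR := log_le_log_sqrt_sqrt hx3
  set L := Real.log x with hL
  have hL0 : 0 < L := by linarith
  have hLD : 2 ≤ L / D := by rw [le_div_iff₀ (by linarith)]; exact hx2
  obtain ⟨n, hn1, hn2⟩ : ∃ n : ℕ, (2 : ℝ) ^ (n + 1) ≤ L / D ∧ L / D < 2 ^ (n + 1 + 1) := by
    have hfl : 2 ≤ ⌊L / D⌋₊ := Nat.le_floor (by exact_mod_cast hLD)
    have hlog : 1 ≤ Nat.log 2 ⌊L / D⌋₊ := Nat.le_log_of_pow_le (by norm_num) (by simpa using hfl)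
    refine ⟨Nat.log 2 ⌊L / D⌋₊ - 1, ?_, ?_⟩
    · rw [Nat.sub_add_cancel hlog]
      have := Nat.pow_log_le_self 2 (x := ⌊L / D⌋₊) (by omega)
      have h := (Nat.le_floor_iff (by positivity)).1 this
      push_cast at h
      exact h
    · rw [Nat.sub_add_cancel hlog]
      have := Nat.lt_pow_succ_log_self (b := 2) (by norm_num) ⌊L / D⌋₊
      have h := (Nat.floor_lt (by positivity)).1 this
      push_cast at h
      exact h
  have hn3 : 2 ^ (n + 1) * D ≤ L := (le_div_iff₀ (by linarith)).1 hn1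
  have a2 := h1 n (Nat.sqrt (Nat.sqrt x)) (by
    have : 8 * (16 * C * 2 ^ (s + (n + 1))) = 2 ^ (n + 1) * D := by rw [hD, pow_add]; ring
    linarith)
  have hw : 1 / (3 : ℝ) ^ ((3 : ℝ) / 2) * (1 / (Real.log L) ^ ((3 : ℝ) / 2)) ≤ wt (n + 1) := by
    rw [wt_eq, one_div_mul_one_div, ← Real.mul_rpow (by norm_num) (by linarith)]
    apply one_div_le_one_div_of_le (by positivity)
    apply Real.rpow_le_rpow (by positivity) _ (by norm_num)
    have h8 : ((n + 1 : ℕ) : ℝ) * Real.log 2 ≤ Real.log L := by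
      rw [← Real.log_pow]
      apply Real.log_le_log (by positivity)
      have : (0 : ℝ) < 2 ^ (n + 1) := by positivity
      nlinarith
    have := log_two_bounds.1
    nlinarith [Nat.cast_nonneg (α := ℝ) (n + 1)]
  have hb : (1 / (2 * D)) ^ (2 - deltaEFT) * (L ^ (1 - deltaEFT) * L) ≤
      (2 * Real.log 2 * Real.exp 1) ^ (n + 1) := by
    have e : L ^ (2 - deltaEFT) = L ^ (1 - deltaEFT) * L := by
      rw [← Real.rpow_add_one hL0.ne']; congr 1; ring
    rw [base_pow, ← e, ← Real.mul_rpow (by positivity) (by positivity)]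
    refine Real.rpow_le_rpow (by positivity) ?_ two_sub_delta_pos.le
    rw [pow_succ, div_lt_iff₀ (by linarith)] at hn2
    rw [div_mul_eq_mul_div, one_mul, div_le_iff₀ (by linarith)]
    linarith
  have hl2 := log_two_bounds.1
  have hlog : 0 < Real.log L := by linarith
  set E := 1 / (Real.log L) ^ ((3 : ℝ) / 2) with hE
  set B := (1 / (2 * D)) ^ (2 - deltaEFT) with hBd
  set T := 1 / (3 : ℝ) ^ ((3 : ℝ) / 2) with hT
  calc _ = 1 / 8 * (x / L) * (c * ((B * (L ^ (1 - deltaEFT) * L)) * (T * E))) := by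
        rw [hE]; field_simp
    _ ≤ 1 / 8 * (x / L) * (c * ((2 * Real.log 2 * Real.exp 1) ^ (n + 1) * wt (n + 1))) := by
        gcongr
    _ ≤ 1 / 8 * (x / L) * ∑ a ∈ Finset.Icc 1 (Nat.sqrt (Nat.sqrt x)), (tauPlus a : ℝ) / a := by
        gcongr
    _ ≤ _ := a1

end

end EFT

theorem tauPlus_sum_bounds :
    ∃ c₁ : ℝ, 0 < c₁ ∧ ∃ c₂ : ℝ, 0 < c₂ ∧ ∀ᶠ x : ℕ in atTop,
      c₁ * x * (Real.log x) ^ (1 - deltaEFT) / (Real.log (Real.log x)) ^ ((3 : ℝ) / 2) ≤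
        ∑ n ∈ Finset.Icc 1 x, (tauPlus n : ℝ) ∧
      ∑ n ∈ Finset.Icc 1 x, (tauPlus n : ℝ) ≤
        c₂ * x * (Real.log x) ^ (1 - deltaEFT) / (Real.log (Real.log x)) ^ ((3 : ℝ) / 2) := by
  obtain ⟨c₁, hc₁, h₁⟩ := EFT.exists_lower
  obtain ⟨c₂, hc₂, h₂⟩ := EFT.exists_upper
  exact ⟨c₁, hc₁, c₂, hc₂, h₁.and h₂⟩
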